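/- For every integer n ≥ 1, over PA⁻ + IΣn the principle GPHP(Σ_{n+1}) lies strictly between CARD(Σ_{n+1}) and WPHP(Σ_{n+1}): WPHP(Σ_{n+1}) implies GPHP(Σ_{n+1}) and GPHP(Σ_{n+1}) implies CARD(Σ_{n+1}), while PA⁻ + IΣn + CARD(Σ_{n+1}) does not prove GPHP(Σ_{n+1}) and PA⁻ + IΣn + GPHP(Σ_{n+1}) does not prove WPHP(Σ_{n+1}). -/

import Mathlib

/- Shared development: first-order arithmetic in the language {0,1,+,·,<},
   the arithmetic hierarchy, fragments of arithmetic, and coded finite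
   combinatorics inside models. -/

open FirstOrder Language

namespace ArithFC

/-- Function symbols of the language of arithmetic: 0, 1, +, ·. -/
inductive Func : ℕ → Type
  | zero : Func 0
  | one : Func 0
  | add : Func 2
  | mul : Func 2

/-- Relation symbols of the language of arithmetic: <. -/
inductive Rel : ℕ → Type
  | lt : Rel 2

/-- The first-order language {0, 1, +, ·, <}. -/
def lang : Language :=
  { Functions := Func, Relations := Rel }

section Instances

variable (M : Type) [lang.Structure M]

instance : Zero M := ⟨Structure.funMap (L := lang) Func.zero ![]⟩
instance : One M := ⟨Structure.funMap (L := lang) Func.one ![]⟩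
instance : Add M := ⟨fun x y => Structure.funMap (L := lang) Func.add ![x, y]⟩
instance : Mul M := ⟨fun x y => Structure.funMap (L := lang) Func.mul ![x, y]⟩
instance : LT M := ⟨fun x y => Structure.RelMap (L := lang) Rel.lt ![x, y]⟩
instance : LE M := ⟨fun x y => x < y ∨ x = y⟩

end Instances

/-- The numeral `n` in a model. -/
def numM (M : Type) [lang.Structure M] : ℕ → M
  | 0 => 0
  | n + 1 => numM M n + 1

/-- `b` is nonstandard (greater than every numeral). -/
def Nonstd {M : Type} [lang.Structure M] (b : M) : Prop := ∀ n : ℕ, numM M n < b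

/-- The atomic formula `t < u`. -/
def ltFm {α : Type} {n : ℕ} (t u : lang.Term (α ⊕ Fin n)) : lang.BoundedFormula α n :=
  BoundedFormula.rel (Rel.lt : lang.Relations 2) ![t, u]

/-- Δ₀ formulas: built from atomic formulas by boolean connectives and
bounded universal quantification (this generates, up to logical equivalence,
the usual class of bounded formulas). -/
inductive IsDelta0 {α : Type} : ∀ n : ℕ, lang.BoundedFormula α n → Prop
  | falsum (n : ℕ) : IsDelta0 n BoundedFormula.falsum
  | equal (n : ℕ) (t u : lang.Term (α ⊕ Fin n)) : IsDelta0 n (BoundedFormula.equal t u)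
  | rel (n l : ℕ) (R : lang.Relations l) (ts : Fin l → lang.Term (α ⊕ Fin n)) :
      IsDelta0 n (BoundedFormula.rel R ts)
  | imp (n : ℕ) {φ ψ : lang.BoundedFormula α n} :
      IsDelta0 n φ → IsDelta0 n ψ → IsDelta0 n (φ.imp ψ)
  | bdAll (n : ℕ) (t : lang.Term (α ⊕ Fin n)) {φ : lang.BoundedFormula α (n + 1)} :
      IsDelta0 (n + 1) φ →
      IsDelta0 n
        (BoundedFormula.all ((ltFm (Term.var (Sum.inr (Fin.last n))) (t.liftAt 1 n)).imp φ))

mutual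
  /-- Σ_m formulas. -/
  inductive SigmaFm {α : Type} : ℕ → ∀ n : ℕ, lang.BoundedFormula α n → Prop
    | delta0 (m n : ℕ) {φ : lang.BoundedFormula α n} : IsDelta0 n φ → SigmaFm m n φ
    | ofPi (m n : ℕ) {φ : lang.BoundedFormula α n} : PiFm m n φ → SigmaFm (m + 1) n φ
    | ex (m n : ℕ) {φ : lang.BoundedFormula α (n + 1)} :
        SigmaFm (m + 1) (n + 1) φ → SigmaFm (m + 1) n φ.ex
  /-- Π_m formulas. -/
  inductive PiFm {α : Type} : ℕ → ∀ n : ℕ, lang.BoundedFormula α n → Prop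
    | delta0 (m n : ℕ) {φ : lang.BoundedFormula α n} : IsDelta0 n φ → PiFm m n φ
    | ofSigma (m n : ℕ) {φ : lang.BoundedFormula α n} : SigmaFm m n φ → PiFm (m + 1) n φ
    | all (m n : ℕ) {φ : lang.BoundedFormula α (n + 1)} :
        PiFm (m + 1) (n + 1) φ → PiFm (m + 1) n φ.all
end

/-- A `k`-ary relation on `M` is Σ_m-definable (with parameters from `M`). -/
def IsSigmaDef (m : ℕ) (M : Type) [lang.Structure M] {k : ℕ} (R : (Fin k → M) → Prop) : Prop :=
  ∃ (p : ℕ) (φ : lang.BoundedFormula (Fin k ⊕ Fin p) 0) (w : Fin p → M),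
    SigmaFm m 0 φ ∧ ∀ v : Fin k → M, R v ↔ φ.Realize (Sum.elim v w) finZeroElim

/-- A subset of `M` is Σ_m-definable with parameters. -/
def SigmaDef1 (m : ℕ) (M : Type) [lang.Structure M] (A : Set M) : Prop :=
  IsSigmaDef m M (k := 1) fun v => v 0 ∈ A

/-- A binary relation on `M` is Σ_m-definable with parameters. -/
def SigmaDef2 (m : ℕ) (M : Type) [lang.Structure M] (R : M → M → Prop) : Prop :=
  IsSigmaDef m M (k := 2) fun v => R (v 0) (v 1)

/-- A ternary relation on `M` is Σ_m-definable with parameters. -/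
def SigmaDef3 (m : ℕ) (M : Type) [lang.Structure M] (R : M → M → M → Prop) : Prop :=
  IsSigmaDef m M (k := 3) fun v => R (v 0) (v 1) (v 2)

/-- `M` is a model of PA⁻ (the nonnegative part of a discretely ordered
commutative semiring). -/
structure PAm (M : Type) [lang.Structure M] : Prop where
  add_assoc : ∀ x y z : M, x + y + z = x + (y + z)
  add_comm : ∀ x y : M, x + y = y + x
  mul_assoc : ∀ x y z : M, x * y * z = x * (y * z)
  mul_comm : ∀ x y : M, x * y = y * x
  ldistrib : ∀ x y z : M, x * (y + z) = x * y + x * z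
  add_zero : ∀ x : M, x + 0 = x
  mul_zero : ∀ x : M, x * 0 = 0
  mul_one : ∀ x : M, x * 1 = x
  lt_trans : ∀ x y z : M, x < y → y < z → x < z
  lt_irrefl : ∀ x : M, ¬x < x
  lt_total : ∀ x y : M, x < y ∨ x = y ∨ y < x
  add_lt_add : ∀ x y z : M, x < y → x + z < y + z
  mul_lt_mul : ∀ x y z : M, x < y → 0 < z → x * z < y * z
  sub_exists : ∀ x y : M, x < y → ∃ z, x + z = y
  zero_lt_one : (0 : M) < 1
  discrete : ∀ x : M, 0 < x → (1 : M) ≤ x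
  zero_le : ∀ x : M, (0 : M) ≤ x

/-- `M` satisfies the Σ_m-induction scheme (with parameters). -/
def ISig (m : ℕ) (M : Type) [lang.Structure M] : Prop :=
  ∀ A : Set M, SigmaDef1 m M A → (0 : M) ∈ A → (∀ x, x ∈ A → x + 1 ∈ A) → ∀ x, x ∈ A

/-- `M` satisfies the Σ_m-collection (bounding) scheme (with parameters). -/
def BSig (m : ℕ) (M : Type) [lang.Structure M] : Prop :=
  ∀ R : M → M → Prop, SigmaDef2 m M R → ∀ a : M,
    (∀ x, x < a → ∃ y, R x y) → ∃ b, ∀ x, x < a → ∃ y, y < b ∧ R x y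

section Coding

variable {M : Type} [lang.Structure M]

/-- `z` is the Cantor pair `⟨x, y⟩`: `2z = (x+y)(x+y+1) + 2y`. -/
def IsPairC (z x y : M) : Prop := z + z = (x + y) * (x + y + 1) + (y + y)

/-- Gödel's β-function: `x = a mod ((i+1)·b + 1)`. -/
def BetaC (a b i x : M) : Prop :=
  x < (i + 1) * b + 1 ∧ ∃ q, a = q * ((i + 1) * b + 1) + x

/-- The sequence coded by `s` (via a Cantor pair of β-function data) has value `x`
at place `i`. -/
def SeqAt (s i x : M) : Prop := ∃ a b, IsPairC s a b ∧ BetaC a b i x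

/-- `c` codes the M-finite set `X` of cardinality `card`: `c = ⟨card, s⟩` where `s`
codes the strictly increasing enumeration of `X` of length `card`. -/
def CodesFinset (c : M) (X : Set M) (card : M) : Prop :=
  ∃ s, IsPairC c card s ∧
    (∀ i, i < card → ∃ x, x ∈ X ∧ SeqAt s i x) ∧
    (∀ i j x y, i < j → j < card → SeqAt s i x → SeqAt s j y → x < y) ∧
    (∀ x, x ∈ X ↔ ∃ i, i < card ∧ SeqAt s i x)

/-- `X` is an M-finite (coded) set. -/
def MFinite (X : Set M) : Prop := ∃ c card : M, CodesFinset c X card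

/-- `d` codes an `e`-element subset `D` of `[0, y)`, i.e. an element of `[y]^e`. -/
def CodesTupleIn (d e y : M) (D : Set M) : Prop :=
  CodesFinset d D e ∧ ∀ z ∈ D, z < y

/-- `f` codes a (finite) function defined on all of `[0, a)`. -/
def CodesFunOn (f a : M) : Prop :=
  ∀ x, x < a → (∃ y, SeqAt f x y) ∧ ∀ y y', SeqAt f x y → SeqAt f x y' → y = y'

/-- `X` is an M-coded subset of `[0, a)`. -/
def MCodedSubset (a : M) (X : Set M) : Prop :=
  MFinite X ∧ ∀ x ∈ X, x < a

end Coding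

/-- An `M`-ultrafilter on `a`: an ultrafilter of the Boolean algebra of
M-finite subsets of `[0, a)`. -/
structure MUltra (M : Type) [lang.Structure M] (a : M) where
  sets : Set (Set M)
  mem_coded : ∀ X ∈ sets, MCodedSubset a X
  univ_mem : {x : M | x < a} ∈ sets
  superset_mem : ∀ X Y : Set M, X ∈ sets → MCodedSubset a Y → X ⊆ Y → Y ∈ sets
  inter_mem : ∀ X Y : Set M, X ∈ sets → Y ∈ sets → X ∩ Y ∈ sets
  empty_not_mem : (∅ : Set M) ∉ sets
  ultra : ∀ X : Set M, MCodedSubset a X → X ∈ sets ∨ {x : M | x < a ∧ x ∉ X} ∈ sets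

section Principles

variable (M : Type) [lang.Structure M]

/-- `F` is (the graph of) a Σ_m-definable injection from `[0, y)` into `[0, x)`. -/
def SigmaInjRel (m : ℕ) (F : M → M → Prop) (y x : M) : Prop :=
  SigmaDef2 m M F ∧
    (∀ u, u < y → ∃ v, v < x ∧ F u v) ∧
    (∀ u v v', u < y → F u v → F u v' → v = v') ∧
    (∀ u u' v, u < y → u' < y → F u v → F u' v → u = u')

/-- There exists a Σ_m-definable injection from `[0, y)` into `[0, x)`. -/
def ExSigmaInj (m : ℕ) (y x : M) : Prop := ∃ F : M → M → Prop, SigmaInjRel M m F y x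

/-- There exists a Σ_m-definable injection from all of `M` into `[0, a)`. -/
def SigmaInjWhole (m : ℕ) (a : M) : Prop :=
  ∃ F : M → M → Prop, SigmaDef2 m M F ∧
    (∀ u, ∃ v, v < a ∧ F u v) ∧
    (∀ u v v', F u v → F u v' → v = v') ∧
    (∀ u u' v, F u v → F u' v → u = u')

/-- CARD(Σ_m): no Σ_m-definable multivalued map sends `M` injectively below `a`. -/
def CARD (m : ℕ) : Prop :=
  ∀ F : M → M → Prop, SigmaDef2 m M F → ∀ a : M,
    (∀ x, ∃ y, y < a ∧ F x y) →
      ∃ x0 x1 y, x0 ≠ x1 ∧ y < a ∧ F x0 y ∧ F x1 y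

/-- GPHP(Σ_m): for every `x` there is `y` with no Σ_m-definable injection of
`[0,y)` into `[0,x)`. -/
def GPHP (m : ℕ) : Prop := ∀ x : M, ∃ y : M, ¬ExSigmaInj M m y x

/-- WPHP(Σ_m): for `x > 0` there is no Σ_m-definable injection of `[0,2x)` into `[0,x)`. -/
def WPHP (m : ℕ) : Prop := ∀ x : M, 0 < x → ¬ExSigmaInj M m (x + x) x

/-- `C` is a Σ_m-definable `k`-coloring of `[y]^e` (acting on codes of
`e`-element subsets of `[0,y)`, independently of the chosen code). -/
def IsColoring (m : ℕ) (e y k : M) (C : M → M → Prop) : Prop :=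
  SigmaDef2 m M C ∧
    (∀ d D, CodesTupleIn d e y D → ∃ i, i < k ∧ C d i) ∧
    (∀ d d' D i i', CodesTupleIn d e y D → CodesTupleIn d' e y D → C d i → C d' i' → i = i')

/-- FRT^e_k(Σ_m): every Σ_m-definable `k`-coloring of some `[y]^e` has an
M-finite homogeneous set of cardinality `x`, for every `x`. -/
def FRT (m : ℕ) (e k : M) : Prop :=
  ∀ x : M, ∃ y : M, ∀ C : M → M → Prop, IsColoring M m e y k C →
    ∃ (c : M) (H : Set M), CodesFinset c H x ∧ (∀ z ∈ H, z < y) ∧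
      ∃ i, ∀ d D, CodesFinset d D e → D ⊆ H → C d i

/-- fairFRT^e_k(Σ_m): the homogeneous set is required to be given as the range of a
Σ_m-definable injection from `[0,x)` into `[0,y)`. -/
def FairFRT (m : ℕ) (e k : M) : Prop :=
  ∀ x : M, ∃ y : M, ∀ C : M → M → Prop, IsColoring M m e y k C →
    ∃ H : M → M → Prop, SigmaInjRel M m H x y ∧
      ∃ i, ∀ d D, CodesFinset d D e → (∀ z ∈ D, ∃ u, u < x ∧ H u z) → C d i

/-- `C` is a Σ_m-definable `k`-coloring of `[0, y)`. -/
def IsColoring1 (m : ℕ) (y k : M) (C : M → M → Prop) : Prop :=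
  SigmaDef2 m M C ∧
    (∀ z, z < y → ∃ i, i < k ∧ C z i) ∧
    (∀ z i i', z < y → C z i → C z i' → i = i')

/-- FRT¹_k(Σ_m): every Σ_m-definable `k`-coloring of some `[0,y)` has an M-finite
homogeneous set of cardinality `x`, for every `x`. -/
def FRT1 (m : ℕ) (k : M) : Prop :=
  ∀ x : M, ∃ y : M, ∀ C : M → M → Prop, IsColoring1 M m y k C →
    ∃ (c : M) (H : Set M), CodesFinset c H x ∧ (∀ z ∈ H, z < y) ∧
      ∃ i, ∀ z ∈ H, C z i

/-- fairFRT¹_k(Σ_m). -/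
def FairFRT1 (m : ℕ) (k : M) : Prop :=
  ∀ x : M, ∃ y : M, ∀ C : M → M → Prop, IsColoring1 M m y k C →
    ∃ H : M → M → Prop, SigmaInjRel M m H x y ∧
      ∃ i, ∀ u v, u < x → H u v → C v i

end Principles

section Approx

variable {M : Type} [lang.Structure M]

/-- `f` is (the graph of) a partial function. -/
def IsPartialFun (f : M → M → Prop) : Prop := ∀ x y y', f x y → f x y' → y = y'

/-- `s` codes an approximation to the partial function `f` of length `b`. -/
def IsApprox (f : M → M → Prop) (s b : M) : Prop :=
  (∀ i, i < b → ∃ v, SeqAt s i v) ∧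
    (∀ i u v x y, i + 1 < b → SeqAt s i u → SeqAt s (i + 1) v → x ≤ u → f x y → y ≤ v)

/-- `s` codes a `g`-stretched approximation to the partial function `f` of length `b`. -/
def IsStretchedApprox (f g : M → M → Prop) (s b : M) : Prop :=
  (∀ i, i < b → ∃ v, SeqAt s i v) ∧
    (∀ i u w v x y, i + 1 < b → SeqAt s i u → g u w → SeqAt s (i + 1) v →
      x ≤ w → f x y → y ≤ v)

/-- The eventual (limit) value of `fun s => h s ·` is `x`. -/
def EvLim (h : M → M → Prop) (x : M) : Prop := ∃ s : M, ∀ t, s < t → h t x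

end Approx

/-- PΣ_m: every partial Σ_m-definable function admits approximations of every length. -/
def PSig (m : ℕ) (M : Type) [lang.Structure M] : Prop :=
  ∀ f : M → M → Prop, SigmaDef2 m M f → IsPartialFun f → ∀ b : M, ∃ s, IsApprox f s b

section Extensions

variable (M N : Type) [lang.Structure M] [lang.Structure N]

/-- `g : M → N` is Σ_m-elementary: Σ_m formulas with parameters from `M` transfer. -/
def SigmaElem (m : ℕ) (g : M → N) : Prop :=
  ∀ (p : ℕ) (φ : lang.BoundedFormula (Fin p) 0), SigmaFm m 0 φ →
    ∀ v : Fin p → M, (φ.Realize v finZeroElim ↔ φ.Realize (g ∘ v) finZeroElim)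

/-- The extension `g : M → N` is cofinal. -/
def Cofinal (g : M → N) : Prop := ∀ z : N, ∃ x : M, z ≤ g x

/-- `[0,a]^M = [0,a]^N`: every element of `N` below `g a` comes from `M`. -/
def SameBelow (g : M → N) (a : M) : Prop := ∀ z : N, z ≤ g a → ∃ x : M, g x = z

end Extensions

section Ramsey

variable {M : Type} [lang.Structure M]

/-- `f` is an M-coded `k`-coloring of `[y]^e` (assigning colors to codes of
`e`-subsets of `[0,y)`, independently of the code). -/
def CodedColoring (f e y k : M) : Prop :=
  (∀ d D, CodesTupleIn d e y D → ∃ i, i < k ∧ SeqAt f d i) ∧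
    (∀ d d' D i i', CodesTupleIn d e y D → CodesTupleIn d' e y D →
      SeqAt f d i → SeqAt f d' i' → i = i')

/-- The coded coloring `f` of `[y]^e` has an M-coded homogeneous set of cardinality `x`. -/
def CodedHomog (f e y x : M) : Prop :=
  ∃ (c : M) (H : Set M), CodesFinset c H x ∧ (∀ z ∈ H, z < y) ∧
    ∃ i, ∀ d D, CodesFinset d D e → D ⊆ H → SeqAt f d i

/-- `y = r(x, e, k)`: `y` is the least size guaranteeing coded homogeneous sets of
cardinality `x` for all coded `k`-colorings of `e`-subsets. -/
def IsRamsey (x e k y : M) : Prop :=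
  (∀ f, CodedColoring f e y k → CodedHomog f e y x) ∧
    (∀ y', y' < y → ∃ f, CodedColoring f e y' k ∧ ¬CodedHomog f e y' x)

/-- `y = r^(b)(x, e, k)`: the `b`-th iterate of the Ramsey function inside `M`. -/
def IterRamsey (x e k b y : M) : Prop :=
  ∃ s : M, SeqAt s 0 x ∧ SeqAt s b y ∧ (∀ i, i ≤ b → ∃ u, SeqAt s i u) ∧
    (∀ i u v, i < b → SeqAt s i u → SeqAt s (i + 1) v → IsRamsey u e k v)

end Ramsey

end ArithFC

namespace ArithFC

end ArithFC


namespace ArithFC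

set_option linter.all false
set_option linter.unusedSectionVars false
set_option linter.style.haveILetI false
set_option linter.unusedVariables false

section Classes
variable {M : Type} [Zero M] [One M] [Add M] [Mul M] [LT M]

/-- polynomial functions -/
inductive Tm (N : ℕ) : ((Fin N → M) → M) → Prop
  | proj (i : Fin N) : Tm N (fun u => u i)
  | zero : Tm N (fun _ => 0)
  | one : Tm N (fun _ => 1)
  | add {f g : (Fin N → M) → M} : Tm N f → Tm N g → Tm N (fun u => f u + g u)
  | mul {f g : (Fin N → M) → M} : Tm N f → Tm N g → Tm N (fun u => f u * g u)

/-- bounded relations -/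
inductive D0 : ∀ N : ℕ, ((Fin N → M) → Prop) → Prop
  | falsum (N : ℕ) : D0 N (fun _ => False)
  | eq (N : ℕ) {f g : (Fin N → M) → M} : Tm N f → Tm N g → D0 N (fun u => f u = g u)
  | lt (N : ℕ) {f g : (Fin N → M) → M} : Tm N f → Tm N g → D0 N (fun u => f u < g u)
  | imp (N : ℕ) {P Q : (Fin N → M) → Prop} : D0 N P → D0 N Q → D0 N (fun u => P u → Q u)
  | ball (N : ℕ) {f : (Fin N → M) → M} {P : (Fin (N + 1) → M) → Prop} :
      Tm N f → D0 (N + 1) P → D0 N (fun u => ∀ x, x < f u → P (Fin.snoc u x))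

/-- closing a class under existential quantifiers -/
inductive ExC (C : ∀ N : ℕ, ((Fin N → M) → Prop) → Prop) : ∀ N : ℕ, ((Fin N → M) → Prop) → Prop
  | base (N : ℕ) {R : (Fin N → M) → Prop} : C N R → ExC C N R
  | ex (N : ℕ) {R : (Fin (N + 1) → M) → Prop} :
      ExC C (N + 1) R → ExC C N (fun u => ∃ x, R (Fin.snoc u x))

/-- semantic Sigma_m relations -/
def Sg : ℕ → ∀ N : ℕ, ((Fin N → M) → Prop) → Prop
  | 0 => D0
  | m + 1 => ExC (fun N R => Sg m N (fun u => ¬ R u))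

theorem Sg.congr {m N : ℕ} {R S : (Fin N → M) → Prop} (h : Sg m N R) (e : ∀ u, S u ↔ R u) :
    Sg m N S := by
  have : S = R := funext fun u => propext (e u)
  rw [this]; exact h

theorem Tm.congr {N : ℕ} {f g : (Fin N → M) → M} (h : Tm N f) (e : ∀ u, g u = f u) : Tm N g := by
  have : g = f := funext e
  rw [this]; exact h

theorem Tm.subst {N N' : ℕ} {f : (Fin N → M) → M} (h : Tm N f) (s : Fin N → (Fin N' → M) → M)
    (hs : ∀ i, Tm N' (s i)) : Tm N' (fun u => f (fun i => s i u)) := by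
  induction h with
  | proj i => exact hs i
  | zero => exact Tm.zero
  | one => exact Tm.one
  | add _ _ ih1 ih2 => exact Tm.add ih1 ih2
  | mul _ _ ih1 ih2 => exact Tm.mul ih1 ih2

theorem Tm.lift {N : ℕ} {f : (Fin N → M) → M} (h : Tm N f) :
    Tm (N + 1) (fun u => f (fun i => u i.castSucc)) :=
  h.subst (fun i u => u i.castSucc) (fun i => Tm.proj i.castSucc)

/-- extend a substitution below a binder -/
def extS {N N' : ℕ} (s : Fin N → (Fin N' → M) → M) : Fin (N + 1) → (Fin (N' + 1) → M) → M :=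
  Fin.lastCases (motive := fun _ => (Fin (N' + 1) → M) → M) (fun u => u (Fin.last N'))
    (fun i u => s i (fun j => u j.castSucc))

theorem extS_tm {N N' : ℕ} {s : Fin N → (Fin N' → M) → M} (hs : ∀ i, Tm N' (s i)) (i) :
    Tm (N' + 1) (extS s i) := by
  refine Fin.lastCases ?_ (fun i => ?_) i
  · simp only [extS, Fin.lastCases_last]; exact Tm.proj _
  · simp only [extS, Fin.lastCases_castSucc]; exact (hs i).lift

theorem extS_snoc {N N' : ℕ} (s : Fin N → (Fin N' → M) → M) (u : Fin N' → M) (x : M) :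
    (fun i => extS s i (Fin.snoc u x)) = (Fin.snoc (fun i => s i u) x : Fin (N + 1) → M) := by
  funext i
  refine Fin.lastCases ?_ (fun i => ?_) i
  · simp [extS]
  · simp [extS]

theorem D0.subst {N : ℕ} {R : (Fin N → M) → Prop} (h : D0 N R) :
    ∀ {N' : ℕ} (s : Fin N → (Fin N' → M) → M) (_ : ∀ i, Tm N' (s i)),
    D0 N' (fun u => R (fun i => s i u)) := by
  induction h with
  | falsum N => intro N' s hs; exact D0.falsum _
  | eq N h1 h2 => intro N' s hs; exact D0.eq _ (h1.subst s hs) (h2.subst s hs)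
  | lt N h1 h2 => intro N' s hs; exact D0.lt _ (h1.subst s hs) (h2.subst s hs)
  | imp N _ _ ih1 ih2 => intro N' s hs; exact D0.imp _ (ih1 s hs) (ih2 s hs)
  | ball N h1 _ ih =>
    intro N' s hs
    have := D0.ball N' (h1.subst s hs) (ih (extS s) (extS_tm hs))
    simpa only [extS_snoc] using this

theorem Sg.subst : ∀ {m N : ℕ} {R : (Fin N → M) → Prop} (_ : Sg m N R) 
    {N' : ℕ} (s : Fin N → (Fin N' → M) → M) (_ : ∀ i, Tm N' (s i)),
    Sg m N' (fun u => R (fun i => s i u)) := by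
  intro m
  induction m with
  | zero => intro N R h N' s hs; exact D0.subst h s hs
  | succ m ih =>
    intro N R h
    change ExC _ N R at h
    induction h with
    | base N h => 
      intro N' s hs
      exact ExC.base _ (ih h s hs)
    | ex N _ ih2 =>
      intro N' s hs
      have : Sg (m + 1) N' _ := ExC.ex N' (ih2 (extS s) (extS_tm hs))
      simpa only [extS_snoc] using this

theorem Sg.reindex {m N N' : ℕ} {R : (Fin N → M) → Prop} (h : Sg m N R) (σ : Fin N → Fin N') :
    Sg m N' (fun u => R (fun i => u (σ i))) :=
  h.subst (fun i u => u (σ i)) (fun i => Tm.proj _)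

theorem D0.neg {N : ℕ} {R : (Fin N → M) → Prop} (h : D0 N R) : D0 N (fun u => ¬ R u) :=
  D0.imp N h (D0.falsum N)

theorem Sg.of_d0 : ∀ {m N : ℕ} {R : (Fin N → M) → Prop}, D0 N R → Sg m N R
  | 0, _, _, h => h
  | _ + 1, _, _, h => ExC.base _ (Sg.of_d0 h.neg)

theorem Sg.neg {m N : ℕ} {R : (Fin N → M) → Prop} (h : Sg m N R) :
    Sg (m + 1) N (fun u => ¬ R u) := by
  refine ExC.base _ (Sg.congr h ?_); intro u; exact not_not

theorem Sg.pi {m N : ℕ} {R : (Fin N → M) → Prop} (h : Sg m N (fun u => ¬ R u)) :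
    Sg (m + 1) N R := ExC.base _ h

theorem Sg.succ : ∀ {m N : ℕ} {R : (Fin N → M) → Prop}, Sg m N R → Sg (m + 1) N R := by
  intro m
  induction m with
  | zero => intro N R h; exact Sg.of_d0 h
  | succ m ih =>
    intro N R h
    change ExC _ N R at h
    induction h with
    | base N h => exact ExC.base _ (ih h)
    | ex N _ ih2 => exact ExC.ex _ ih2

theorem Sg.mono {m m' N : ℕ} (hm : m ≤ m') {R : (Fin N → M) → Prop} (h : Sg m N R) : Sg m' N R := by
  induction hm with
  | refl => exact h
  | step _ ih => exact ih.succ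

theorem Sg.and_or : ∀ {m N : ℕ} {R S : (Fin N → M) → Prop}, Sg m N R → Sg m N S →
    Sg m N (fun u => R u ∧ S u) ∧ Sg m N (fun u => R u ∨ S u) := by
  intro m
  induction m with
  | zero =>
    intro N R S hR hS
    constructor
    · exact Sg.congr (m := 0) (D0.neg (D0.imp _ hR (D0.neg hS))) (by intro u; tauto)
    · exact Sg.congr (m := 0) (D0.imp _ (D0.neg hR) hS) (by intro u; tauto)
  | succ m ih =>
    intro N R S hR hS
    change ExC _ N R at hR
    induction hR with
    | ex N hR' ih2 =>
      rename_i R'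
      have hS' : Sg (m + 1) (N + 1) (fun u => S (fun i => u i.castSucc)) := hS.reindex Fin.castSucc
      obtain ⟨h1, h2⟩ := ih2 hS'
      constructor
      · refine Sg.congr (ExC.ex _ h1) ?_
        intro u
        simp
      · refine Sg.congr (ExC.ex _ h2) ?_
        intro u
        simp only [Fin.snoc_castSucc]
        haveI : Nonempty M := ⟨0⟩
        simp [exists_or]
    | base N hR =>
      rename_i R'
      change ExC _ N S at hS
      induction hS with
      | base N hS =>
        constructor
        · refine Sg.pi (Sg.congr (ih hR hS).2 ?_); intro u; tauto
        · refine Sg.pi (Sg.congr (ih hR hS).1 ?_); intro u; tauto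
      | ex N hS' ih2 =>
        have := hR.reindex Fin.castSucc (N' := N + 1)
        obtain ⟨h1, h2⟩ := ih2 this
        constructor
        · refine Sg.congr (ExC.ex _ h1) ?_
          intro u
          simp
        · refine Sg.congr (ExC.ex _ h2) ?_
          intro u
          simp only [Fin.snoc_castSucc]
          haveI : Nonempty M := ⟨0⟩
          simp [exists_or]

theorem Sg.and {m N : ℕ} {R S : (Fin N → M) → Prop} (h : Sg m N R) (h' : Sg m N S) :
    Sg m N (fun u => R u ∧ S u) := (Sg.and_or h h').1
theorem Sg.or {m N : ℕ} {R S : (Fin N → M) → Prop} (h : Sg m N R) (h' : Sg m N S) :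
    Sg m N (fun u => R u ∨ S u) := (Sg.and_or h h').2

theorem Sg.ex {m N : ℕ} {R : (Fin N → M) → M → Prop}
    (h : Sg (m + 1) (N + 1) (fun u => R (fun i => u i.castSucc) (u (Fin.last N)))) :
    Sg (m + 1) N (fun u => ∃ x, R u x) := by
  refine Sg.congr (ExC.ex _ h) ?_
  intro u; simp

theorem Sg.lt {m N : ℕ} {f g : (Fin N → M) → M} (hf : Tm N f) (hg : Tm N g) :
    Sg m N (fun u => f u < g u) := Sg.of_d0 (D0.lt _ hf hg)
theorem Sg.eq {m N : ℕ} {f g : (Fin N → M) → M} (hf : Tm N f) (hg : Tm N g) :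
    Sg m N (fun u => f u = g u) := Sg.of_d0 (D0.eq _ hf hg)
theorem Sg.nlt {m N : ℕ} {f g : (Fin N → M) → M} (hf : Tm N f) (hg : Tm N g) :
    Sg m N (fun u => ¬ f u < g u) := Sg.of_d0 (D0.neg (D0.lt _ hf hg))
theorem Sg.ne {m N : ℕ} {f g : (Fin N → M) → M} (hf : Tm N f) (hg : Tm N g) :
    Sg m N (fun u => ¬ f u = g u) := Sg.of_d0 (D0.neg (D0.eq _ hf hg))

/-- closure under bounded universal quantification -/
def BallC (M : Type) [Zero M] [One M] [Add M] [Mul M] [LT M] (m : ℕ) : Prop :=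
  ∀ (N : ℕ) (f : (Fin N → M) → M) (R : (Fin N → M) → M → Prop), Tm N f →
    Sg m (N + 1) (fun u => R (fun i => u i.castSucc) (u (Fin.last N))) →
    Sg m N (fun u => ∀ x, x < f u → R u x)

theorem ballC_zero : BallC M 0 := by
  intro N f R hf h
  refine Sg.congr (m := 0) (D0.ball _ hf h) ?_
  intro u; simp

theorem Sg.bex {m N : ℕ} {f : (Fin N → M) → M} {R : (Fin N → M) → M → Prop} (hf : Tm N f)
    (h : Sg m (N + 1) (fun u => R (fun i => u i.castSucc) (u (Fin.last N)))) :
    Sg m N (fun u => ∃ x, x < f u ∧ R u x) := by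
  cases m with
  | zero =>
    refine Sg.congr (m := 0) (D0.neg (ballC_zero N f (fun u x => ¬ R u x) hf (D0.neg h))) ?_
    intro u; simp
  | succ m =>
    exact Sg.ex (R := fun u x => x < f u ∧ R u x) (Sg.and (Sg.lt (Tm.proj _) hf.lift) h)

/-- the elementary order facts -/
structure OrdOK (M : Type) [Zero M] [One M] [Add M] [Mul M] [LT M] : Prop where
  zero : ∀ x : M, ¬ x < 0
  succ : ∀ x c : M, x < c + 1 ↔ x < c ∨ x = c
  trans : ∀ x y z : M, x < y → y < z → x < z
  upper : ∀ x y : M, ∃ z : M, x < z ∧ y < z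

/-- induction for semantic Sigma_m relations -/
def IndC (M : Type) [Zero M] [One M] [Add M] [Mul M] [LT M] (m : ℕ) : Prop :=
  ∀ (N : ℕ) (R : (Fin N → M) → M → Prop),
    Sg m (N + 1) (fun u => R (fun i => u i.castSucc) (u (Fin.last N))) →
    ∀ w, R w 0 → (∀ x, R w x → R w (x + 1)) → ∀ x, R w x

/-- bounding normal form -/
theorem Sg.nf (ho : OrdOK M) {m : ℕ} (hb : BallC M m) {N : ℕ} {R : (Fin N → M) → Prop}
    (h : Sg (m + 1) N R) : ∃ θ : (Fin N → M) → M → Prop,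
      Sg m (N + 1) (fun u => ¬ θ (fun i => u i.castSucc) (u (Fin.last N))) ∧
      ∀ u, R u ↔ ∃ b, θ u b := by
  change ExC _ N R at h
  induction h with
  | base N h =>
    rename_i R
    refine ⟨fun u _ => R u, Sg.reindex h Fin.castSucc, ?_⟩
    intro u
    haveI : Nonempty M := ⟨0⟩
    simp
  | ex N _ ih =>
    rename_i R
    obtain ⟨θ, hθ, e⟩ := ih
    refine ⟨fun u b => ∃ x, x < b ∧ ∃ b', b' < b ∧ θ (Fin.snoc u x) b', ?_, ?_⟩
    · have h1 : Sg m (N + 1) (fun u => ∀ x, x < u (Fin.last N) → ∀ b', b' < u (Fin.last N) → 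
          ¬ θ (Fin.snoc (fun i => u i.castSucc) x) b') := by
        refine hb (N + 1) (fun u => u (Fin.last N)) (fun u x => ∀ b', b' < u (Fin.last N) → 
          ¬ θ (Fin.snoc (fun i => u i.castSucc) x) b') (Tm.proj _) ?_
        refine hb (N + 1 + 1) _ (fun u b' => 
          ¬ θ (Fin.snoc (fun i : Fin N => u i.castSucc.castSucc) (u (Fin.last _))) b') (Tm.proj _) ?_
        refine Sg.congr (hθ.reindex (Fin.lastCases (motive := fun _ => Fin (N + 1 + 1 + 1)) 
          (Fin.last _) (Fin.lastCases (motive := fun _ => Fin (N + 1 + 1 + 1)) 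
            (Fin.last (N + 1)).castSucc (fun i => i.castSucc.castSucc.castSucc)))) ?_
        intro u
        apply Eq.to_iff
        congr 2
        · funext i
          refine Fin.lastCases ?_ (fun i => ?_) i <;> simp
        · simp
      refine Sg.congr h1 ?_
      intro u
      push Not
      rfl
    · intro u
      constructor
      · rintro ⟨x, hx⟩
        obtain ⟨b, hb'⟩ := (e _).1 hx
        obtain ⟨c, h1, h2⟩ := ho.upper x b
        exact ⟨c, x, h1, b, h2, hb'⟩
      · rintro ⟨c, x, _, b, _, h⟩
        exact ⟨x, (e _).2 ⟨b, h⟩⟩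

theorem Sg.comp2 {m N N' : ℕ} {R : (Fin N → M) → M → Prop}
    (h : Sg m (N + 1) (fun u => R (fun i => u i.castSucc) (u (Fin.last N))))
    {s : Fin N → (Fin N' → M) → M} (hs : ∀ i, Tm N' (s i)) {t : (Fin N' → M) → M} (ht : Tm N' t) :
    Sg m N' (fun u => R (fun i => s i u) (t u)) := by
  refine Sg.congr (h.subst (Fin.lastCases (motive := fun _ => (Fin N' → M) → M) t s) ?_) ?_
  · intro i; refine Fin.lastCases ?_ (fun i => ?_) i <;> simp [ht, hs]
  · intro u; simp

theorem Sg.comp3 {m N N' : ℕ} {R : (Fin N → M) → M → M → Prop}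
    (h : Sg m (N + 1 + 1) (fun u => R (fun i => u i.castSucc.castSucc)
      (u (Fin.last N).castSucc) (u (Fin.last (N + 1)))))
    {s : Fin N → (Fin N' → M) → M} (hs : ∀ i, Tm N' (s i)) {t t' : (Fin N' → M) → M} (ht : Tm N' t)
    (ht' : Tm N' t') : Sg m N' (fun u => R (fun i => s i u) (t u) (t' u)) := by
  refine Sg.congr (h.subst (Fin.lastCases (motive := fun _ => (Fin N' → M) → M) t'
    (Fin.lastCases (motive := fun _ => (Fin N' → M) → M) t s)) ?_) ?_
  · intro i
    refine Fin.lastCases ?_ (fun i => ?_) i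
    · simp [ht']
    · refine Fin.lastCases ?_ (fun i => ?_) i <;> simp [ht, hs]
  · intro u; simp

theorem snoc_init {N : ℕ} (u : Fin (N + 1) → M) :
    (Fin.snoc (fun i => u i.castSucc) (u (Fin.last N)) : Fin (N + 1) → M) = u := by
  funext i
  refine Fin.lastCases ?_ (fun i => ?_) i <;> simp

theorem Sg.nf2 (ho : OrdOK M) {m : ℕ} (hb : BallC M m) {N : ℕ} {R : (Fin N → M) → M → Prop}
    (h : Sg (m + 1) (N + 1) (fun u => R (fun i => u i.castSucc) (u (Fin.last N)))) :
    ∃ θ : (Fin N → M) → M → M → Prop,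
      Sg m (N + 1 + 1) (fun u => ¬ θ (fun i => u i.castSucc.castSucc) (u (Fin.last N).castSucc)
        (u (Fin.last (N + 1)))) ∧
      ∀ u x, R u x ↔ ∃ b, θ u x b := by
  obtain ⟨θ, h1, h2⟩ := Sg.nf ho hb h
  refine ⟨fun u x b => θ (Fin.snoc u x) b, ?_, ?_⟩
  · refine Sg.congr h1 ?_
    intro u
    have := snoc_init (fun i => u i.castSucc)
    beta_reduce at this ⊢
    rw [this]
  · intro u x
    have := h2 (Fin.snoc u x)
    simpa using this

theorem ballC_succ (ho : OrdOK M) {m : ℕ} (hb : BallC M m) (hi : IndC M (m + 1)) :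
    BallC M (m + 1) := by
  intro N f R hf h
  obtain ⟨θ, hθ, e⟩ := Sg.nf2 ho hb h
  have hbody : ∀ (N' : ℕ) (s : Fin N → (Fin N' → M) → M) (_ : ∀ i, Tm N' (s i))
      (t c : (Fin N' → M) → M) (_ : Tm N' t) (_ : Tm N' c),
      Sg m N' (fun u => ¬ ∀ x, x < c u → x < f (fun i => s i u) → ∃ b, b < t u ∧ θ (fun i => s i u) x b) := by
    intro N' s hs t c ht hc
    refine Sg.congr (Sg.bex (R := fun u x => x < f (fun i => s i u) ∧ ∀ b, b < t u →
      ¬ θ (fun i => s i u) x b) hc (Sg.and (Sg.lt (Tm.proj _) (hf.subst s hs).lift) ?_)) ?_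
    · refine hb _ _ (fun u b => ¬ θ (fun i => s i (fun i => u i.castSucc)) (u (Fin.last _)) b) ht.lift ?_
      exact Sg.comp3 (R := fun u x b => ¬ θ u x b) hθ (fun i => (hs i).lift.lift) (Tm.proj _) (Tm.proj _)
    · intro u; push Not; rfl
  have key : ∀ (u : Fin N → M), (∀ x, x < f u → R u x) → ∀ c,
      ∃ B, ∀ x, x < c → x < f u → ∃ b, b < B ∧ θ u x b := by
    intro u hu
    refine hi N (fun u c => ∃ B, ∀ x, x < c → x < f u → ∃ b, b < B ∧ θ u x b) ?_ u ?_ ?_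
    · refine Sg.ex (R := fun (u : Fin (N + 1) → M) B => ∀ x, x < u (Fin.last N) →
        x < f (fun i => u i.castSucc) → ∃ b, b < B ∧ θ (fun i => u i.castSucc) x b) ?_
      exact Sg.pi (hbody (N + 1 + 1) (fun i u => u i.castSucc.castSucc) (fun i => Tm.proj _)
        (fun u => u (Fin.last _)) (fun u => u (Fin.last N).castSucc) (Tm.proj _) (Tm.proj _))
    · exact ⟨0, fun x hx => (ho.zero _ hx).elim⟩
    · rintro c ⟨B, hB⟩
      by_cases hc : c < f u
      · obtain ⟨b, hb⟩ := (e u c).1 (hu c hc)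
        obtain ⟨B', h1, h2⟩ := ho.upper B b
        refine ⟨B', fun x hx hxf => ?_⟩
        rcases (ho.succ x c).1 hx with hx | rfl
        · obtain ⟨b', h3, h4⟩ := hB x hx hxf
          exact ⟨b', ho.trans _ _ _ h3 h1, h4⟩
        · exact ⟨b, h2, hb⟩
      · refine ⟨B, fun x hx hxf => ?_⟩
        rcases (ho.succ x c).1 hx with hx | rfl
        · exact hB x hx hxf
        · exact (hc hxf).elim
  refine Sg.congr (Sg.ex (R := fun u B => ∀ x, x < f u → x < f u → ∃ b, b < B ∧ θ u x b) ?_) ?_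
  · exact Sg.pi (hbody (N + 1) (fun i u => u i.castSucc) (fun i => Tm.proj _)
        (fun u => u (Fin.last _)) (fun u => f (fun i => u i.castSucc)) (Tm.proj _) hf.lift)
  · intro u
    constructor
    · intro h
      obtain ⟨B, hB⟩ := key u h (f u)
      exact ⟨B, hB⟩
    · rintro ⟨B, hB⟩ x hx
      obtain ⟨b, _, h⟩ := hB x hx hx
      exact (e u x).2 ⟨b, h⟩

theorem IndC.mono {m m' : ℕ} (hm : m ≤ m') (h : IndC M m') : IndC M m :=
  fun N R hR => h N R (hR.mono hm)

theorem ballC (ho : OrdOK M) : ∀ {m : ℕ}, IndC M m → BallC M m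
  | 0, _ => ballC_zero
  | _ + 1, hi => ballC_succ ho (ballC ho (hi.mono (Nat.le_succ _))) hi

end Classes

section Translate
variable {M : Type} [lang.Structure M]

theorem Tm.toTerm {N : ℕ} {f : (Fin N → M) → M} (h : Tm N f) {α : Type} {n : ℕ}
    (σ : Fin N → α ⊕ Fin n) :
    ∃ t : lang.Term (α ⊕ Fin n), ∀ v : α ⊕ Fin n → M, t.realize v = f (fun i => v (σ i)) := by
  induction h with
  | proj i => exact ⟨Term.var (σ i), fun v => rfl⟩
  | zero => 
    refine ⟨Term.func (Func.zero : lang.Functions 0) ![], fun v => ?_⟩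
    change Structure.funMap _ _ = Structure.funMap _ _
    congr 1; funext i; exact i.elim0
  | one => 
    refine ⟨Term.func (Func.one : lang.Functions 0) ![], fun v => ?_⟩
    change Structure.funMap _ _ = Structure.funMap _ _
    congr 1; funext i; exact i.elim0
  | add _ _ ih1 ih2 =>
    obtain ⟨t1, h1⟩ := ih1
    obtain ⟨t2, h2⟩ := ih2
    refine ⟨Term.func (Func.add : lang.Functions 2) ![t1, t2], fun v => ?_⟩
    beta_reduce
    rw [← h1, ← h2]
    change Structure.funMap _ _ = Structure.funMap _ _
    congr 1; funext i; fin_cases i <;> rfl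
  | mul _ _ ih1 ih2 =>
    obtain ⟨t1, h1⟩ := ih1
    obtain ⟨t2, h2⟩ := ih2
    refine ⟨Term.func (Func.mul : lang.Functions 2) ![t1, t2], fun v => ?_⟩
    beta_reduce
    rw [← h1, ← h2]
    change Structure.funMap _ _ = Structure.funMap _ _
    congr 1; funext i; fin_cases i <;> rfl

theorem realize_ltFm {α : Type} {n : ℕ} (t u : lang.Term (α ⊕ Fin n)) (v : α → M) (xs : Fin n → M) :
    (ltFm t u).Realize v xs ↔ t.realize (Sum.elim v xs) < u.realize (Sum.elim v xs) := by
  change Structure.RelMap _ _ ↔ Structure.RelMap _ _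
  apply Eq.to_iff
  congr 1; funext i; fin_cases i <;> rfl

theorem realize_lift1 {α : Type} {n : ℕ} (t : lang.Term (α ⊕ Fin n)) (v : α → M) (xs : Fin n → M)
    (x : M) : (t.liftAt 1 n).realize (Sum.elim v (Fin.snoc xs x)) = t.realize (Sum.elim v xs) := by
  rw [Term.realize_liftAt]
  congr 1
  funext i
  rcases i with a | i
  · rfl
  · simp only [Function.comp, Sum.map_inr, Sum.elim_inr, i.is_lt, if_true]
    exact Fin.snoc_castSucc (α := fun _ => M) (x := x) (p := xs) (i := i)

/-- extend variable assignment -/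
def extV {N n : ℕ} {α : Type} (σ : Fin N → α ⊕ Fin n) : Fin (N + 1) → α ⊕ Fin (n + 1) :=
  Fin.lastCases (motive := fun _ => α ⊕ Fin (n + 1)) (Sum.inr (Fin.last n))
    (fun i => Sum.map id Fin.castSucc (σ i))

theorem extV_eq {N n : ℕ} {α : Type} (σ : Fin N → α ⊕ Fin n) (v : α → M) (xs : Fin n → M) (x : M) :
    (fun i => (Sum.elim v (Fin.snoc xs x) : α ⊕ Fin (n + 1) → M) (extV σ i)) =
      (Fin.snoc (fun i => Sum.elim v xs (σ i)) x : Fin (N + 1) → M) := by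
  funext i
  refine Fin.lastCases ?_ (fun i => ?_) i
  · simp [extV]
  · simp only [extV, Fin.lastCases_castSucc, Fin.snoc_castSucc]
    rcases σ i with a | j <;> simp

theorem D0.toFm {N : ℕ} {R : (Fin N → M) → Prop} (h : D0 N R) {α : Type} : ∀ {n : ℕ}
    (σ : Fin N → α ⊕ Fin n),
    ∃ φ : lang.BoundedFormula α n, IsDelta0 n φ ∧
      ∀ (v : α → M) (xs : Fin n → M), φ.Realize v xs ↔ R (fun i => Sum.elim v xs (σ i)) := by
  induction h with
  | falsum N => intro n σ; exact ⟨_, IsDelta0.falsum n, fun v xs => Iff.rfl⟩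
  | eq N h1 h2 =>
    intro n σ
    obtain ⟨t1, h1⟩ := h1.toTerm σ
    obtain ⟨t2, h2⟩ := h2.toTerm σ
    refine ⟨_, IsDelta0.equal n t1 t2, fun v xs => ?_⟩
    beta_reduce
    rw [← h1, ← h2]; rfl
  | lt N h1 h2 =>
    intro n σ
    obtain ⟨t1, h1⟩ := h1.toTerm σ
    obtain ⟨t2, h2⟩ := h2.toTerm σ
    refine ⟨ltFm t1 t2, IsDelta0.rel n _ _ _, fun v xs => ?_⟩
    beta_reduce
    rw [← h1, ← h2, realize_ltFm]
  | imp N _ _ ih1 ih2 =>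
    intro n σ
    obtain ⟨φ, h1, h1'⟩ := ih1 σ
    obtain ⟨ψ, h2, h2'⟩ := ih2 σ
    refine ⟨_, IsDelta0.imp n h1 h2, fun v xs => ?_⟩
    rw [BoundedFormula.realize_imp, h1', h2']
  | ball N h1 _ ih =>
    intro n σ
    obtain ⟨t, ht⟩ := h1.toTerm σ
    obtain ⟨φ, h1, h1'⟩ := ih (extV σ)
    refine ⟨_, IsDelta0.bdAll n t h1, fun v xs => ?_⟩
    rw [BoundedFormula.realize_all]
    refine forall_congr' fun x => ?_
    rw [BoundedFormula.realize_imp, realize_ltFm, realize_lift1, h1', extV_eq, ← ht]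
    simp [Term.realize]

theorem Sg.toFm : ∀ {m N : ℕ} {R : (Fin N → M) → Prop} (_ : Sg m N R) {α : Type} {n : ℕ}
    (σ : Fin N → α ⊕ Fin n),
    (∃ φ : lang.BoundedFormula α n, SigmaFm m n φ ∧
      ∀ (v : α → M) (xs : Fin n → M), φ.Realize v xs ↔ R (fun i => Sum.elim v xs (σ i))) ∧
    (∃ φ : lang.BoundedFormula α n, PiFm m n φ ∧
      ∀ (v : α → M) (xs : Fin n → M), φ.Realize v xs ↔ ¬ R (fun i => Sum.elim v xs (σ i))) := by
  intro m
  induction m with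
  | zero =>
    intro N R h α n σ
    obtain ⟨φ, h1, h2⟩ := D0.toFm h σ
    obtain ⟨ψ, h3, h4⟩ := D0.toFm (D0.neg h) σ
    exact ⟨⟨φ, .delta0 _ _ h1, h2⟩, ⟨ψ, .delta0 _ _ h3, h4⟩⟩
  | succ m ih =>
    intro N R h
    change ExC _ N R at h
    induction h with
    | base N h =>
      intro α n σ
      obtain ⟨⟨φ, h1, h2⟩, ⟨ψ, h3, h4⟩⟩ := ih h σ
      refine ⟨⟨ψ, .ofPi _ _ h3, fun v xs => ?_⟩, ⟨φ, .ofSigma _ _ h1, fun v xs => ?_⟩⟩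
      · rw [h4, not_not]
      · rw [h2]
    | ex N _ ih2 =>
      intro α n σ
      obtain ⟨⟨φ, h1, h2⟩, ⟨ψ, h3, h4⟩⟩ := ih2 (extV σ)
      refine ⟨⟨_, .ex _ _ h1, fun v xs => ?_⟩, ⟨_, .all _ _ h3, fun v xs => ?_⟩⟩
      · rw [BoundedFormula.realize_ex]
        refine exists_congr fun x => ?_
        rw [h2, extV_eq]
      · rw [BoundedFormula.realize_all, not_exists]
        refine forall_congr' fun x => ?_
        rw [h4, extV_eq]

theorem term_tm {α : Type} {N : ℕ} (τ : α → Fin N) (t : lang.Term α) :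
    Tm N (fun u : Fin N → M => t.realize (fun a => u (τ a))) := by
  induction t with
  | var a => exact Tm.proj _
  | func f ts ih =>
    cases f with
    | zero =>
      refine Tm.zero.congr fun u => ?_
      change Structure.funMap _ _ = Structure.funMap _ _
      congr 1; funext i; exact i.elim0
    | one =>
      refine Tm.one.congr fun u => ?_
      change Structure.funMap _ _ = Structure.funMap _ _
      congr 1; funext i; exact i.elim0
    | add =>
      refine ((ih 0).add (ih 1)).congr fun u => ?_
      change Structure.funMap _ _ = Structure.funMap _ _
      congr 1; funext i; fin_cases i <;> rfl
    | mul =>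
      refine ((ih 0).mul (ih 1)).congr fun u => ?_
      change Structure.funMap _ _ = Structure.funMap _ _
      congr 1; funext i; fin_cases i <;> rfl

theorem term_tm' {α : Type} {n N : ℕ} (τ : α → Fin N) (τ' : Fin n → Fin N)
    (t : lang.Term (α ⊕ Fin n)) :
    Tm N (fun u : Fin N → M => t.realize (Sum.elim (fun a => u (τ a)) (fun i => u (τ' i)))) := by
  refine (term_tm (Sum.elim τ τ') t).congr fun u => ?_
  congr 1
  funext a; rcases a with a | a <;> rfl

/-- extended index map -/
def extT {n N : ℕ} (τ' : Fin n → Fin N) : Fin (n + 1) → Fin (N + 1) :=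
  Fin.lastCases (motive := fun _ => Fin (N + 1)) (Fin.last N) (fun i => (τ' i).castSucc)

theorem extT_eq {n N : ℕ} (τ' : Fin n → Fin N) (u : Fin N → M) (x : M) :
    (fun i => (Fin.snoc u x : Fin (N + 1) → M) (extT τ' i)) =
      (Fin.snoc (fun i => u (τ' i)) x : Fin (n + 1) → M) := by
  funext i
  refine Fin.lastCases ?_ (fun i => ?_) i
  · simp [extT]
  · simp [extT]

theorem delta0_D0 {α : Type} {n : ℕ} {φ : lang.BoundedFormula α n} (h : IsDelta0 n φ) :
    ∀ {N : ℕ} (τ : α → Fin N) (τ' : Fin n → Fin N),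
    D0 N (fun u : Fin N → M => φ.Realize (fun a => u (τ a)) (fun i => u (τ' i))) := by
  induction h with
  | falsum n => intro N τ τ'; exact D0.falsum _
  | equal n t u => intro N τ τ'; exact D0.eq _ (term_tm' τ τ' t) (term_tm' τ τ' u)
  | rel n l R ts =>
    intro N τ τ'
    cases R
    refine Sg.congr (m := 0) (D0.lt _ (term_tm' τ τ' (ts 0)) (term_tm' τ τ' (ts 1))) fun u => ?_
    change Structure.RelMap _ _ ↔ Structure.RelMap _ _
    apply Eq.to_iff
    congr 1; funext i; fin_cases i <;> rfl
  | imp n _ _ ih1 ih2 => intro N τ τ'; exact D0.imp _ (ih1 τ τ') (ih2 τ τ')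
  | bdAll n t _ ih =>
    intro N τ τ'
    refine Sg.congr (m := 0) (D0.ball _ (term_tm' τ τ' t) (ih (fun a => (τ a).castSucc) (extT τ'))) fun u => ?_
    rw [BoundedFormula.realize_all]
    refine forall_congr' fun x => ?_
    rw [BoundedFormula.realize_imp, realize_ltFm, realize_lift1]
    have := extT_eq τ' u x
    rw [this]
    simp [Term.realize]

mutual
theorem sigma_Sg {α : Type} : ∀ {m n : ℕ} {φ : lang.BoundedFormula α n} (_ : SigmaFm m n φ) 
    {N : ℕ} (τ : α → Fin N) (τ' : Fin n → Fin N),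
    Sg m N (fun u : Fin N → M => φ.Realize (fun a => u (τ a)) (fun i => u (τ' i)))
  | _, _, _, .delta0 _ _ h, _, τ, τ' => Sg.of_d0 (delta0_D0 h τ τ')
  | _, _, _, .ofPi _ _ h, _, τ, τ' => Sg.pi (pi_Sg h τ τ')
  | _, _, _, .ex _ _ h, _, τ, τ' => by
    refine Sg.congr (ExC.ex _ (sigma_Sg h (fun a => (τ a).castSucc) (extT τ'))) fun u => ?_
    rw [BoundedFormula.realize_ex]
    refine exists_congr fun x => ?_
    rw [extT_eq]
    simp
theorem pi_Sg {α : Type} : ∀ {m n : ℕ} {φ : lang.BoundedFormula α n} (_ : PiFm m n φ) 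
    {N : ℕ} (τ : α → Fin N) (τ' : Fin n → Fin N),
    Sg m N (fun u : Fin N → M => ¬ φ.Realize (fun a => u (τ a)) (fun i => u (τ' i)))
  | _, _, _, .delta0 _ _ h, _, τ, τ' => Sg.of_d0 (delta0_D0 h τ τ').neg
  | _, _, _, .ofSigma _ _ h, _, τ, τ' => Sg.neg (sigma_Sg h τ τ')
  | _, _, _, .all _ _ h, _, τ, τ' => by
    refine Sg.congr (ExC.ex _ (pi_Sg h (fun a => (τ a).castSucc) (extT τ'))) fun u => ?_
    rw [BoundedFormula.realize_all, not_forall]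
    refine exists_congr fun x => ?_
    rw [extT_eq]
    simp
end

end Translate
end ArithFC


namespace ArithFC

section General
variable {M : Type} [lang.Structure M]

theorem PAm.ord (h : PAm M) : OrdOK M := by
  have z0 : ∀ x : M, ¬ x < 0 := by
    intro x hx
    rcases h.zero_le x with h1 | h1
    · exact h.lt_irrefl _ (h.lt_trans _ _ _ hx h1)
    · rw [← h1] at hx; exact h.lt_irrefl _ hx
  have s1 : ∀ c : M, c < c + 1 := by
    intro c
    have := h.add_lt_add 0 1 c h.zero_lt_one
    rw [h.add_comm 0 c, h.add_zero, h.add_comm 1 c] at this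
    exact this
  refine ⟨z0, ?_, h.lt_trans, ?_⟩
  · intro x c
    constructor
    · intro hx
      rcases h.lt_total x c with h1 | h1 | h1
      · exact Or.inl h1
      · exact Or.inr h1
      · exfalso
        obtain ⟨z, rfl⟩ := h.sub_exists _ _ h1
        have hz : 0 < z := by
          rcases h.zero_le z with h2 | h2
          · exact h2
          · rw [← h2, h.add_zero] at h1; exact (h.lt_irrefl _ h1).elim
        rcases h.discrete z hz with h2 | h2
        · have := h.add_lt_add _ _ c h2
          rw [h.add_comm 1, h.add_comm z] at this
          exact h.lt_irrefl _ (h.lt_trans _ _ _ hx this)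
        · rw [← h2] at hx; exact h.lt_irrefl _ hx
    · rintro (h1 | h1)
      · exact h.lt_trans _ _ _ h1 (s1 c)
      · rw [h1]; exact s1 c
  · intro x y
    rcases h.lt_total x y with h1 | h1 | h1
    · exact ⟨y + 1, h.lt_trans _ _ _ h1 (s1 y), s1 y⟩
    · exact ⟨y + 1, by rw [h1]; exact s1 y, s1 y⟩
    · exact ⟨x + 1, s1 x, h.lt_trans _ _ _ h1 (s1 x)⟩

theorem isSigmaDef_of {m K k p : ℕ} {S : (Fin K → M) → Prop} (hS : Sg m K S)
    (σ : Fin K → Fin k ⊕ Fin p) (w : Fin p → M) :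
    IsSigmaDef m M (fun v : Fin k → M => S (fun i => Sum.elim v w (σ i))) := by
  obtain ⟨⟨φ, h1, h2⟩, -⟩ := hS.toFm (α := Fin k ⊕ Fin p) (n := 0) (fun i => Sum.inl (σ i))
  exact ⟨p, φ, w, h1, fun v => by rw [h2]; rfl⟩

theorem sigmaDef2_of {m p : ℕ} {S : (Fin p → M) → M → M → Prop}
    (hS : Sg m (p + 1 + 1) (fun u => S (fun i => u i.castSucc.castSucc) (u (Fin.last p).castSucc)
      (u (Fin.last (p + 1))))) (w : Fin p → M) : SigmaDef2 m M (S w) := by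
  have := isSigmaDef_of hS (Fin.lastCases (motive := fun _ => Fin 2 ⊕ Fin p) (Sum.inl 1)
    (Fin.lastCases (motive := fun _ => Fin 2 ⊕ Fin p) (Sum.inl 0) Sum.inr)) w
  simpa [SigmaDef2] using this

theorem sigmaDef1_of {m p : ℕ} {S : (Fin p → M) → M → Prop}
    (hS : Sg m (p + 1) (fun u => S (fun i => u i.castSucc) (u (Fin.last p)))) (w : Fin p → M) :
    SigmaDef1 m M {x | S w x} := by
  have := isSigmaDef_of hS (Fin.lastCases (motive := fun _ => Fin 1 ⊕ Fin p) (Sum.inl 0) Sum.inr) w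
  simpa [SigmaDef1] using this

theorem of_sigmaDef2 {m : ℕ} {F : M → M → Prop} (h : SigmaDef2 m M F) :
    ∃ (p : ℕ) (w : Fin p → M) (S : (Fin p → M) → M → M → Prop),
      Sg m (p + 1 + 1) (fun u => S (fun i => u i.castSucc.castSucc) (u (Fin.last p).castSucc)
      (u (Fin.last (p + 1)))) ∧ ∀ x y, F x y ↔ S w x y := by
  obtain ⟨p, φ, w, h1, h2⟩ := h
  refine ⟨p, w, fun w x y => φ.Realize (Sum.elim ![x, y] w) finZeroElim, ?_, ?_⟩
  · refine Sg.congr (sigma_Sg h1 (Sum.elim ![(Fin.last p).castSucc, Fin.last (p + 1)]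
      (fun i => i.castSucc.castSucc)) finZeroElim) ?_
    intro u
    apply Eq.to_iff
    beta_reduce
    congr 1
    · funext a
      rcases a with a | a
      · fin_cases a <;> rfl
      · rfl
    · funext i; exact i.elim0
  · intro x y
    have := h2 ![x, y]
    simpa using this

theorem ISig.ind {n : ℕ} (h : ISig n M) : IndC M n := by
  intro N R hR w h0 hs x
  exact h {x | R w x} (sigmaDef1_of hR w) h0 hs x

theorem lnp (ho : OrdOK M) {n : ℕ} (hi : IndC M n) {N : ℕ} {Q : (Fin N → M) → M → Prop}
    (hQ : Sg n (N + 1) (fun u => Q (fun i => u i.castSucc) (u (Fin.last N)))) (w : Fin N → M)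
    {x : M} (hx : ¬ Q w x) : ∃ y, ¬ Q w y ∧ ∀ z, z < y → Q w z := by
  by_contra hcon
  push Not at hcon
  have key : ∀ c, ∀ z, z < c → Q w z := by
    refine hi N (fun w c => ∀ z, z < c → Q w z) ?_ w ?_ ?_
    · refine ballC ho hi _ _ (fun u z => Q (fun i => u i.castSucc) z) (Tm.proj _) ?_
      exact Sg.comp2 (R := Q) hQ (fun i => Tm.proj i.castSucc.castSucc) (Tm.proj _)
    · intro z hz; exact (ho.zero _ hz).elim
    · intro c hc z hz
      rcases (ho.succ z c).1 hz with h1 | rfl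
      · exact hc z h1
      · by_contra h2
        obtain ⟨z', h3, h4⟩ := hcon z h2
        exact h4 (hc z' h3)
  exact hx (key (x + 1) x ((ho.succ x x).2 (Or.inr rfl)))

theorem wphp_gphp (hP : PAm M) {m : ℕ} (h : WPHP M m) : GPHP M m := by
  intro x
  rcases hP.zero_le x with hx | hx
  · exact ⟨x + x, h x hx⟩
  · refine ⟨1, ?_⟩
    rintro ⟨F, _, h1, _⟩
    obtain ⟨v, hv, _⟩ := h1 0 hP.zero_lt_one
    rw [← hx] at hv
    exact hP.ord.zero _ hv

theorem Sg.comp4 {m p N' : ℕ} {R : (Fin (p + 1) → M) → M → M → Prop}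
    (h : Sg m (p + 1 + 1 + 1) (fun u => R (fun i => u i.castSucc.castSucc)
      (u (Fin.last (p + 1)).castSucc) (u (Fin.last (p + 1 + 1)))))
    {s : Fin p → (Fin N' → M) → M} (hs : ∀ i, Tm N' (s i)) {t0 t t' : (Fin N' → M) → M}
    (ht0 : Tm N' t0) (ht : Tm N' t)
    (ht' : Tm N' t') :
    Sg m N' (fun u => R (Fin.snoc (fun i => s i u) (t0 u)) (t u) (t' u)) := by
  refine Sg.congr (Sg.comp3 h (s := Fin.lastCases (motive := fun _ => (Fin N' → M) → M) t0 s)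
    ?_ ht ht') ?_
  · intro i; refine Fin.lastCases ?_ (fun i => ?_) i <;> simp [ht0, hs]
  · intro u
    apply Eq.to_iff
    congr 1
    funext i; refine Fin.lastCases ?_ (fun i => ?_) i <;> simp

theorem gphp_card (hP : PAm M) {n : ℕ} (hI : ISig n M) (h : GPHP M (n + 1)) : CARD M (n + 1) := by
  intro F hF a htot
  by_contra hcon
  have ho := hP.ord
  have hi := hI.ind
  have hb := ballC ho hi
  obtain ⟨p, w, S, hS, eS⟩ := of_sigmaDef2 hF
  obtain ⟨θ, hθ, e⟩ := Sg.nf2 ho hb (N := p + 1)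
    (R := fun u y => S (fun i => u i.castSucc) (u (Fin.last p)) y) hS
  have eF : ∀ x y, F x y ↔ ∃ b, θ (Fin.snoc w x) y b := by
    intro x y
    rw [eS, ← e]; simp
  let G : (Fin (p + 1) → M) → M → M → Prop := fun W x y => ∃ b, y < W (Fin.last p) ∧
    θ (Fin.snoc (fun i => W i.castSucc) x) y b ∧
    (∀ b', b' < b → ∀ y', y' < W (Fin.last p) → ¬ θ (Fin.snoc (fun i => W i.castSucc) x) y' b') ∧
    (∀ y', y' < y → ¬ θ (Fin.snoc (fun i => W i.castSucc) x) y' b)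
  have hG : SigmaDef2 (n + 1) M (G (Fin.snoc w a)) := by
    refine sigmaDef2_of (S := G) ?_ _
    refine Sg.ex (R := fun (u : Fin (p + 1 + 1 + 1) → M) b =>
      u (Fin.last (p + 1 + 1)) < u (Fin.last p).castSucc.castSucc ∧
      θ (Fin.snoc (fun i : Fin p => u i.castSucc.castSucc.castSucc) (u (Fin.last (p + 1)).castSucc))
        (u (Fin.last (p + 1 + 1))) b ∧
      (∀ b', b' < b → ∀ y', y' < u (Fin.last p).castSucc.castSucc →
        ¬ θ (Fin.snoc (fun i : Fin p => u i.castSucc.castSucc.castSucc)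
          (u (Fin.last (p + 1)).castSucc)) y' b') ∧
      (∀ y', y' < u (Fin.last (p + 1 + 1)) →
        ¬ θ (Fin.snoc (fun i : Fin p => u i.castSucc.castSucc.castSucc)
          (u (Fin.last (p + 1)).castSucc)) y' b)) ?_
    refine Sg.and (Sg.lt (Tm.proj _) (Tm.proj _)) (Sg.and (Sg.pi ?_) (Sg.and (Sg.succ ?_) (Sg.succ ?_)))
    · exact Sg.comp4 (R := fun u x y => ¬ θ u x y) hθ (fun i => Tm.proj _) (Tm.proj _) (Tm.proj _)
        (Tm.proj _)
    · refine hb _ _ (fun (u : Fin (p + 1 + 1 + 1 + 1) → M) b' => ∀ y', y' < u (Fin.last p).castSucc.castSucc.castSucc →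
        ¬ θ (Fin.snoc (fun i : Fin p => u i.castSucc.castSucc.castSucc.castSucc)
          (u (Fin.last (p + 1)).castSucc.castSucc)) y' b') (Tm.proj _) ?_
      refine hb _ _ (fun (u : Fin (p + 1 + 1 + 1 + 1 + 1) → M) y' => 
        ¬ θ (Fin.snoc (fun i : Fin p => u i.castSucc.castSucc.castSucc.castSucc.castSucc)
          (u (Fin.last (p + 1)).castSucc.castSucc.castSucc)) y' (u (Fin.last _))) (Tm.proj _) ?_
      exact Sg.comp4 (R := fun u x y => ¬ θ u x y) hθ (fun i => Tm.proj _) (Tm.proj _) (Tm.proj _)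
        (Tm.proj _)
    · refine hb _ _ (fun (u : Fin (p + 1 + 1 + 1 + 1) → M) y' => 
        ¬ θ (Fin.snoc (fun i : Fin p => u i.castSucc.castSucc.castSucc.castSucc)
          (u (Fin.last (p + 1)).castSucc.castSucc)) y' (u (Fin.last _))) (Tm.proj _) ?_
      exact Sg.comp4 (R := fun u x y => ¬ θ u x y) hθ (fun i => Tm.proj _) (Tm.proj _) (Tm.proj _)
        (Tm.proj _)
  have G1 : ∀ x y, G (Fin.snoc w a) x y ↔ ∃ b, y < a ∧ θ (Fin.snoc w x) y b ∧
    (∀ b', b' < b → ∀ y', y' < a → ¬ θ (Fin.snoc w x) y' b') ∧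
    (∀ y', y' < y → ¬ θ (Fin.snoc w x) y' b) := by
    intro x y
    simp [G]
  obtain ⟨y, hy⟩ := h a
  refine hy ⟨G (Fin.snoc w a), hG, ?_, ?_, ?_⟩
  · intro x _
    obtain ⟨y0, hy0, hF0⟩ := htot x
    obtain ⟨b0, hb0⟩ := (eF _ _).1 hF0
    obtain ⟨b, hb1, hb2⟩ := lnp ho hi (N := p + 1 + 1) (Q := fun W b => ∀ y', y' < W (Fin.last _) →
      ¬ θ (Fin.snoc (fun i : Fin p => W i.castSucc.castSucc) (W (Fin.last p).castSucc)) y' b) (by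
        refine hb _ _ (fun (u : Fin (p + 1 + 1 + 1) → M) y' => ¬ θ (Fin.snoc
          (fun i : Fin p => u i.castSucc.castSucc.castSucc) (u (Fin.last p).castSucc.castSucc)) y'
          (u (Fin.last _))) (Tm.proj _) ?_
        exact Sg.comp4 (R := fun u x y => ¬ θ u x y) hθ (fun i => Tm.proj _) (Tm.proj _) (Tm.proj _)
          (Tm.proj _)) (Fin.snoc (Fin.snoc w x) a) (x := b0)
        (by simp; exact ⟨y0, hy0, hb0⟩)
    simp at hb1 hb2
    obtain ⟨y1, hy1, hy1'⟩ := hb1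
    obtain ⟨y2, hy2, hy2'⟩ := lnp ho hi (N := p + 1 + 1) (Q := fun W y' =>
      ¬ θ (Fin.snoc (fun i : Fin p => W i.castSucc.castSucc) (W (Fin.last p).castSucc)) y'
        (W (Fin.last _))) (by
        exact Sg.comp4 (R := fun u x y => ¬ θ u x y) hθ (fun i => Tm.proj _) (Tm.proj _) (Tm.proj _)
          (Tm.proj _)) (Fin.snoc (Fin.snoc w x) b) (x := y1)
        (by simp; exact hy1')
    simp at hy2 hy2'
    have : y2 < a := by
      rcases hP.lt_total y2 y1 with h1 | h1 | h1
      · exact hP.lt_trans _ _ _ h1 hy1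
      · rw [h1]; exact hy1
      · exact (hy2' _ h1 hy1').elim
    exact ⟨y2, this, (G1 _ _).2 ⟨b, this, hy2, hb2, hy2'⟩⟩
  · intro x v v' _ h1 h2
    obtain ⟨b, a1, a2, a3, a4⟩ := (G1 _ _).1 h1
    obtain ⟨b', a1', a2', a3', a4'⟩ := (G1 _ _).1 h2
    have hbb : b = b' := by
      rcases hP.lt_total b b' with h1 | h1 | h1
      · exact (a3' _ h1 _ a1 a2).elim
      · exact h1
      · exact (a3 _ h1 _ a1' a2').elim
    subst hbb
    rcases hP.lt_total v v' with h1 | h1 | h1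
    · exact (a4' _ h1 a2).elim
    · exact h1
    · exact (a4 _ h1 a2').elim
  · intro x x' v _ _ h1 h2
    by_contra hne
    obtain ⟨b, a1, a2, a3, a4⟩ := (G1 _ _).1 h1
    obtain ⟨b', a1', a2', a3', a4'⟩ := (G1 _ _).1 h2
    exact hcon ⟨x, x', v, hne, a1, (eF _ _).2 ⟨b, a2⟩, (eF _ _).2 ⟨b', a2'⟩⟩

end General
end ArithFC


namespace ArithFC

section CompHier

/-- boldface-free arithmetical hierarchy over primitive recursive relations -/
def CSg : ℕ → ∀ {α : Type} [Primcodable α], (α → Prop) → Prop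
  | 0, _, _, A => PrimrecPred A
  | m + 1, α, _, A => ∃ B : α × ℕ → Prop, CSg m B ∧ ∀ a, A a ↔ ∃ w, ¬ B (a, w)

variable {α β γ : Type} [Primcodable α] [Primcodable β] [Primcodable γ]

theorem CSg.congr {m : ℕ} {A B : α → Prop} (h : CSg m A) (e : ∀ a, B a ↔ A a) : CSg m B := by
  have : B = A := funext fun u => propext (e u)
  rw [this]; exact h

theorem CSg.comp {m : ℕ} {α β : Type} [Primcodable α] [Primcodable β] {A : α → Prop}
    (h : CSg m A) {f : β → α} (hf : Primrec f) :
    CSg m (fun b => A (f b)) := by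
  induction m generalizing α β with
  | zero => exact PrimrecPred.comp h hf
  | succ m ih =>
    obtain ⟨B, hB, e⟩ := h
    refine ⟨fun p => B (f p.1, p.2), ?_, fun b => e (f b)⟩
    exact ih hB (f := fun p : β × ℕ => (f p.1, p.2)) ((hf.comp Primrec.fst).pair Primrec.snd)

theorem CSg.neg {m : ℕ} {A : α → Prop} (h : CSg m A) : CSg (m + 1) (fun a => ¬ A a) :=
  ⟨fun p => A p.1, h.comp Primrec.fst, fun a => by simp⟩

theorem CSg.succ {m : ℕ} {α : Type} [Primcodable α] {A : α → Prop} (h : CSg m A) :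
    CSg (m + 1) A := by
  induction m generalizing α with
  | zero =>
    exact ⟨fun p => ¬ A p.1, PrimrecPred.not (PrimrecPred.comp h Primrec.fst), fun a => by simp⟩
  | succ m ih =>
    obtain ⟨B, hB, e⟩ := h
    exact ⟨B, ih hB, e⟩

theorem CSg.of_prim {m : ℕ} {A : α → Prop} (h : PrimrecPred A) : CSg m A := by
  induction m with
  | zero => exact h
  | succ m ih => exact ih.succ

theorem CSg.and_or {m : ℕ} {α : Type} [Primcodable α] {A A' : α → Prop} (h : CSg m A)
    (h' : CSg m A') :
    CSg m (fun a => A a ∧ A' a) ∧ CSg m (fun a => A a ∨ A' a) := by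
  induction m generalizing α with
  | zero => exact ⟨PrimrecPred.and h h', PrimrecPred.or h h'⟩
  | succ m ih =>
    obtain ⟨B, hB, e⟩ := h
    obtain ⟨B', hB', e'⟩ := h'
    constructor
    · have p1 : Primrec (fun p : α × ℕ => (p.1, p.2.unpair.1)) :=
        Primrec.fst.pair (Primrec.fst.comp (Primrec.unpair.comp Primrec.snd))
      have p2 : Primrec (fun p : α × ℕ => (p.1, p.2.unpair.2)) :=
        Primrec.fst.pair (Primrec.snd.comp (Primrec.unpair.comp Primrec.snd))
      refine ⟨_, (ih (hB.comp p1) (hB'.comp p2)).2, fun a => ?_⟩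
      beta_reduce
      rw [e, e']
      constructor
      · rintro ⟨⟨w, h⟩, ⟨w', h'⟩⟩
        exact ⟨Nat.pair w w', by simp [h, h']⟩
      · rintro ⟨w, h⟩
        push Not at h
        exact ⟨⟨_, h.1⟩, ⟨_, h.2⟩⟩
    · refine ⟨_, (ih hB hB').1, fun a => ?_⟩
      beta_reduce
      rw [e, e', ← exists_or]
      refine exists_congr fun w => ?_
      tauto

theorem CSg.and {m : ℕ} {A A' : α → Prop} (h : CSg m A) (h' : CSg m A') :
    CSg m (fun a => A a ∧ A' a) := (CSg.and_or h h').1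
theorem CSg.or {m : ℕ} {A A' : α → Prop} (h : CSg m A) (h' : CSg m A') :
    CSg m (fun a => A a ∨ A' a) := (CSg.and_or h h').2

theorem CSg.exN {m : ℕ} {A : α × ℕ → Prop} (h : CSg (m + 1) A) :
    CSg (m + 1) (fun a => ∃ k, A (a, k)) := by
  obtain ⟨B, hB, e⟩ := h
  have p1 : Primrec (fun p : α × ℕ => ((p.1, p.2.unpair.1), p.2.unpair.2)) :=
    (Primrec.fst.pair (Primrec.fst.comp (Primrec.unpair.comp Primrec.snd))).pair
      (Primrec.snd.comp (Primrec.unpair.comp Primrec.snd))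
  refine ⟨_, hB.comp p1, fun a => ?_⟩
  constructor
  · rintro ⟨k, h⟩
    obtain ⟨w, h⟩ := (e _).1 h
    exact ⟨Nat.pair k w, by simpa using h⟩
  · rintro ⟨w, h⟩
    exact ⟨_, (e _).2 ⟨_, h⟩⟩

theorem CSg.ex [Inhabited β] {m : ℕ} {A : α × β → Prop} (h : CSg (m + 1) A) :
    CSg (m + 1) (fun a => ∃ b, A (a, b)) := by
  have p1 : Primrec (fun p : α × ℕ => (p.1, ((Encodable.decode p.2 : Option β).getD default))) :=
    Primrec.fst.pair (Primrec.option_getD.comp (Primrec.decode.comp Primrec.snd) (Primrec.const _))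
  refine CSg.congr (CSg.exN (h.comp p1)) fun a => ?_
  constructor
  · rintro ⟨b, h⟩
    exact ⟨Encodable.encode b, by simpa using h⟩
  · rintro ⟨k, h⟩
    exact ⟨_, h⟩

theorem CSg.lt {m : ℕ} {f g : α → ℕ} (hf : Primrec f) (hg : Primrec g) :
    CSg m (fun a => f a < g a) := CSg.of_prim (Primrec.nat_lt.comp hf hg)
theorem CSg.le {m : ℕ} {f g : α → ℕ} (hf : Primrec f) (hg : Primrec g) :
    CSg m (fun a => f a ≤ g a) := CSg.of_prim (Primrec.nat_le.comp hf hg)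
theorem CSg.eq {m : ℕ} {f g : α → β} (hf : Primrec f) (hg : Primrec g) :
    CSg m (fun a => f a = g a) := CSg.of_prim (Primrec.eq.comp hf hg)

theorem CSg.ball_bex {m : ℕ} {α : Type} [Primcodable α] {A : α × ℕ → Prop} (h : CSg m A)
    {f : α → ℕ} (hf : Primrec f) :
    CSg m (fun a => ∀ i < f a, A (a, i)) ∧ CSg m (fun a => ∃ i < f a, A (a, i)) := by
  induction m generalizing α with
  | zero =>
    have hR : PrimrecRel (fun (i : ℕ) (a : α) => A (a, i)) :=
      PrimrecPred.comp h (Primrec.snd.pair Primrec.fst)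
    have h1 := PrimrecRel.forall_mem_list hR
    have h2 := PrimrecRel.exists_mem_list hR
    have hp : Primrec (fun a : α => (List.range (f a), a)) :=
      (Primrec.list_range.comp hf).pair Primrec.id
    exact ⟨PrimrecPred.of_eq (PrimrecPred.comp h1 hp) (by simp),
      PrimrecPred.of_eq (PrimrecPred.comp h2 hp) (by simp)⟩
  | succ m ih =>
    constructor
    · obtain ⟨B, hB, e⟩ := h
      have p1 : Primrec (fun p : (α × List ℕ) × ℕ => ((p.1.1, p.2), p.1.2.getD p.2 0)) :=
        ((Primrec.fst.comp Primrec.fst).pair Primrec.snd).pair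
          ((Primrec.list_getD 0).comp (Primrec.snd.comp Primrec.fst) Primrec.snd)
      have h1 := (ih (hB.comp p1) (f := fun p : α × List ℕ => f p.1) (hf.comp Primrec.fst)).2
      refine CSg.congr (CSg.ex h1.neg) fun a => ?_
      push Not
      constructor
      · intro h
        choose! g hg using fun i hi => (e (a, i)).1 (h i hi)
        refine ⟨(List.range (f a)).map g, fun i hi => ?_⟩
        have : ((List.range (f a)).map g).getD i 0 = g i := by
          rw [List.getD_eq_getElem?_getD]; simp [hi]
        rw [this]; exact hg i hi
      · rintro ⟨l, hl⟩ i hi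
        exact (e (a, i)).2 ⟨_, hl i hi⟩
    · exact CSg.exN (A := fun p => p.2 < f p.1 ∧ A p)
        (CSg.and (CSg.lt Primrec.snd (hf.comp Primrec.fst)) h)

theorem CSg.ball {m : ℕ} {A : α × ℕ → Prop} (h : CSg m A)
    {f : α → ℕ} (hf : Primrec f) : CSg m (fun a => ∀ i < f a, A (a, i)) := (CSg.ball_bex h hf).1
theorem CSg.bex {m : ℕ} {A : α × ℕ → Prop} (h : CSg m A)
    {f : α → ℕ} (hf : Primrec f) : CSg m (fun a => ∃ i < f a, A (a, i)) := (CSg.ball_bex h hf).2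

theorem CSg.ball_mem [Inhabited β] {m : ℕ} {A : α × β → Prop} (h : CSg m A) {f : α → List β} (hf : Primrec f) :
    CSg m (fun a => ∀ b ∈ f a, A (a, b)) := by
  have p1 : Primrec (fun p : α × ℕ => (p.1, (f p.1).getD p.2 default)) :=
    Primrec.fst.pair ((Primrec.list_getD _).comp (hf.comp Primrec.fst) Primrec.snd)
  refine CSg.congr (CSg.ball (h.comp p1) (Primrec.list_length.comp hf)) fun a => ?_
  constructor
  · intro h i hi
    apply h
    simp [List.getD_eq_getElem?_getD, hi]
  · intro h b hb
    obtain ⟨i, hi, rfl⟩ := List.getElem_of_mem hb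
    simpa [List.getD_eq_getElem?_getD, hi] using h i hi

theorem CSg.unif {m : ℕ} {A : α × ℕ → Prop} (h : CSg (m + 1) A) :
    ∃ A' : α × ℕ → Prop, CSg (m + 1) A' ∧ (∀ a y, A' (a, y) → A (a, y)) ∧
      (∀ a y y', A' (a, y) → A' (a, y') → y = y') ∧ (∀ a y, A (a, y) → ∃ y', A' (a, y')) := by
  obtain ⟨B, hB, e⟩ := h
  refine ⟨fun p => ∃ w, ¬ B (p, w) ∧ ∀ c < Nat.pair p.2 w, B ((p.1, c.unpair.1), c.unpair.2), ?_, ?_, ?_, ?_⟩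
  · refine CSg.exN (A := fun q => ¬ B q ∧ ∀ c < Nat.pair q.1.2 q.2, B ((q.1.1, c.unpair.1), c.unpair.2)) ?_
    refine CSg.and hB.neg ?_
    have p1 : Primrec (fun r : ((α × ℕ) × ℕ) × ℕ => ((r.1.1.1, r.2.unpair.1), r.2.unpair.2)) :=
      ((Primrec.fst.comp (Primrec.fst.comp Primrec.fst)).pair
        (Primrec.fst.comp (Primrec.unpair.comp Primrec.snd))).pair
          (Primrec.snd.comp (Primrec.unpair.comp Primrec.snd))
    exact (CSg.ball (hB.comp p1) (f := fun q : (α × ℕ) × ℕ => Nat.pair q.1.2 q.2)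
      (Primrec₂.natPair.comp (Primrec.snd.comp Primrec.fst) Primrec.snd)).succ
  · rintro a y ⟨w, h, -⟩
    exact (e _).2 ⟨w, h⟩
  · rintro a y y' ⟨w, h1, h2⟩ ⟨w', h1', h2'⟩
    dsimp only at *
    rcases lt_trichotomy (Nat.pair y w) (Nat.pair y' w') with h | h | h
    · have := h2' _ h
      simp only [Nat.unpair_pair] at this
      exact (h1 this).elim
    · exact (Nat.pair_eq_pair.1 h).1
    · have := h2 _ h
      simp only [Nat.unpair_pair] at this
      exact (h1' this).elim
  · intro a y h
    obtain ⟨w, hw⟩ := (e _).1 h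
    have hex : ∃ c : ℕ, ¬ B ((a, c.unpair.1), c.unpair.2) := ⟨Nat.pair y w, by simpa using hw⟩
    classical
    refine ⟨(Nat.find hex).unpair.1, (Nat.find hex).unpair.2, Nat.find_spec hex, ?_⟩
    intro c hc
    dsimp only at hc
    rw [Nat.pair_unpair] at hc
    exact not_not.1 (Nat.find_min hex hc)

/-- universal sets -/
def UnivS : ℕ → ℕ × ℕ → Prop
  | 0, p => ∃ w, ((Nat.Partrec.Code.evaln w (Denumerable.ofNat Nat.Partrec.Code p.1) p.2).isSome : Prop)
  | m + 1, p => ∃ w, ¬ UnivS m (p.1, Nat.pair p.2 w)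

theorem UnivS_csg (m : ℕ) : CSg (m + 1) (UnivS m) := by
  induction m with
  | zero =>
    have h1 : PrimrecPred (fun q : (ℕ × ℕ) × ℕ => ((Nat.Partrec.Code.evaln q.2
        (Denumerable.ofNat Nat.Partrec.Code q.1.1) q.1.2).isSome : Prop)) := by
      have : Primrec (fun q : (ℕ × ℕ) × ℕ => (Nat.Partrec.Code.evaln q.2
        (Denumerable.ofNat Nat.Partrec.Code q.1.1) q.1.2).isSome) := by
        have hp : Primrec (fun q : (ℕ × ℕ) × ℕ =>
          ((q.2, Denumerable.ofNat Nat.Partrec.Code q.1.1), q.1.2)) := (Primrec.snd.pair ((Primrec.ofNat _).comp (Primrec.fst.comp Primrec.fst))).pair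
          (Primrec.snd.comp Primrec.fst)
        exact Primrec.option_isSome.comp (Nat.Partrec.Code.primrec_evaln.comp hp)
      refine ⟨inferInstance, ?_⟩
      simpa using this
    exact CSg.exN (CSg.of_prim h1)
  | succ m ih =>
    have p1 : Primrec (fun q : (ℕ × ℕ) × ℕ => (q.1.1, Nat.pair q.1.2 q.2)) :=
      (Primrec.fst.comp Primrec.fst).pair (Primrec₂.natPair.comp (Primrec.snd.comp Primrec.fst) Primrec.snd)
    exact CSg.exN (ih.comp p1).neg

theorem UnivS_univ (m : ℕ) : ∀ {A : ℕ → Prop}, CSg (m + 1) A → ∃ e, ∀ x, A x ↔ UnivS m (e, x) := by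
  induction m with
  | zero =>
    rintro A ⟨B, hB, e⟩
    change PrimrecPred B at hB
    obtain ⟨hd, hB⟩ := hB
    have hP : Partrec (fun x : ℕ => Nat.rfind (fun w => Part.some (!decide (B (x, w))))) := by
      apply Partrec.rfind
      have : Primrec (fun p : ℕ × ℕ => !decide (B p)) := Primrec.not.comp hB
      exact this.to_comp.partrec
    have hP' := Partrec.nat_iff.1 hP
    obtain ⟨c, hc⟩ := Nat.Partrec.Code.exists_code.1 hP'
    refine ⟨Encodable.encode c, fun x => ?_⟩
    simp only [UnivS, Denumerable.ofNat_encode]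
    have h1 : A x ↔ (c.eval x).Dom := by
      rw [hc, e]
      beta_reduce
      refine Iff.trans ?_ Nat.rfind_dom.symm
      simp
    rw [h1, Part.dom_iff_mem]
    simp only [Nat.Partrec.Code.evaln_complete, Option.isSome_iff_exists]
    exact exists_comm
  | succ m ih =>
    rintro A ⟨B, hB, e⟩
    obtain ⟨c, hc⟩ := ih (A := fun z => B z.unpair) (hB.comp Primrec.unpair)
    refine ⟨c, fun x => ?_⟩
    rw [e]
    simp only [UnivS]
    refine exists_congr fun w => ?_
    rw [← hc]; simp

/-- universal partial function -/
theorem exists_H (n : ℕ) : ∃ H : ℕ → ℕ → ℕ → Prop,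
    CSg (n + 1) (fun p : (ℕ × ℕ) × ℕ => H p.1.1 p.1.2 p.2) ∧
    (∀ e x v v', H e x v → H e x v' → v = v') ∧
    ∀ A : ℕ × ℕ → Prop, CSg (n + 1) A → (∀ x v v', A (x, v) → A (x, v') → v = v') →
      ∃ e, ∀ x v, H e x v ↔ A (x, v) := by
  have p1 : Primrec (fun q : (ℕ × ℕ) × ℕ => (q.1.1, Nat.pair q.1.2 q.2)) :=
      (Primrec.fst.comp Primrec.fst).pair (Primrec₂.natPair.comp (Primrec.snd.comp Primrec.fst) Primrec.snd)
  obtain ⟨A', h1, h2, h3, h4⟩ := CSg.unif ((UnivS_csg n).comp p1)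
  refine ⟨fun e x v => A' ((e, x), v), h1, fun e x v v' => h3 _ _ _, ?_⟩
  intro A hA hs
  obtain ⟨e, he⟩ := UnivS_univ n (hA.comp Primrec.unpair)
  have he' : ∀ x v, A (x, v) ↔ UnivS n (e, Nat.pair x v) := by
    intro x v; rw [← he]; simp
  refine ⟨e, fun x v => ⟨fun h => (he' _ _).2 (h2 _ _ h), fun h => ?_⟩⟩
  obtain ⟨v', hv'⟩ := h4 (e, x) v ((he' _ _).1 h)
  have := hs x v v' h ((he' _ _).2 (h2 _ _ hv'))
  rw [this]; exact hv'

end CompHier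
end ArithFC


namespace ArithFC
set_option linter.all false
set_option linter.unusedVariables false

section NatClasses

theorem Tm.primrec {N : ℕ} {f : (Fin N → ℕ) → ℕ} (h : Tm N f) : Primrec f := by
  induction h with
  | proj i => exact Primrec.fin_app.comp Primrec.id (Primrec.const i)
  | zero => exact Primrec.const 0
  | one => exact Primrec.const 1
  | add _ _ h1 h2 => exact Primrec.nat_add.comp h1 h2
  | mul _ _ h1 h2 => exact Primrec.nat_mul.comp h1 h2

theorem primrec_tuple {α : Type} [Primcodable α] {N : ℕ} {f : α → Fin N → ℕ}
    (h : ∀ i, Primrec (fun a => f a i)) : Primrec f := by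
  rw [Primrec.fin_curry]
  have := (Primrec.fin_curry₁ (f := fun i a => f a i)).2 h
  exact this.comp Primrec.snd Primrec.fst

theorem primrec_proj {N : ℕ} (i : Fin N) : Primrec (fun u : Fin N → ℕ => u i) :=
  (Tm.proj i).primrec

theorem primrec_snoc {N : ℕ} :
    Primrec (fun p : (Fin N → ℕ) × ℕ => (Fin.snoc p.1 p.2 : Fin (N + 1) → ℕ)) := by
  refine primrec_tuple fun i => ?_
  refine Fin.lastCases ?_ (fun i => ?_) i
  · simpa using Primrec.snd
  · simpa using (primrec_proj i).comp Primrec.fst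

theorem D0.primrec {N : ℕ} {R : (Fin N → ℕ) → Prop} (h : D0 N R) : PrimrecPred R := by
  induction h with
  | falsum N => exact PrimrecPred.of_eq (Primrec.eq.comp (Primrec.const 0) (Primrec.const 1)) (by simp)
  | eq N hf hg => exact Primrec.eq.comp hf.primrec hg.primrec
  | lt N hf hg => exact Primrec.nat_lt.comp hf.primrec hg.primrec
  | imp N _ _ h1 h2 =>
    refine PrimrecPred.of_eq (PrimrecPred.or (PrimrecPred.not h1) h2) (fun u => ?_)
    exact imp_iff_not_or.symm
  | ball N hf _ h =>
    exact CSg.ball (m := 0) (PrimrecPred.comp h primrec_snoc) hf.primrec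

theorem Sg.toC : ∀ {m N : ℕ} {R : (Fin N → ℕ) → Prop}, Sg m N R → CSg m R := by
  intro m
  induction m with
  | zero => intro N R h; exact D0.primrec h
  | succ m ih =>
    intro N R h
    change ExC _ N R at h
    induction h with
    | base N h => exact CSg.congr (ih h).neg (fun a => not_not.symm)
    | ex N _ ih2 => exact CSg.exN (A := fun p => _) (ih2.comp primrec_snoc)

theorem ordN : OrdOK ℕ where
  zero := by simp
  succ := by intro x c; omega
  trans := by intro x y z; omega
  upper := by intro x y; exact ⟨x + y + 1, by omega, by omega⟩

theorem indN (m : ℕ) : IndC ℕ m := by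
  intro N R _ w h0 hs x
  induction x with
  | zero => exact h0
  | succ x ih => exact hs x ih

theorem ballN (m : ℕ) : BallC ℕ m := ballC ordN (indN m)

theorem Sg.exs {m L k : ℕ} {R : (Fin (L + k) → ℕ) → Prop} (h : Sg (m + 1) (L + k) R) :
    Sg (m + 1) L (fun u => ∃ z : Fin k → ℕ, R (Fin.append u z)) := by
  induction k with
  | zero =>
    refine Sg.congr h fun u => ?_
    constructor
    · rintro ⟨z, h⟩
      rwa [Subsingleton.elim z Fin.elim0, Fin.append_elim0] at h
    · intro h
      refine ⟨Fin.elim0, ?_⟩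
      rwa [Fin.append_elim0]
  | succ k ih =>
    have h2 : Sg (m + 1) (L + k) (fun u => ∃ x, R (Fin.snoc u x)) := ExC.ex _ h
    refine Sg.congr (ih h2) fun u => ?_
    constructor
    · rintro ⟨z, h⟩
      refine ⟨fun i => z i.castSucc, z (Fin.last k), ?_⟩
      rw [← Fin.append_snoc, snoc_init]; exact h
    · rintro ⟨z, x, h⟩
      refine ⟨Fin.snoc z x, ?_⟩
      rw [Fin.append_snoc]; exact h

theorem Sg.allFin {m N k : ℕ} {R : Fin k → (Fin N → ℕ) → Prop} (h : ∀ i, Sg m N (R i)) :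
    Sg m N (fun u => ∀ i, R i u) := by
  induction k with
  | zero => exact Sg.congr (Sg.eq Tm.zero Tm.zero) (fun u => by simp)
  | succ k ih =>
    refine Sg.congr (Sg.and (h 0) (ih fun i => h i.succ)) (fun u => ?_)
    exact Fin.forall_fin_succ

/-- graphs are Sigma_1, flexible form -/
def Gr {N : ℕ} (f : List.Vector ℕ N → ℕ) : Prop :=
  ∀ (K : ℕ) (s : Fin N → (Fin K → ℕ) → ℕ) (t : (Fin K → ℕ) → ℕ), (∀ i, Tm K (s i)) → Tm K t →
    Sg 1 K (fun u => f (List.Vector.ofFn fun i => s i u) = t u)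

theorem Tm.reindex {K L : ℕ} {f : (Fin K → ℕ) → ℕ} (h : Tm K f) (σ : Fin K → Fin L) :
    Tm L (fun u => f (fun i => u (σ i))) :=
  h.subst (fun i u => u (σ i)) (fun i => Tm.proj _)

theorem gr_comp {m n : ℕ} {f : List.Vector ℕ n → ℕ} (g : Fin n → List.Vector ℕ m → ℕ) (hf : Gr f)
    (hg : ∀ i, Gr (g i)) : Gr (fun a => f (List.Vector.ofFn fun i => g i a)) := by
  intro K s t hs ht
  have h1 : Sg 1 (K + n) (fun u => (∀ i, g i (List.Vector.ofFn fun j => s j (fun l => u (Fin.castAdd n l)))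
      = u (Fin.natAdd K i)) ∧ f (List.Vector.ofFn fun i => u (Fin.natAdd K i))
        = t (fun l => u (Fin.castAdd n l))) := by
    refine Sg.and (Sg.allFin fun i => ?_) ?_
    · exact hg i (K + n) (fun j u => s j (fun l => u (Fin.castAdd n l))) _
        (fun j => (hs j).reindex _) (Tm.proj _)
    · exact hf (K + n) (fun i u => u (Fin.natAdd K i)) _ (fun i => Tm.proj _) (ht.reindex _)
  refine Sg.congr (Sg.exs h1) fun u => ?_
  simp only [Fin.append_left, Fin.append_right]
  constructor
  · intro h
    exact ⟨_, fun i => rfl, h⟩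
  · rintro ⟨z, h, h'⟩
    obtain rfl : _ = z := funext h
    exact h'

theorem gr_beta : ∀ (K : ℕ) (c d i r : (Fin K → ℕ) → ℕ), Tm K c → Tm K d → Tm K i → Tm K r →
    Sg 1 K (fun u => c u % ((i u + 1) * d u + 1) = r u) := by
  intro K c d i r hc hd hi hr
  have hm := Tm.add (Tm.mul (Tm.add hi Tm.one) hd) Tm.one
  have h1 := Sg.and (m := 1) (Sg.lt hr.lift hm.lift)
    (Sg.eq hc.lift (Tm.add (Tm.mul (Tm.proj (Fin.last K)) hm.lift) hr.lift))
  refine Sg.congr (Sg.ex (R := fun u q => r u < (i u + 1) * d u + 1 ∧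
    c u = q * ((i u + 1) * d u + 1) + r u) h1) fun u => ?_
  constructor
  · intro h
    refine ⟨c u / ((i u + 1) * d u + 1), ?_, ?_⟩
    · rw [← h]; exact Nat.mod_lt _ (by omega)
    · rw [← h]; exact (Nat.div_add_mod' _ _).symm
  · rintro ⟨q, h, h'⟩
    rw [h', Nat.mul_add_mod_self_right, Nat.mod_eq_of_lt h]

theorem beta_exists (F : ℕ → ℕ) (n : ℕ) : ∃ c d, ∀ i ≤ n, c % ((i + 1) * d + 1) = F i := by
  refine ⟨(Nat.unbeta ((List.range (n + 1)).map F)).unpair.1,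
    (Nat.unbeta ((List.range (n + 1)).map F)).unpair.2, fun i hi => ?_⟩
  have := Nat.beta_unbeta_coe ((List.range (n + 1)).map F) ⟨i, by simp; omega⟩
  simpa [Nat.beta] using this

theorem ofFn_cons {n : ℕ} (f : Fin (n + 1) → ℕ) :
    List.Vector.ofFn f = f 0 ::ᵥ List.Vector.ofFn (fun i => f i.succ) := rfl

theorem gr_prec {n : ℕ} {f : List.Vector ℕ n → ℕ} {g : List.Vector ℕ (n + 2) → ℕ} (hf : Gr f)
    (hg : Gr g) : Gr (fun v : List.Vector ℕ (n + 1) =>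
            (v.head.rec (f v.tail) fun y IH => g (y ::ᵥ IH ::ᵥ v.tail) : ℕ)) := by
  intro K s t hs ht
  simp only [ofFn_cons, List.Vector.head_cons, List.Vector.tail_cons]
  have key : ∀ u : Fin K → ℕ, (((s 0 u).rec (f (List.Vector.ofFn fun i => s i.succ u))
      fun y IH => g (y ::ᵥ IH ::ᵥ (List.Vector.ofFn fun i => s i.succ u)) : ℕ) = t u) ↔
      ∃ c d, (∃ r, c % ((0 + 1) * d + 1) = r ∧ f (List.Vector.ofFn fun i => s i.succ u) = r) ∧
        (c % ((s 0 u + 1) * d + 1) = t u) ∧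
        ∀ i, i < s 0 u → ∃ a, c % ((i + 1) * d + 1) = a ∧ ∃ b, c % ((i + 1 + 1) * d + 1) = b ∧
          g (List.Vector.ofFn (Fin.cons i (Fin.cons a (fun i => s i.succ u)))) = b := by
    intro u
    set v := List.Vector.ofFn fun i => s i.succ u with hv
    have e : ∀ i a, List.Vector.ofFn (Fin.cons i (Fin.cons a (fun i => s i.succ u)) : Fin (n + 2) → ℕ)
        = i ::ᵥ a ::ᵥ v := by
      intro i a
      rw [ofFn_cons, ofFn_cons]; simp [hv]
    simp only [e]
    constructor
    · intro h
      obtain ⟨c, d, hcd⟩ := beta_exists (fun k => (k.rec (f v) fun y IH => g (y ::ᵥ IH ::ᵥ v) : ℕ)) (s 0 u)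
      refine ⟨c, d, ⟨_, hcd 0 (Nat.zero_le _), rfl⟩, (hcd _ le_rfl).trans h, fun i hi => ?_⟩
      refine ⟨_, hcd i hi.le, _, hcd (i + 1) hi, rfl⟩
    · rintro ⟨c, d, ⟨r, h1, h2⟩, h3, h4⟩
      rw [← h3]
      have : ∀ k ≤ s 0 u, (k.rec (f v) fun y IH => g (y ::ᵥ IH ::ᵥ v) : ℕ) = c % ((k + 1) * d + 1) := by
        intro k
        induction k with
        | zero => intro _; exact h2.trans h1.symm
        | succ k ih =>
          intro hk
          obtain ⟨a, ha, b, hb, hg⟩ := h4 k hk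
          rw [hb, ← hg, ← ha, ← ih (by omega)]
      exact this _ le_rfl
  refine Sg.congr ?_ key
  refine Sg.ex (R := fun u c => ∃ d, _) ?_
  refine Sg.ex (R := fun u d => _ ∧ _) ?_
  refine Sg.and ?_ (Sg.and ?_ ?_)
  · refine Sg.ex (R := fun u r => _ ∧ _) (Sg.and ?_ ?_)
    · exact gr_beta _ _ _ (fun _ => 0) _ (Tm.proj _) (Tm.proj _) Tm.zero (Tm.proj _)
    · exact hf _ (fun i u => _) _ (fun i => ((hs i.succ).reindex _)) (Tm.proj _)
  · exact gr_beta _ _ _ _ _ (Tm.proj _) (Tm.proj _) ((hs 0).reindex _) (ht.reindex _)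
  · refine ballN 1 _ _ (fun u i => ∃ a, _) ((hs 0).reindex _) ?_
    refine Sg.ex (R := fun u a => _ ∧ _) (Sg.and ?_ ?_)
    · exact gr_beta _ _ _ _ _ (Tm.proj _) (Tm.proj _) (Tm.proj _) (Tm.proj _)
    · refine Sg.ex (R := fun u b => _ ∧ _) (Sg.and ?_ ?_)
      · exact gr_beta _ _ _ (fun u => _ + 1) _ (Tm.proj _) (Tm.proj _) (Tm.add (Tm.proj _) Tm.one) (Tm.proj _)
      · refine Sg.congr (hg _ (Fin.cons (fun u => u (Fin.last _).castSucc.castSucc)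
          (Fin.cons (fun u => u (Fin.last _).castSucc)
            (fun i u => s i.succ (fun j => u j.castSucc.castSucc.castSucc.castSucc.castSucc))))
          (fun u => u (Fin.last _)) ?_ (Tm.proj _)) ?_
        · intro i
          refine Fin.cases ?_ (fun i => Fin.cases ?_ (fun i => ?_) i) i
          · exact Tm.proj _
          · exact Tm.proj _
          · exact (hs i.succ).reindex _
        · intro u
          apply Eq.to_iff
          congr 3
          funext i
          refine Fin.cases ?_ (fun i => Fin.cases ?_ (fun i => ?_) i) i
          · simp
          · simp
          · simp

theorem gr_of_primrec {N : ℕ} {f : List.Vector ℕ N → ℕ} (h : Nat.Primrec' f) : Gr f := by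
  induction h with
  | zero => intro K s t hs ht; exact Sg.eq Tm.zero ht
  | succ =>
    intro K s t hs ht
    exact Sg.eq (Tm.add (hs 0) Tm.one) ht
  | get i =>
    intro K s t hs ht
    refine Sg.congr (Sg.eq (hs i) ht) fun u => ?_
    simp
  | comp g _ _ hf hg => exact gr_comp g hf hg
  | prec _ _ hf hg => exact gr_prec hf hg

theorem sg_of_primrec {N : ℕ} {A : (Fin N → ℕ) → Prop} (h : PrimrecPred A) :
    Sg 1 N A ∧ Sg 1 N (fun u => ¬ A u) := by
  obtain ⟨hd, h⟩ := h
  have h1 : Primrec (fun v : List.Vector ℕ N => if A v.get then 0 else 1) := by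
    refine Primrec.ite ?_ (Primrec.const 0) (Primrec.const 1)
    exact PrimrecPred.comp (p := A) ⟨hd, h⟩ Primrec.vector_get'
  have h2 := gr_of_primrec (Nat.Primrec'.prim_iff.2 h1)
  have e : ∀ u : Fin N → ℕ, (List.Vector.ofFn u).get = u := fun u => by
    funext i; simp
  constructor
  · refine Sg.congr (h2 N (fun i u => u i) (fun _ => 0) (fun i => Tm.proj _) Tm.zero) fun u => ?_
    beta_reduce; rw [e u]; by_cases hA : A u <;> simp [hA]
  · refine Sg.congr (h2 N (fun i u => u i) (fun _ => 1) (fun i => Tm.proj _) Tm.one) fun u => ?_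
    beta_reduce; rw [e u]; by_cases hA : A u <;> simp [hA]

theorem CSg.toSg {m N : ℕ} {A : (Fin N → ℕ) → Prop} (h : CSg (m + 1) A) : Sg (m + 1) N A := by
  induction m generalizing N with
  | zero =>
    obtain ⟨B, hB, e⟩ := h
    refine Sg.congr (Sg.ex (R := fun u w => ¬ B (u, w)) ?_) e
    exact (sg_of_primrec (A := fun u : Fin (N + 1) → ℕ => B (fun i => u i.castSucc, u (Fin.last N)))
      (PrimrecPred.comp hB ((primrec_tuple fun i => primrec_proj _).pair (primrec_proj _)))).2
  | succ m ih =>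
    obtain ⟨B, hB, e⟩ := h
    refine Sg.congr (Sg.ex (R := fun u w => ¬ B (u, w)) ?_) e
    exact (ih (A := fun u : Fin (N + 1) → ℕ => B (fun i => u i.castSucc, u (Fin.last N)))
      (hB.comp ((primrec_tuple fun i => primrec_proj _).pair (primrec_proj _)))).neg

end NatClasses
end ArithFC


namespace ArithFC
set_option linter.all false
set_option linter.unusedVariables false

section Comb

theorem primrec_pow {α : Type} [Primcodable α] {f g : α → ℕ} (hf : Primrec f) (hg : Primrec g) :
    Primrec (fun a => f a ^ g a) :=
  (Primrec₂.unpaired'.1 Nat.Primrec.pow).comp hf hg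

theorem CSg.unif' {α β : Type} [Primcodable α] [Primcodable β] [Inhabited β] {m : ℕ}
    {A : α × β → Prop} (h : CSg (m + 1) A) :
    ∃ A' : α × β → Prop, CSg (m + 1) A' ∧ (∀ a y, A' (a, y) → A (a, y)) ∧
      (∀ a y y', A' (a, y) → A' (a, y') → y = y') ∧ (∀ a y, A (a, y) → ∃ y', A' (a, y')) := by
  have h1 : CSg (m + 1) (fun p : α × ℕ => ∃ b : β, Encodable.encode b = p.2 ∧ A (p.1, b)) := by
    refine CSg.ex (A := fun q : (α × ℕ) × β => Encodable.encode q.2 = q.1.2 ∧ A (q.1.1, q.2))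
      (CSg.and (CSg.eq (Primrec.encode.comp Primrec.snd) (Primrec.snd.comp Primrec.fst)) ?_)
    exact h.comp ((Primrec.fst.comp Primrec.fst).pair Primrec.snd)
  obtain ⟨A', g1, g2, g3, g4⟩ := CSg.unif h1
  refine ⟨fun p => A' (p.1, Encodable.encode p.2), ?_, ?_, ?_, ?_⟩
  · exact g1.comp (Primrec.fst.pair (Primrec.encode.comp Primrec.snd))
  · intro a y h
    obtain ⟨b, hb, hA⟩ := g2 _ _ h
    rwa [Encodable.encode_injective hb] at hA
  · intro a y y' h h'
    exact Encodable.encode_injective (g3 _ _ _ h h')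
  · intro a y h
    obtain ⟨k, hk⟩ := g4 a (Encodable.encode y) ⟨y, rfl, h⟩
    obtain ⟨b, hb, hA⟩ := g2 _ _ hk
    refine ⟨b, ?_⟩
    dsimp only at hb ⊢
    rwa [hb]

abbrev Ix := ℕ × ℕ × ℕ

def Lf (y : ℕ) : ℕ := (y + 1) ^ 3
def Kf (y : ℕ) : ℕ := 2 * (Lf y * (y + 1))
def Qf (y : ℕ) : ℕ := 2 * (Lf y * Kf y ^ Lf y) + 1
def Zf (y : ℕ) : ℕ := Qf y ^ (y + 1)

theorem prim_Lf : Primrec Lf := primrec_pow Primrec.succ (Primrec.const 3)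
theorem prim_Kf : Primrec Kf :=
  Primrec.nat_mul.comp (Primrec.const 2) (Primrec.nat_mul.comp prim_Lf Primrec.succ)
theorem prim_Qf : Primrec Qf :=
  Primrec.succ.comp (Primrec.nat_mul.comp (Primrec.const 2)
    (Primrec.nat_mul.comp prim_Lf (primrec_pow prim_Kf prim_Lf)))
theorem prim_Zf : Primrec Zf := primrec_pow prim_Qf Primrec.succ

variable (H : ℕ → ℕ → ℕ → Prop)

def Hit (y : ℕ) (j : Ix) (z v : ℕ) : Prop := H j.1 (Nat.pair j.2.2 (z % Qf y ^ j.2.1)) v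

def Good (y : ℕ) (p : List (Ix × ℕ)) : Prop :=
  ∃ l : List ℕ, (∀ i < l.length, ∀ k < i, l.getD k 0 < l.getD i 0) ∧ (∀ z ∈ l, z < Zf y) ∧
    (∀ z ∈ l, ∀ q ∈ p, Hit H y q.1 z q.2) ∧ Zf y ≤ l.length * Kf y ^ p.length

def Bd (y : ℕ) (j : Ix) : Prop := j.1 ≤ y ∧ j.2.1 ≤ y ∧ j.2.2 ≤ y

def Ext (a : (ℕ × List (Ix × ℕ)) × (Ix × ℕ)) : Prop :=
  (Bd a.1.1 a.2.1 ∧ a.2.2 ≤ a.1.1) ∧ (∀ q ∈ a.1.2, q.1 ≠ a.2.1) ∧ Good H a.1.1 (a.2 :: a.1.2)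

variable {H} {n : ℕ}

theorem csg_hit (hH : CSg (n + 1) (fun p : (ℕ × ℕ) × ℕ => H p.1.1 p.1.2 p.2))
    {α : Type} [Primcodable α] {f : α → ℕ} {g : α → Ix} {h k : α → ℕ} (hf : Primrec f)
    (hg : Primrec g) (hh : Primrec h) (hk : Primrec k) :
    CSg (n + 1) (fun a => Hit H (f a) (g a) (h a) (k a)) := by
  have : Primrec (fun a => (((g a).1, Nat.pair (g a).2.2 (h a % Qf (f a) ^ (g a).2.1)), k a)) := by
    refine Primrec.pair (Primrec.pair (Primrec.fst.comp hg) ?_) hk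
    refine Primrec₂.natPair.comp (Primrec.snd.comp (Primrec.snd.comp hg)) ?_
    exact Primrec.nat_mod.comp hh (primrec_pow (prim_Qf.comp hf) (Primrec.fst.comp (Primrec.snd.comp hg)))
  exact hH.comp this

theorem csg_good (hH : CSg (n + 1) (fun p : (ℕ × ℕ) × ℕ => H p.1.1 p.1.2 p.2)) :
    CSg (n + 1) (fun a : ℕ × List (Ix × ℕ) => Good H a.1 a.2) := by
  refine CSg.ex (A := fun a : (ℕ × List (Ix × ℕ)) × List ℕ =>
    (∀ i < a.2.length, ∀ k < i, a.2.getD k 0 < a.2.getD i 0) ∧ (∀ z ∈ a.2, z < Zf a.1.1) ∧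
    (∀ z ∈ a.2, ∀ q ∈ a.1.2, Hit H a.1.1 q.1 z q.2) ∧ Zf a.1.1 ≤ a.2.length * Kf a.1.1 ^ a.1.2.length) ?_
  refine CSg.and ?_ (CSg.and ?_ (CSg.and ?_ ?_))
  · refine CSg.ball (A := fun b : ((ℕ × List (Ix × ℕ)) × List ℕ) × ℕ =>
      ∀ k < b.2, b.1.2.getD k 0 < b.1.2.getD b.2 0) ?_ (Primrec.list_length.comp Primrec.snd)
    refine CSg.ball (A := fun c : (((ℕ × List (Ix × ℕ)) × List ℕ) × ℕ) × ℕ =>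
      c.1.1.2.getD c.2 0 < c.1.1.2.getD c.1.2 0) ?_ Primrec.snd
    refine CSg.lt ?_ ?_
    · exact (Primrec.list_getD 0).comp (Primrec.snd.comp (Primrec.fst.comp Primrec.fst)) Primrec.snd
    · exact (Primrec.list_getD 0).comp (Primrec.snd.comp (Primrec.fst.comp Primrec.fst))
        (Primrec.snd.comp Primrec.fst)
  · exact CSg.ball_mem (A := fun b : ((ℕ × List (Ix × ℕ)) × List ℕ) × ℕ => b.2 < Zf b.1.1.1)
      (CSg.lt Primrec.snd (prim_Zf.comp (Primrec.fst.comp (Primrec.fst.comp Primrec.fst)))) Primrec.snd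
  · refine CSg.ball_mem (A := fun b : ((ℕ × List (Ix × ℕ)) × List ℕ) × ℕ =>
      ∀ q ∈ b.1.1.2, Hit H b.1.1.1 q.1 b.2 q.2) ?_ Primrec.snd
    refine CSg.ball_mem (A := fun c : (((ℕ × List (Ix × ℕ)) × List ℕ) × ℕ) × (Ix × ℕ) =>
      Hit H c.1.1.1.1 c.2.1 c.1.2 c.2.2) ?_ (Primrec.snd.comp (Primrec.fst.comp Primrec.fst))
    exact csg_hit hH (Primrec.fst.comp (Primrec.fst.comp (Primrec.fst.comp Primrec.fst)))
      (Primrec.fst.comp Primrec.snd) (Primrec.snd.comp Primrec.fst) (Primrec.snd.comp Primrec.snd)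
  · refine CSg.le (prim_Zf.comp (Primrec.fst.comp Primrec.fst)) ?_
    exact Primrec.nat_mul.comp (Primrec.list_length.comp Primrec.snd)
      (primrec_pow (prim_Kf.comp (Primrec.fst.comp Primrec.fst))
        (Primrec.list_length.comp (Primrec.snd.comp Primrec.fst)))

theorem csg_ext (hH : CSg (n + 1) (fun p : (ℕ × ℕ) × ℕ => H p.1.1 p.1.2 p.2)) :
    CSg (n + 1) (Ext H) := by
  have pj : Primrec (fun a : (ℕ × List (Ix × ℕ)) × (Ix × ℕ) => a.2.1) := Primrec.fst.comp Primrec.snd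
  have py : Primrec (fun a : (ℕ × List (Ix × ℕ)) × (Ix × ℕ) => a.1.1) := Primrec.fst.comp Primrec.fst
  refine CSg.and (CSg.and (CSg.and ?_ (CSg.and ?_ ?_)) ?_) (CSg.and ?_ ?_)
  · exact CSg.le (Primrec.fst.comp pj) py
  · exact CSg.le (Primrec.fst.comp (Primrec.snd.comp pj)) py
  · exact CSg.le (Primrec.snd.comp (Primrec.snd.comp pj)) py
  · exact CSg.le (Primrec.snd.comp Primrec.snd) py
  · refine CSg.ball_mem (A := fun b : ((ℕ × List (Ix × ℕ)) × (Ix × ℕ)) × (Ix × ℕ) =>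
      b.2.1 ≠ b.1.2.1) ?_ (Primrec.snd.comp Primrec.fst)
    exact CSg.of_prim (PrimrecPred.not (Primrec.eq.comp (Primrec.fst.comp Primrec.snd) (pj.comp Primrec.fst)))
  · have : Primrec (fun a : (ℕ × List (Ix × ℕ)) × (Ix × ℕ) => (a.1.1, a.2 :: a.1.2)) :=
      py.pair (Primrec.list_cons.comp Primrec.snd (Primrec.snd.comp Primrec.fst))
    exact (csg_good hH).comp this

variable (Nx : (ℕ × List (Ix × ℕ)) × (Ix × ℕ) → Prop)

def Reach (y : ℕ) (p : List (Ix × ℕ)) : Prop :=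
  ∀ i < p.length, Nx ((y, p.drop (i + 1)), p.getD i default)

theorem csg_reach (hN : CSg (n + 1) Nx) :
    CSg (n + 1) (fun a : ℕ × List (Ix × ℕ) => Reach Nx a.1 a.2) := by
  refine CSg.ball (A := fun b : (ℕ × List (Ix × ℕ)) × ℕ =>
    Nx ((b.1.1, b.1.2.drop (b.2 + 1)), b.1.2.getD b.2 default)) ?_ (Primrec.list_length.comp Primrec.snd)
  refine hN.comp (Primrec.pair (Primrec.pair (Primrec.fst.comp Primrec.fst) ?_) ?_)
  · exact Primrec.list_drop.comp (Primrec.succ.comp Primrec.snd) (Primrec.snd.comp Primrec.fst)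
  · exact (Primrec.list_getD _).comp (Primrec.snd.comp Primrec.fst) Primrec.snd

theorem reach_cons (y : ℕ) (a : Ix × ℕ) (p : List (Ix × ℕ)) :
    Reach Nx y (a :: p) ↔ Nx ((y, p), a) ∧ Reach Nx y p := by
  constructor
  · intro h
    refine ⟨by simpa using h 0 (by simp), fun i hi => by simpa using h (i + 1) (by simpa using hi)⟩
  · rintro ⟨h1, h2⟩ i hi
    cases i with
    | zero => simpa using h1
    | succ i => simpa using h2 i (by simpa using hi)

theorem reach_drop (y : ℕ) (p : List (Ix × ℕ)) (h : Reach Nx y p) (k : ℕ) : Reach Nx y (p.drop k) := by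
  induction k generalizing p with
  | zero => simpa using h
  | succ k ih =>
    cases p with
    | nil => simpa using h
    | cons a p => simpa using ih p ((reach_cons Nx y a p).1 h).2

theorem reach_uniq (hu : ∀ a q q', Nx (a, q) → Nx (a, q') → q = q') (y : ℕ) (p p' : List (Ix × ℕ))
    (h : Reach Nx y p) (h' : Reach Nx y p') (e : p.length = p'.length) : p = p' := by
  induction p generalizing p' with
  | nil => exact (List.length_eq_zero_iff.1 e.symm).symm
  | cons a p ih =>
    cases p' with
    | nil => simp at e
    | cons a' p' =>
      rw [reach_cons] at h h'
      obtain rfl := ih p' h.2 h'.2 (by simpa using e)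
      rw [hu _ _ _ h.1 h'.1]

theorem reach_nodup (hN : ∀ a q, Nx (a, q) → Ext H (a, q)) (y : ℕ) (p : List (Ix × ℕ)) (h : Reach Nx y p) :
    (p.map Prod.fst).Nodup ∧ (∀ q ∈ p, Bd y q.1) ∧ Good H y p := by
  induction p with
  | nil =>
    refine ⟨by simp, by simp, List.range (Zf y), ?_, by simp, by simp, by simp⟩
    intro i hi k hk
    simp only [List.length_range] at hi
    simp [List.getD_eq_getElem?_getD, hi, hk.trans hi, hk]
  | cons a p ih =>
    rw [reach_cons] at h
    obtain ⟨h1, h2, h3⟩ := ih h.2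
    obtain ⟨⟨g1, -⟩, g2, g3⟩ := hN _ _ h.1
    refine ⟨?_, ?_, g3⟩
    · rw [List.map_cons, List.nodup_cons]
      refine ⟨?_, h1⟩
      intro hm
      obtain ⟨q, hq, e⟩ := List.mem_map.1 hm
      exact g2 q hq e
    · intro q hq
      rcases List.mem_cons.1 hq with rfl | hq
      · exact g1
      · exact h2 q hq

theorem good_iff (y : ℕ) (p : List (Ix × ℕ)) (S : Finset ℕ)
    (hS : ∀ z, z ∈ S ↔ z < Zf y ∧ ∀ q ∈ p, Hit H y q.1 z q.2) :
    Good H y p ↔ Zf y ≤ S.card * Kf y ^ p.length := by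
  constructor
  · rintro ⟨l, h1, h2, h3, h4⟩
    refine h4.trans (Nat.mul_le_mul_right _ ?_)
    have hn : l.Nodup := by
      rw [List.nodup_iff_injective_get]
      have hm : StrictMono l.get := by
        intro a b hab
        have := h1 b b.2 a hab
        simpa [List.getD_eq_getElem?_getD] using this
      exact hm.injective
    rw [← List.toFinset_card_of_nodup hn]
    apply Finset.card_le_card
    intro z hz
    rw [List.mem_toFinset] at hz
    exact (hS z).2 ⟨h2 z hz, h3 z hz⟩
  · intro h
    refine ⟨S.sort (· ≤ ·), ?_, ?_, ?_, by simpa using h⟩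
    · intro i hi k hk
      have := (Finset.sortedLT_sort S)
      have hm := List.SortedLT.strictMono_get this (a := ⟨k, hk.trans hi⟩) (b := ⟨i, hi⟩) hk
      rw [List.getD_eq_getElem _ _ hi, List.getD_eq_getElem _ _ (hk.trans hi)]
      exact hm
    · intro z hz; exact ((hS z).1 (by simpa using hz)).1
    · intro z hz; exact ((hS z).1 (by simpa using hz)).2

/-- index box -/
def Jx (y : ℕ) : Finset Ix := Finset.range (y + 1) ×ˢ (Finset.range (y + 1) ×ˢ Finset.range (y + 1))

theorem mem_Jx (y : ℕ) (j : Ix) : j ∈ Jx y ↔ Bd y j := by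
  simp [Jx, Bd, Nat.lt_succ_iff]

theorem card_Jx (y : ℕ) : (Jx y).card = Lf y := by
  simp [Jx, Lf]; ring

theorem Qf_pos (y : ℕ) : 0 < Qf y := Nat.succ_pos _
theorem Lf_pos (y : ℕ) : 0 < Lf y := by unfold Lf; positivity
theorem Kf_pos (y : ℕ) : 0 < Kf y := by have := Lf_pos y; unfold Kf; positivity

theorem bad_card (hs : ∀ e x v v', H e x v → H e x v' → v = v') (y : ℕ) (j : Ix) (hj : Bd y j)
    (B : Finset ℕ) (hB : ∀ z ∈ B, z < Zf y ∧ Hit H y j z (z % Qf y ^ (j.2.1 + 1))) :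
    B.card ≤ Qf y ^ y := by
  have e : Qf y ^ y = (Finset.range (Qf y ^ j.2.1) ×ˢ Finset.range (Qf y ^ (y - j.2.1))).card := by
    rw [Finset.card_product, Finset.card_range, Finset.card_range, ← pow_add]
    congr 1; have := hj.2.1; omega
  rw [e]
  have hq := Qf_pos y
  refine Finset.card_le_card_of_injOn (fun z => (z % Qf y ^ j.2.1, z / Qf y ^ (j.2.1 + 1))) ?_ ?_
  · intro z hz
    simp only [Finset.coe_product, Finset.coe_range, Set.mem_prod, Set.mem_Iio]
    refine ⟨Nat.mod_lt _ (by positivity), ?_⟩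
    rw [Nat.div_lt_iff_lt_mul (by positivity), ← pow_add]
    have h1 := (hB z hz).1
    unfold Zf at h1
    convert h1 using 2
    have := hj.2.1; omega
  · intro z hz z' hz' hh
    simp only [Prod.mk.injEq] at hh
    have h1 := (hB z hz).2
    have h2 := (hB z' hz').2
    unfold Hit at h1 h2
    rw [hh.1] at h1
    have h3 := hs _ _ _ _ h1 h2
    rw [← Nat.div_add_mod z (Qf y ^ (j.2.1 + 1)), ← Nat.div_add_mod z' (Qf y ^ (j.2.1 + 1)), hh.2, h3]

theorem count (hs : ∀ e x v v', H e x v → H e x v' → v = v') (y : ℕ) (p : List (Ix × ℕ))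
    (h1 : (p.map Prod.fst).Nodup) (h2 : ∀ q ∈ p, Bd y q.1) (h3 : Good H y p)
    (h4 : ∀ q, ¬ Ext H ((y, p), q)) :
    ∃ z < Zf y, (∀ j v, Bd y j → v ≤ y → Hit H y j z v → (j, v) ∈ p) ∧
      (∀ j, Bd y j → ¬ Hit H y j z (z % Qf y ^ (j.2.1 + 1))) := by
  classical
  have hlen : p.length ≤ Lf y := by
    rw [← card_Jx, ← List.length_map (f := Prod.fst), ← List.toFinset_card_of_nodup h1]
    apply Finset.card_le_card
    intro j hj
    rw [List.mem_toFinset, List.mem_map] at hj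
    obtain ⟨q, hq, rfl⟩ := hj
    exact (mem_Jx _ _).2 (h2 q hq)
  set S := (Finset.range (Zf y)).filter (fun z => ∀ q ∈ p, Hit H y q.1 z q.2) with hS
  rw [good_iff y p S (by simp [hS])] at h3
  have hL := Lf_pos y
  have hK := Kf_pos y
  have hQ := Qf_pos y
  obtain ⟨D, hD⟩ : ∃ D : Ix × ℕ → Prop, ∀ q, D q ↔ ∀ r ∈ p, r.1 ≠ q.1 := ⟨_, fun _ => Iff.rfl⟩
  set B1 := ((Jx y ×ˢ Finset.range (y + 1)).filter D).biUnion
    (fun q => S.filter (fun z => Hit H y q.1 z q.2)) with hB1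
  set B2 := (Jx y).biUnion (fun j => (Finset.range (Zf y)).filter
    (fun z => Hit H y j z (z % Qf y ^ (j.2.1 + 1)))) with hB2
  have c2 : B2.card ≤ Lf y * Qf y ^ y := by
    rw [← card_Jx]
    refine Finset.card_biUnion_le_card_mul _ _ _ fun j hj => ?_
    exact bad_card hs y j ((mem_Jx _ _).1 hj) _ (by simp)
  have c1 : B1.card ≤ (Lf y * (y + 1)) * (Zf y / Kf y ^ (p.length + 1)) := by
    refine (Finset.card_biUnion_le_card_mul _ _ (Zf y / Kf y ^ (p.length + 1)) ?_).trans ?_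
    · intro q hq
      rw [Finset.mem_filter, Finset.mem_product, mem_Jx, Finset.mem_range, hD] at hq
      have h5 := h4 q
      have h6 : ¬ Good H y (q :: p) := fun hg => h5 ⟨⟨hq.1.1, Nat.lt_succ_iff.1 hq.1.2⟩, hq.2, hg⟩
      rw [good_iff y (q :: p) (S.filter (fun z => Hit H y q.1 z q.2))
        (by intro z; simp [hS]; tauto)] at h6
      rw [Nat.le_div_iff_mul_le (by positivity)]
      simpa using (not_le.1 h6).le
    · refine Nat.mul_le_mul_right _ ((Finset.card_filter_le _ _).trans ?_)
      rw [Finset.card_product, card_Jx, Finset.card_range]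
  have c1' : 2 * (B1.card * Kf y ^ p.length) ≤ Zf y := by
    have h5 : B1.card * Kf y ^ (p.length + 1) ≤ (Lf y * (y + 1)) * Zf y := by
      refine (Nat.mul_le_mul_right _ c1).trans ?_
      rw [mul_assoc]
      exact Nat.mul_le_mul_left _ (Nat.div_mul_le_self _ _)
    have h6 : (Lf y * (y + 1)) * (2 * (B1.card * Kf y ^ p.length)) ≤ (Lf y * (y + 1)) * Zf y := by
      refine le_trans (le_of_eq ?_) h5
      rw [pow_succ]
      conv_rhs => rw [Kf]
      unfold Kf; ring
    exact Nat.le_of_mul_le_mul_left h6 (by positivity)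
  have c2' : 2 * (B2.card * Kf y ^ p.length) < Zf y := by
    calc 2 * (B2.card * Kf y ^ p.length) ≤ 2 * ((Lf y * Qf y ^ y) * Kf y ^ Lf y) := by
          gcongr
      _ = (2 * (Lf y * Kf y ^ Lf y)) * Qf y ^ y := by ring
      _ < Qf y * Qf y ^ y := by
          apply Nat.mul_lt_mul_of_pos_right _ (by positivity)
          exact Nat.lt_succ_self _
      _ = Zf y := by unfold Zf; ring
  have c3 : (B1 ∪ B2).card < S.card := by
    refine (Finset.card_union_le _ _).trans_lt ?_
    by_contra hc
    have := Nat.mul_le_mul_right (Kf y ^ p.length) (not_lt.1 hc)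
    rw [add_mul] at this
    omega
  obtain ⟨z, hz, hz'⟩ := Finset.exists_mem_notMem_of_card_lt_card c3
  rw [hS, Finset.mem_filter, Finset.mem_range] at hz
  rw [Finset.mem_union, not_or] at hz'
  refine ⟨z, hz.1, ?_, ?_⟩
  · intro j v hj hv hh
    by_cases hd : ∃ r ∈ p, r.1 = j
    · obtain ⟨r, hr, rfl⟩ := hd
      have := hs _ _ _ _ hh (hz.2 r hr)
      rw [this]; exact hr
    · push Not at hd
      exfalso
      apply hz'.1
      rw [hB1, Finset.mem_biUnion]
      refine ⟨(j, v), ?_, ?_⟩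
      · rw [Finset.mem_filter, Finset.mem_product, mem_Jx, Finset.mem_range, hD]
        exact ⟨⟨hj, Nat.lt_succ_iff.2 hv⟩, hd⟩
      · rw [hS, Finset.mem_filter, Finset.mem_filter, Finset.mem_range]
        exact ⟨hz, hh⟩
  · intro j hj hh
    apply hz'.2
    rw [hB2, Finset.mem_biUnion]
    refine ⟨j, (mem_Jx _ _).2 hj, ?_⟩
    rw [Finset.mem_filter, Finset.mem_range]
    exact ⟨hz.1, hh⟩

theorem comb (hH : CSg (n + 1) (fun p : (ℕ × ℕ) × ℕ => H p.1.1 p.1.2 p.2))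
    (hs : ∀ e x v v', H e x v → H e x v' → v = v') :
    ∃ Pr : ℕ → Ix → ℕ → Prop, CSg (n + 1) (fun p : (ℕ × Ix) × ℕ => Pr p.1.1 p.1.2 p.2) ∧
      (∀ y j v v', Pr y j v → Pr y j v' → v = v') ∧
      ∀ y, ∃ z < Qf y ^ (y + 1),
        (∀ e i x v, e ≤ y → i ≤ y → x ≤ y → v ≤ y → H e (Nat.pair x (z % Qf y ^ i)) v → Pr y (e, i, x) v) ∧
        (∀ e i x, e ≤ y → i ≤ y → x ≤ y → ¬ H e (Nat.pair x (z % Qf y ^ i)) (z % Qf y ^ (i + 1))) := by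
  obtain ⟨Nx, n1, n2, n3, n4⟩ := CSg.unif' (csg_ext hH)
  refine ⟨fun y j v => ∃ p, Reach Nx y p ∧ ∃ i < p.length, p.getD i default = (j, v), ?_, ?_, ?_⟩
  · refine CSg.ex (A := fun b : ((ℕ × Ix) × ℕ) × List (Ix × ℕ) => Reach Nx b.1.1.1 b.2 ∧
      ∃ i < b.2.length, b.2.getD i default = (b.1.1.2, b.1.2)) (CSg.and ?_ ?_)
    · exact (csg_reach Nx n1).comp ((Primrec.fst.comp (Primrec.fst.comp Primrec.fst)).pair Primrec.snd)
    · refine CSg.bex (A := fun c : (((ℕ × Ix) × ℕ) × List (Ix × ℕ)) × ℕ =>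
        c.1.2.getD c.2 default = (c.1.1.1.2, c.1.1.2)) (CSg.eq ?_ ?_) (Primrec.list_length.comp Primrec.snd)
      · exact (Primrec.list_getD _).comp (Primrec.snd.comp Primrec.fst) Primrec.snd
      · exact (Primrec.snd.comp (Primrec.fst.comp (Primrec.fst.comp Primrec.fst))).pair
          (Primrec.snd.comp (Primrec.fst.comp Primrec.fst))
  · have key : ∀ y j v v' p p', Reach Nx y p → Reach Nx y p' → p.length ≤ p'.length → (j, v) ∈ p →
        (j, v') ∈ p' → v = v' := by
      intro y j v v' p p' hp hp' hl hm hm'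
      have e : p = p'.drop (p'.length - p.length) :=
        reach_uniq Nx n3 y _ _ hp (reach_drop Nx y p' hp' _) (by simp; omega)
      have hm2 : (j, v) ∈ p' := by
        rw [e] at hm
        exact List.mem_of_mem_drop hm
      have hnd := (reach_nodup Nx n2 y p' hp').1
      have := List.inj_on_of_nodup_map hnd hm2 hm' rfl
      exact (Prod.mk.inj this).2
    rintro y j v v' ⟨p, hp, i, hi, hm⟩ ⟨p', hp', i', hi', hm'⟩
    have m1 : (j, v) ∈ p := by
      rw [← hm]; simp [List.getD_eq_getElem?_getD, hi]
    have m2 : (j, v') ∈ p' := by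
      rw [← hm']; simp [List.getD_eq_getElem?_getD, hi']
    rcases le_total p.length p'.length with h | h
    · exact key y j v v' p p' hp hp' h m1 m2
    · exact (key y j v' v p' p hp' hp h m2 m1).symm
  · intro y
    have hlen : ∀ p, Reach Nx y p → p.length ≤ Lf y := by
      intro p hp
      classical
      obtain ⟨h1, h2, -⟩ := reach_nodup Nx n2 y p hp
      rw [← card_Jx, ← List.length_map (f := Prod.fst), ← List.toFinset_card_of_nodup h1]
      apply Finset.card_le_card
      intro j hj
      rw [List.mem_toFinset, List.mem_map] at hj
      obtain ⟨q, hq, rfl⟩ := hj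
      exact (mem_Jx _ _).2 (h2 q hq)
    obtain ⟨p, hp, hmax⟩ : ∃ p, Reach Nx y p ∧ ∀ p', Reach Nx y p' → p'.length ≤ p.length := by
      by_contra hc
      push Not at hc
      have : ∀ k, ∃ p, Reach Nx y p ∧ k ≤ p.length := by
        intro k
        induction k with
        | zero => exact ⟨[], by intro i hi; simp at hi, by simp⟩
        | succ k ih =>
          obtain ⟨p, hp, hk⟩ := ih
          obtain ⟨p', hp', hk'⟩ := hc p hp
          exact ⟨p', hp', by omega⟩
      obtain ⟨p, hp, hk⟩ := this (Lf y + 1)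
      have := hlen p hp
      omega
    obtain ⟨h1, h2, h3⟩ := reach_nodup Nx n2 y p hp
    obtain ⟨z, hz, g1, g2⟩ := count hs y p h1 h2 h3 (by
      intro q hq
      obtain ⟨q', hq'⟩ := n4 _ _ hq
      have := hmax (q' :: p) ((reach_cons Nx y q' p).2 ⟨hq', hp⟩)
      simp at this)
    refine ⟨z, hz, ?_, ?_⟩
    · intro e i x v he hi hx hv hh
      have hm := g1 (e, i, x) v ⟨he, hi, hx⟩ hv hh
      obtain ⟨k, hk, e⟩ := List.getElem_of_mem hm
      exact ⟨p, hp, k, hk, by simp [List.getD_eq_getElem?_getD, hk, e]⟩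
    · intro e i x he hi hx
      exact g2 (e, i, x) ⟨he, hi, hx⟩

end Comb
end ArithFC


namespace ArithFC
set_option linter.all false
set_option linter.unusedVariables false

section Closure
open Filter

structure HD (n : ℕ) where
  H : ℕ → ℕ → ℕ → Prop
  csg : CSg (n + 1) (fun p : (ℕ × ℕ) × ℕ => H p.1.1 p.1.2 p.2)
  sv : ∀ e x v v', H e x v → H e x v' → v = v'
  univ : ∀ A : ℕ × ℕ → Prop, CSg (n + 1) A → (∀ x v v', A (x, v) → A (x, v') → v = v') →
      ∃ e, ∀ x v, H e x v ↔ A (x, v)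

theorem exists_HD (n : ℕ) : Nonempty (HD n) := by
  obtain ⟨H, h1, h2, h3⟩ := exists_H n
  exact ⟨⟨H, h1, h2, h3⟩⟩

noncomputable abbrev UU : Ultrafilter ℕ := Filter.hyperfilter ℕ

theorem ev_ge (k : ℕ) : ∀ᶠ t in (UU : Filter ℕ), k ≤ t := by
  have h : (UU : Filter ℕ) ≤ atTop := by
    rw [← Nat.cofinite_eq_atTop]; exact Filter.hyperfilter_le_cofinite
  exact h (eventually_ge_atTop k)

variable {n : ℕ}

def Cl (d : HD n) (x g : ℕ → ℕ) : Prop := ∃ e, ∀ᶠ t in (UU : Filter ℕ), d.H e (x t) (g t)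

variable {d : HD n} {x x' f g : ℕ → ℕ}

theorem Cl.congr (h : Cl d x f) (e : ∀ᶠ t in (UU : Filter ℕ), f t = g t) : Cl d x g := by
  obtain ⟨i, hi⟩ := h
  exact ⟨i, by filter_upwards [hi, e] with t a b; rwa [← b]⟩

theorem CSg.allFin {α : Type} [Primcodable α] {m k : ℕ} {R : Fin k → α → Prop} (h : ∀ i, CSg m (R i)) :
    CSg m (fun u => ∀ i, R i u) := by
  induction k with
  | zero => exact CSg.congr (CSg.eq (Primrec.const (0:ℕ)) (Primrec.const 0)) (fun u => by simp)
  | succ k ih =>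
    refine CSg.congr (CSg.and (h 0) (ih fun i => h i.succ)) (fun u => ?_)
    exact Fin.forall_fin_succ

def SelC (n : ℕ) (C : (ℕ → ℕ) → Prop) : Prop :=
  ∀ {N : ℕ} {f : Fin N → ℕ → ℕ}, (∀ i, C (f i)) → ∀ {R : (Fin N → ℕ) × ℕ → Prop}, CSg (n + 1) R →
    (∀ᶠ t in (UU : Filter ℕ), ∃ w, R (fun i => f i t, w)) →
    ∃ g, C g ∧ ∀ᶠ t in (UU : Filter ℕ), R (fun i => f i t, g t)

theorem Cl.sel : SelC n (Cl d x) := by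
  intro N f hf R hR h
  choose e he using hf
  have h1 : CSg (n + 1) (fun p : ℕ × ℕ => ∃ u : Fin N → ℕ, (∀ i, d.H (e i) p.1 (u i)) ∧ R (u, p.2)) := by
    refine CSg.ex (A := fun q : (ℕ × ℕ) × (Fin N → ℕ) => (∀ i, d.H (e i) q.1.1 (q.2 i)) ∧ R (q.2, q.1.2))
      (CSg.and (CSg.allFin fun i => ?_) ?_)
    · exact d.csg.comp (((Primrec.const (e i)).pair (Primrec.fst.comp Primrec.fst)).pair
        ((primrec_proj i).comp Primrec.snd))
    · exact hR.comp (Primrec.snd.pair (Primrec.snd.comp Primrec.fst))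
  obtain ⟨A', g1, g2, g3, g4⟩ := CSg.unif h1
  obtain ⟨E, hE⟩ := d.univ A' g1 g3
  have h2 : ∀ᶠ t in (UU : Filter ℕ), ∃ w, A' (x t, w) := by
    filter_upwards [h, eventually_all.2 he] with t ⟨w, hw⟩ ht
    exact g4 _ w ⟨_, ht, hw⟩
  have h3 : ∀ t, ∃ w, (∃ w, A' (x t, w)) → A' (x t, w) := by
    intro t
    by_cases hh : ∃ w, A' (x t, w)
    · exact ⟨hh.choose, fun _ => hh.choose_spec⟩
    · exact ⟨0, fun a => absurd a hh⟩
  choose g hg using h3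
  refine ⟨g, ⟨E, ?_⟩, ?_⟩
  · filter_upwards [h2] with t ht
    exact (hE _ _).2 (hg t ht)
  · filter_upwards [h2, eventually_all.2 he] with t ht ht'
    obtain ⟨u, hu, hr⟩ := g2 _ _ (hg t ht)
    have : u = fun i => f i t := by
      funext i; exact d.sv _ _ _ _ (hu i) (ht' i)
    rwa [this] at hr

theorem Cl.rel {C : (ℕ → ℕ) → Prop} (hS : SelC n C)
    (hc : ∀ {f g : ℕ → ℕ}, C f → (∀ᶠ t in (UU : Filter ℕ), f t = g t) → C g) {N : ℕ} {f : Fin N → ℕ → ℕ} (hf : ∀ i, C (f i))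
    {R : (Fin N → ℕ) × ℕ → Prop} (hR : CSg (n + 1) R)
    (hs : ∀ u v v', R (u, v) → R (u, v') → v = v')
    (h : ∀ᶠ t in (UU : Filter ℕ), R (fun i => f i t, g t)) : C g := by
  obtain ⟨g', h1, h2⟩ := hS hf hR (h.mono fun t ht => ⟨_, ht⟩)
  exact hc h1 (by filter_upwards [h, h2] with t a b; exact hs _ _ _ b a)

theorem Cl.prim {C : (ℕ → ℕ) → Prop} (hS : SelC n C)
    (hc : ∀ {f g : ℕ → ℕ}, C f → (∀ᶠ t in (UU : Filter ℕ), f t = g t) → C g) {N : ℕ} {f : Fin N → ℕ → ℕ} (hf : ∀ i, C (f i))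
    {F : (Fin N → ℕ) → ℕ} (hF : Primrec F) : C (fun t => F (fun i => f i t)) := by
  refine Cl.rel hS hc hf (R := fun p => p.2 = F p.1) (CSg.eq Primrec.snd (hF.comp Primrec.fst)) ?_ ?_
  · intro u v v' h h'; exact Eq.trans h h'.symm
  · exact Eventually.of_forall fun t => rfl

theorem Cl.prim2 {C : (ℕ → ℕ) → Prop} (hS : SelC n C)
    (hc : ∀ {f g : ℕ → ℕ}, C f → (∀ᶠ t in (UU : Filter ℕ), f t = g t) → C g) (hf : C f) (hg : C g)
    {F : ℕ → ℕ → ℕ} (hF : Primrec₂ F) : C (fun t => F (f t) (g t)) := by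
  have := Cl.prim hS hc (f := ![f, g]) (F := fun u => F (u 0) (u 1)) ?_
    (hF.comp (primrec_proj 0) (primrec_proj 1))
  · simpa using this
  · intro i; fin_cases i
    · exact hf
    · exact hg

theorem Cl.map2 (hf : Cl d x f) (hg : Cl d x g)
    {F : ℕ → ℕ → ℕ} (hF : Primrec₂ F) : Cl d x (fun t => F (f t) (g t)) :=
  Cl.prim2 Cl.sel (fun a b => Cl.congr a b) hf hg hF

theorem Cl.map (hf : Cl d x f) {F : ℕ → ℕ} (hF : Primrec F) : Cl d x (fun t => F (f t)) :=
  Cl.map2 hf hf (F := fun a _ => F a) (hF.comp Primrec.fst)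

theorem Cl.refl : Cl d x x := by
  obtain ⟨e, he⟩ := d.univ (fun p => p.2 = p.1) (CSg.eq Primrec.snd Primrec.fst)
    (fun x v v' h h' => Eq.trans h h'.symm)
  exact ⟨e, Eventually.of_forall fun t => (he _ _).2 rfl⟩

theorem Cl.trans (h : Cl d x x') (h' : Cl d x' g) : Cl d x g := by
  obtain ⟨e, he⟩ := h'
  refine Cl.rel Cl.sel (fun a b => Cl.congr a b) (f := ![x']) (R := fun p => d.H e (p.1 0) p.2) ?_ ?_
    (fun u v v' => d.sv _ _ _ _) (by simpa using he)
  · intro i; fin_cases i; exact h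
  · exact d.csg.comp (((Primrec.const e).pair ((primrec_proj 0).comp Primrec.fst)).pair Primrec.snd)

theorem Cl.const (k : ℕ) : Cl d x (fun _ => k) :=
  Cl.map (Cl.refl (x := x)) (F := fun _ => k) (Primrec.const k)

end Closure
end ArithFC


namespace ArithFC
set_option linter.all false
set_option linter.unusedVariables false

section Model
open Filter

structure Cls (n : ℕ) where
  C : (ℕ → ℕ) → Prop
  sel : SelC n C
  congr : ∀ {f g : ℕ → ℕ}, C f → (∀ᶠ t in (UU : Filter ℕ), f t = g t) → C g

noncomputable def canon (f : ℕ → ℕ) : ℕ → ℕ := Quotient.out (s := germSetoid (UU : Filter ℕ) ℕ) (f : Germ (UU : Filter ℕ) ℕ)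

theorem canon_ev (f : ℕ → ℕ) : ∀ᶠ t in (UU : Filter ℕ), canon f t = f t :=
  Quotient.mk_out (s := germSetoid (UU : Filter ℕ) ℕ) f

theorem canon_eq {f g : ℕ → ℕ} (h : ∀ᶠ t in (UU : Filter ℕ), f t = g t) : canon f = canon g := by
  have : (f : Germ (UU : Filter ℕ) ℕ) = g := Germ.coe_eq.2 h
  unfold canon; rw [this]

variable {n : ℕ}

def Md (K : Cls n) : Type := {f : ℕ → ℕ // K.C f ∧ canon f = f}

variable {K : Cls n}

noncomputable def Md.mk (f : ℕ → ℕ) (hf : K.C f) : Md K :=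
  ⟨canon f, K.congr hf ((canon_ev f).mono fun t h => h.symm), canon_eq (canon_ev f)⟩

theorem Md.mk_ev (f : ℕ → ℕ) (hf : K.C f) : ∀ᶠ t in (UU : Filter ℕ), (Md.mk f hf).1 t = f t := canon_ev f

theorem Md.ext' {x y : Md K} : x = y ↔ ∀ᶠ t in (UU : Filter ℕ), x.1 t = y.1 t := by
  constructor
  · rintro rfl; exact Eventually.of_forall fun _ => rfl
  · intro h
    apply Subtype.ext
    rw [← x.2.2, ← y.2.2]; exact canon_eq h

theorem Cls.const (K : Cls n) (k : ℕ) : K.C (fun _ => k) :=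
  Cl.prim K.sel K.congr (N := 0) (f := Fin.elim0) (fun i => i.elim0) (F := fun _ => k) (Primrec.const k)

theorem Cls.map2 (K : Cls n) {f g : ℕ → ℕ} (hf : K.C f) (hg : K.C g)
    {F : ℕ → ℕ → ℕ} (hF : Primrec₂ F) : K.C (fun t => F (f t) (g t)) :=
  Cl.prim2 K.sel K.congr hf hg hF

noncomputable instance mdStr : lang.Structure (Md K) where
  funMap := fun {k} f => match k, f with
    | _, Func.zero => fun _ => Md.mk (fun _ => 0) (K.const 0)
    | _, Func.one => fun _ => Md.mk (fun _ => 1) (K.const 1)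
    | _, Func.add => fun v => Md.mk (fun t => (v 0).1 t + (v 1).1 t) (K.map2 (v 0).2.1 (v 1).2.1 Primrec.nat_add)
    | _, Func.mul => fun v => Md.mk (fun t => (v 0).1 t * (v 1).1 t) (K.map2 (v 0).2.1 (v 1).2.1 Primrec.nat_mul)
  RelMap := fun {k} R => match k, R with
    | _, Rel.lt => fun v => ∀ᶠ t in (UU : Filter ℕ), (v 0).1 t < (v 1).1 t

def instN : lang.Structure ℕ where
  funMap := fun {k} f => match k, f with
    | _, Func.zero => fun _ => 0
    | _, Func.one => fun _ => 1
    | _, Func.add => fun v => v 0 + v 1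
    | _, Func.mul => fun v => v 0 * v 1
  RelMap := fun {k} R => match k, R with
    | _, Rel.lt => fun v => v 0 < v 1

theorem Md.lt_iff {x y : Md K} : x < y ↔ ∀ᶠ t in (UU : Filter ℕ), x.1 t < y.1 t := Iff.rfl
theorem Md.zero_ev : ∀ᶠ t in (UU : Filter ℕ), (0 : Md K).1 t = 0 := canon_ev _
theorem Md.one_ev : ∀ᶠ t in (UU : Filter ℕ), (1 : Md K).1 t = 1 := canon_ev _
theorem Md.add_ev (x y : Md K) : ∀ᶠ t in (UU : Filter ℕ), (x + y).1 t = x.1 t + y.1 t := canon_ev _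
theorem Md.mul_ev (x y : Md K) : ∀ᶠ t in (UU : Filter ℕ), (x * y).1 t = x.1 t * y.1 t := canon_ev _

theorem Md.le_iff {x y : Md K} : x ≤ y ↔ ∀ᶠ t in (UU : Filter ℕ), x.1 t ≤ y.1 t := by
  change x < y ∨ x = y ↔ _
  rw [Md.lt_iff, Md.ext', ← Ultrafilter.eventually_or]
  refine eventually_congr (Eventually.of_forall fun t => ?_)
  exact (le_iff_lt_or_eq).symm

theorem md_pam : PAm (Md K) where
  add_assoc x y z := by
    rw [Md.ext']
    filter_upwards [Md.add_ev (x + y) z, Md.add_ev x y, Md.add_ev x (y + z), Md.add_ev y z] with t h1 h2 h3 h4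
    rw [h1, h2, h3, h4]; ring
  add_comm x y := by
    rw [Md.ext']
    filter_upwards [Md.add_ev x y, Md.add_ev y x] with t h1 h2
    rw [h1, h2]; ring
  mul_assoc x y z := by
    rw [Md.ext']
    filter_upwards [Md.mul_ev (x * y) z, Md.mul_ev x y, Md.mul_ev x (y * z), Md.mul_ev y z] with t h1 h2 h3 h4
    rw [h1, h2, h3, h4]; ring
  mul_comm x y := by
    rw [Md.ext']
    filter_upwards [Md.mul_ev x y, Md.mul_ev y x] with t h1 h2
    rw [h1, h2]; ring
  ldistrib x y z := by
    rw [Md.ext']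
    filter_upwards [Md.mul_ev x (y + z), Md.add_ev y z, Md.add_ev (x * y) (x * z), Md.mul_ev x y,
      Md.mul_ev x z] with t h1 h2 h3 h4 h5
    rw [h1, h2, h3, h4, h5]; ring
  add_zero x := by
    rw [Md.ext']
    filter_upwards [Md.add_ev x 0, Md.zero_ev (K := K)] with t h1 h2
    rw [h1, h2]; ring
  mul_zero x := by
    rw [Md.ext']
    filter_upwards [Md.mul_ev x 0, Md.zero_ev (K := K)] with t h1 h2
    rw [h1, h2]; ring
  mul_one x := by
    rw [Md.ext']
    filter_upwards [Md.mul_ev x 1, Md.one_ev (K := K)] with t h1 h2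
    rw [h1, h2]; ring
  lt_trans x y z h h' := by
    rw [Md.lt_iff] at *
    filter_upwards [h, h'] with t a b; exact a.trans b
  lt_irrefl x h := by
    rw [Md.lt_iff] at h
    obtain ⟨t, ht⟩ := h.exists
    exact lt_irrefl _ ht
  lt_total x y := by
    rw [Md.lt_iff, Md.lt_iff, Md.ext', ← Ultrafilter.eventually_or, ← Ultrafilter.eventually_or]
    exact Eventually.of_forall fun t => lt_trichotomy _ _
  add_lt_add x y z h := by
    rw [Md.lt_iff] at *
    filter_upwards [h, Md.add_ev x z, Md.add_ev y z] with t a b c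
    rw [b, c]; omega
  mul_lt_mul x y z h h' := by
    rw [Md.lt_iff] at *
    filter_upwards [h, h', Md.mul_ev x z, Md.mul_ev y z, Md.zero_ev (K := K)] with t a a' b c e
    rw [b, c]; rw [e] at a'; exact Nat.mul_lt_mul_of_pos_right a a'
  sub_exists x y h := by
    rw [Md.lt_iff] at h
    have hc := K.map2 y.2.1 x.2.1 Primrec.nat_sub
    refine ⟨Md.mk _ hc, ?_⟩
    rw [Md.ext']
    filter_upwards [h, Md.add_ev x (Md.mk _ hc), Md.mk_ev _ hc] with t a b c
    rw [b, c]; omega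
  zero_lt_one := by
    rw [Md.lt_iff]
    filter_upwards [Md.zero_ev (K := K), Md.one_ev (K := K)] with t a b
    rw [a, b]; exact Nat.one_pos
  discrete x h := by
    rw [Md.le_iff]; rw [Md.lt_iff] at h
    filter_upwards [Md.zero_ev (K := K), Md.one_ev (K := K), h] with t a b c
    rw [b]; rw [a] at c; exact c
  zero_le x := by
    rw [Md.le_iff]
    filter_upwards [Md.zero_ev (K := K)] with t a
    rw [a]; exact Nat.zero_le _

def RN {α : Type} {k : ℕ} (φ : lang.BoundedFormula α k) (v : α → ℕ) (xs : Fin k → ℕ) : Prop :=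
  @BoundedFormula.Realize lang ℕ instN α k φ v xs

theorem RN_sigma {α : Type} {m k : ℕ} {φ : lang.BoundedFormula α k} (h : SigmaFm m k φ)
    {N : ℕ} (τ : α → Fin N) (τ' : Fin k → Fin N) :
    CSg m (fun u : Fin N → ℕ => RN φ (fun a => u (τ a)) (fun i => u (τ' i))) :=
  Sg.toC (@sigma_Sg ℕ instN α m k φ h N τ τ')

theorem RN_pi {α : Type} {m k : ℕ} {φ : lang.BoundedFormula α k} (h : PiFm m k φ)
    {N : ℕ} (τ : α → Fin N) (τ' : Fin k → Fin N) :
    CSg m (fun u : Fin N → ℕ => ¬ RN φ (fun a => u (τ a)) (fun i => u (τ' i))) :=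
  Sg.toC (@pi_Sg ℕ instN α m k φ h N τ τ')

theorem CSg.mono {α : Type} [Primcodable α] {m m' : ℕ} (hm : m ≤ m') {A : α → Prop} (h : CSg m A) : CSg m' A := by
  induction hm with
  | refl => exact h
  | step _ ih => exact ih.succ

def trN {β : Type} (t : lang.Term β) (v : β → ℕ) : ℕ := @Term.realize lang ℕ instN β v t

theorem los_term {β : Type} (t : lang.Term β) (v : β → Md K) :
    ∀ᶠ s in (UU : Filter ℕ), (t.realize v).1 s = trN t (fun b => (v b).1 s) := by
  induction t with
  | var b => exact Eventually.of_forall fun s => rfl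
  | func f ts ih =>
    cases f with
    | zero => exact canon_ev _
    | one => exact canon_ev _
    | add =>
      filter_upwards [canon_ev (fun t => ((ts 0).realize v).1 t + ((ts 1).realize v).1 t), ih 0, ih 1] with s h h0 h1
      refine Eq.trans h ?_
      rw [h0, h1]; rfl
    | mul =>
      filter_upwards [canon_ev (fun t => ((ts 0).realize v).1 t * ((ts 1).realize v).1 t), ih 0, ih 1] with s h h0 h1
      refine Eq.trans h ?_
      rw [h0, h1]; rfl

def Los (K : Cls n) {α : Type} {k : ℕ} (φ : lang.BoundedFormula α k) : Prop :=
  ∀ {N : ℕ} (τ : α → Fin N) (τ' : Fin k → Fin N) (u : Fin N → Md K),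
    φ.Realize (fun a => u (τ a)) (fun i => u (τ' i)) ↔
      ∀ᶠ s in (UU : Filter ℕ), RN φ (fun a => (u (τ a)).1 s) (fun i => (u (τ' i)).1 s)

theorem los_imp {α : Type} {k : ℕ} {φ ψ : lang.BoundedFormula α k} (h : Los K φ) (h' : Los K ψ) :
    Los K (φ.imp ψ) := by
  intro N τ τ' u
  rw [BoundedFormula.realize_imp, h τ τ' u, h' τ τ' u, ← Ultrafilter.eventually_imp]
  rfl

theorem los_falsum {α : Type} {k : ℕ} : Los K (BoundedFormula.falsum : lang.BoundedFormula α k) := by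
  intro N τ τ' u
  constructor
  · intro h; exact h.elim
  · intro h; obtain ⟨t, ht⟩ := h.exists; exact ht.elim

theorem los_not {α : Type} {k : ℕ} {φ : lang.BoundedFormula α k} (h : Los K φ) : Los K φ.not :=
  los_imp h los_falsum

theorem extT_eqN {n N : ℕ} (τ' : Fin n → Fin N) (u : Fin N → ℕ) (x : ℕ) :
    (fun i => (Fin.snoc u x : Fin (N + 1) → ℕ) (extT τ' i)) = Fin.snoc (fun i => u (τ' i)) x :=
  @extT_eq ℕ instN n N τ' u x

theorem los_all {α : Type} {k : ℕ} {φ : lang.BoundedFormula α (k + 1)} (h : Los K φ)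
    (hC : ∀ {N : ℕ} (τ : α → Fin N) (τ' : Fin (k + 1) → Fin N),
      CSg (n + 1) (fun u : Fin N → ℕ => ¬ RN φ (fun a => u (τ a)) (fun i => u (τ' i)))) :
    Los K φ.all := by
  intro N τ τ' u
  have key : ∀ x : Md K, φ.Realize (fun a => u (τ a)) (Fin.snoc (fun i => u (τ' i)) x) ↔
      ∀ᶠ s in (UU : Filter ℕ), RN φ (fun a => (u (τ a)).1 s) (Fin.snoc (fun i => (u (τ' i)).1 s) (x.1 s)) := by
    intro x
    have := h (fun a => (τ a).castSucc) (extT τ') (Fin.snoc u x)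
    rw [extT_eq] at this
    simp only [Fin.snoc_castSucc] at this
    rw [this]
    refine eventually_congr (Eventually.of_forall fun s => ?_)
    rw [← extT_eqN τ' (fun i => (u i).1 s) (x.1 s)]
    apply Eq.to_iff
    congr 1
    funext i
    have e : ∀ j : Fin (N + 1), ((Fin.snoc u x : Fin (N + 1) → Md K) j).1 s = (Fin.snoc (fun i => (u i).1 s) (x.1 s) : Fin (N + 1) → ℕ) j := by
      intro j
      refine Fin.lastCases ?_ (fun j => ?_) j <;> simp
    exact e _
  rw [BoundedFormula.realize_all]
  constructor
  · intro hx
    by_contra hcon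
    rw [← Ultrafilter.eventually_not] at hcon
    have h1 : ∀ᶠ s in (UU : Filter ℕ), ∃ w, ¬ RN φ (fun a => (u (τ a)).1 s) (Fin.snoc (fun i => (u (τ' i)).1 s) w) := by
      filter_upwards [hcon] with s hs
      by_contra hc
      push Not at hc
      exact hs (fun w => hc w)
    have hc2 := (hC (fun a => (τ a).castSucc) (extT τ')).comp (primrec_snoc (N := N))
    have hc3 : CSg (n + 1) (fun p : (Fin N → ℕ) × ℕ => ¬ RN φ (fun a => p.1 (τ a)) (Fin.snoc (fun i => p.1 (τ' i)) p.2)) := by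
      refine CSg.congr hc2 fun p => ?_
      rw [extT_eqN]
      simp
    obtain ⟨g, hg, hg2⟩ := K.sel (f := fun i => (u i).1) (fun i => (u i).2.1) hc3 h1
    have h3 := (key (Md.mk g hg)).1 (hx _)
    obtain ⟨s, a, b, c⟩ := (hg2.and (h3.and (Md.mk_ev g hg))).exists
    rw [c] at b
    exact a b
  · intro hx x
    rw [key]
    exact hx.mono fun s hs => hs _

theorem los_ex {α : Type} {k : ℕ} {φ : lang.BoundedFormula α (k + 1)} (h : Los K φ)
    (hC : ∀ {N : ℕ} (τ : α → Fin N) (τ' : Fin (k + 1) → Fin N),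
      CSg (n + 1) (fun u : Fin N → ℕ => RN φ (fun a => u (τ a)) (fun i => u (τ' i)))) :
    Los K φ.ex := by
  refine los_not (los_all (los_not h) ?_)
  intro N τ τ'
  refine CSg.congr (hC τ τ') fun u => ?_
  exact not_not

theorem los_equal {α : Type} {k : ℕ} (t t' : lang.Term (α ⊕ Fin k)) : Los K (BoundedFormula.equal t t') := by
  intro N τ τ' u
  change t.realize _ = t'.realize _ ↔ _
  rw [Md.ext']
  refine eventually_congr ?_
  filter_upwards [los_term t (Sum.elim (fun a => u (τ a)) (fun i => u (τ' i))),
    los_term t' (Sum.elim (fun a => u (τ a)) (fun i => u (τ' i)))] with s h h'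
  rw [h, h']
  have e : (fun b => (Sum.elim (fun a => u (τ a)) (fun i => u (τ' i)) b : Md K).1 s) =
    Sum.elim (fun a => (u (τ a)).1 s) (fun i => (u (τ' i)).1 s) := by
    funext b; rcases b with b | b <;> rfl
  rw [e]; rfl

theorem los_rel {α : Type} {k l : ℕ} (R : lang.Relations l) (ts : Fin l → lang.Term (α ⊕ Fin k)) :
    Los K (BoundedFormula.rel R ts) := by
  intro N τ τ' u
  cases R
  change (∀ᶠ s in (UU : Filter ℕ), ((ts 0).realize (Sum.elim (fun a => u (τ a)) (fun i => u (τ' i)))).1 s <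
    ((ts 1).realize (Sum.elim (fun a => u (τ a)) (fun i => u (τ' i)))).1 s) ↔ _
  refine eventually_congr ?_
  filter_upwards [los_term (ts 0) (Sum.elim (fun a => u (τ a)) (fun i => u (τ' i))),
    los_term (ts 1) (Sum.elim (fun a => u (τ a)) (fun i => u (τ' i)))] with s h h'
  rw [h, h']
  have e : (fun b => (Sum.elim (fun a => u (τ a)) (fun i => u (τ' i)) b : Md K).1 s) =
    Sum.elim (fun a => (u (τ a)).1 s) (fun i => (u (τ' i)).1 s) := by
    funext b; rcases b with b | b <;> rfl
  rw [e]; rfl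

theorem los_delta0 {α : Type} {k : ℕ} {φ : lang.BoundedFormula α k} (h : IsDelta0 k φ) : Los K φ := by
  induction h with
  | falsum n => exact los_falsum
  | equal n t u => exact los_equal t u
  | rel n l R ts => exact los_rel R ts
  | imp n _ _ ih1 ih2 => exact los_imp ih1 ih2
  | bdAll k t h ih =>
    refine los_all (los_imp (los_rel _ _) ih) ?_
    intro N τ τ'
    exact CSg.mono (Nat.zero_le _) (RN_pi (PiFm.delta0 0 _ (IsDelta0.imp _ (IsDelta0.rel _ _ _ _) h)) τ τ')

mutual
theorem los_sigma {α : Type} : ∀ {m k : ℕ} {φ : lang.BoundedFormula α k} (_ : SigmaFm m k φ), m ≤ n + 1 → Los K φ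
  | _, _, _, .delta0 _ _ h, _ => los_delta0 h
  | _, _, _, .ofPi _ _ h, hm => los_pi h (by omega)
  | _, _, _, .ex _ _ h, hm => los_ex (los_sigma h hm) (fun τ τ' => CSg.mono hm (RN_sigma h τ τ'))
theorem los_pi {α : Type} : ∀ {m k : ℕ} {φ : lang.BoundedFormula α k} (_ : PiFm m k φ), m ≤ n + 1 → Los K φ
  | _, _, _, .delta0 _ _ h, _ => los_delta0 h
  | _, _, _, .ofSigma _ _ h, hm => los_sigma h (by omega)
  | _, _, _, .all _ _ h, hm => los_all (los_pi h hm) (fun τ τ' => CSg.mono hm (RN_pi h τ τ'))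
end

/-- definable relations of the model come from relations on the naturals -/
theorem def_down {m k : ℕ} (hm : m ≤ n + 1) {A : (Fin k → Md K) → Prop} (h : IsSigmaDef m (Md K) A) :
    ∃ (p : ℕ) (w : Fin p → Md K) (R : (Fin k → ℕ) × (Fin p → ℕ) → Prop), CSg m R ∧
      ∀ v, A v ↔ ∀ᶠ s in (UU : Filter ℕ), R (fun i => (v i).1 s, fun i => (w i).1 s) := by
  obtain ⟨p, φ, w, h1, h2⟩ := h
  refine ⟨p, w, fun q => RN φ (Sum.elim q.1 q.2) finZeroElim, ?_, ?_⟩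
  · have := RN_sigma h1 (N := k + p) (Sum.elim (Fin.castAdd p) (Fin.natAdd k)) finZeroElim
    have h3 := this.comp (f := fun q : (Fin k → ℕ) × (Fin p → ℕ) => Fin.append q.1 q.2) ?_
    · refine CSg.congr h3 fun q => ?_
      apply Eq.to_iff
      congr 1
      · funext a; rcases a with a | a <;> simp
      · exact Subsingleton.elim _ _
    · refine primrec_tuple fun i => ?_
      refine Fin.addCases (fun i => ?_) (fun i => ?_) i
      · simpa using (primrec_proj i).comp Primrec.fst
      · simpa using (primrec_proj i).comp Primrec.snd
  · intro v
    rw [h2]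
    have := los_sigma (K := K) h1 hm (N := k + p) (Sum.elim (Fin.castAdd p) (Fin.natAdd k)) (finZeroElim : Fin 0 → Fin (k + p)) (Fin.append v w)
    have e1 : (fun a => Fin.append v w (Sum.elim (Fin.castAdd p) (Fin.natAdd k) a)) = Sum.elim v w := by
      funext a; rcases a with a | a <;> simp
    have e2 : ∀ s, (fun a => (Fin.append v w (Sum.elim (Fin.castAdd p) (Fin.natAdd k) a)).1 s) =
        Sum.elim (fun i => (v i).1 s) (fun i => (w i).1 s) := by
      intro s; funext a; rcases a with a | a <;> simp
    rw [e1] at this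
    simp only [e2] at this
    rw [Subsingleton.elim finZeroElim (fun i : Fin 0 => Fin.append v w ((finZeroElim : Fin 0 → Fin (k + p)) i)), this]
    refine eventually_congr (Eventually.of_forall fun s => ?_)
    rw [Subsingleton.elim finZeroElim (fun i : Fin 0 => (Fin.append v w ((finZeroElim : Fin 0 → Fin (k + p)) i)).1 s)]

/-- relations on the naturals give definable relations of the model -/
theorem def_up {k p : ℕ} {R : (Fin k → ℕ) × (Fin p → ℕ) → Prop} (hR : CSg (n + 1) R) (w : Fin p → Md K) :
    IsSigmaDef (n + 1) (Md K) (fun v : Fin k → Md K =>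
      ∀ᶠ s in (UU : Filter ℕ), R (fun i => (v i).1 s, fun i => (w i).1 s)) := by
  have h1 : CSg (n + 1) (fun u : Fin (k + p) → ℕ => R (fun i => u (Fin.castAdd p i), fun i => u (Fin.natAdd k i))) :=
    hR.comp ((primrec_tuple fun i => primrec_proj _).pair (primrec_tuple fun i => primrec_proj _))
  have h2 := h1.toSg
  obtain ⟨⟨φ, h3, h4⟩, -⟩ := @Sg.toFm ℕ instN _ _ _ h2 (Fin k ⊕ Fin p) 0
    (Fin.addCases (fun i => Sum.inl (Sum.inl i)) (fun i => Sum.inl (Sum.inr i)))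
  refine ⟨p, φ, w, h3, fun v => ?_⟩
  have := los_sigma (K := K) h3 le_rfl (N := k + p) (Sum.elim (Fin.castAdd p) (Fin.natAdd k)) (finZeroElim : Fin 0 → Fin (k + p)) (Fin.append v w)
  have e1 : (fun a => Fin.append v w (Sum.elim (Fin.castAdd p) (Fin.natAdd k) a)) = Sum.elim v w := by
    funext a; rcases a with a | a <;> simp
  have e2 : ∀ s, (fun a => (Fin.append v w (Sum.elim (Fin.castAdd p) (Fin.natAdd k) a)).1 s) =
      Sum.elim (fun i => (v i).1 s) (fun i => (w i).1 s) := by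
    intro s; funext a; rcases a with a | a <;> simp
  rw [e1] at this
  simp only [e2] at this
  rw [Subsingleton.elim finZeroElim (fun i : Fin 0 => Fin.append v w ((finZeroElim : Fin 0 → Fin (k + p)) i)), this]
  refine eventually_congr (Eventually.of_forall fun s => ?_)
  refine Iff.trans ?_ (h4 _ _).symm
  simp

theorem def_down2 {F : Md K → Md K → Prop} (h : SigmaDef2 (n + 1) (Md K) F) :
    ∃ (p : ℕ) (w : Fin p → Md K) (R : (ℕ × ℕ) × (Fin p → ℕ) → Prop), CSg (n + 1) R ∧
      ∀ x y, F x y ↔ ∀ᶠ s in (UU : Filter ℕ), R ((x.1 s, y.1 s), fun i => (w i).1 s) := by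
  obtain ⟨p, w, R, h1, h2⟩ := def_down le_rfl h
  refine ⟨p, w, fun q => R (![q.1.1, q.1.2], q.2), ?_, ?_⟩
  · refine h1.comp (Primrec.pair (primrec_tuple fun i => ?_) Primrec.snd)
    fin_cases i
    · exact Primrec.fst.comp Primrec.fst
    · exact Primrec.snd.comp Primrec.fst
  · intro x y
    refine (h2 ![x, y]).trans (eventually_congr (Eventually.of_forall fun s => ?_))
    beta_reduce
    apply Eq.to_iff
    congr 2
    funext i; fin_cases i <;> rfl

theorem def_up2 {p : ℕ} {R : (ℕ × ℕ) × (Fin p → ℕ) → Prop} (hR : CSg (n + 1) R) (w : Fin p → Md K) :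
    SigmaDef2 (n + 1) (Md K) (fun x y =>
      ∀ᶠ s in (UU : Filter ℕ), R ((x.1 s, y.1 s), fun i => (w i).1 s)) := by
  exact def_up (R := fun q : (Fin 2 → ℕ) × (Fin p → ℕ) => R ((q.1 0, q.1 1), q.2))
    (hR.comp ((((primrec_proj 0).comp Primrec.fst).pair ((primrec_proj 1).comp Primrec.fst)).pair Primrec.snd)) w

theorem md_isig : ISig n (Md K) := by
  intro A hA h0 hs x
  obtain ⟨p, w, R, h1, h2⟩ := def_down (Nat.le_succ n) hA
  have h2 : ∀ x : Md K, x ∈ A ↔ ∀ᶠ s in (UU : Filter ℕ), R (fun _ => x.1 s, fun i => (w i).1 s) := fun x => h2 (fun _ => x)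
  by_contra hx
  have h0' := (h2 0).1 h0
  rw [h2, ← Ultrafilter.eventually_not] at hx
  have h3 : ∀ᶠ s in (UU : Filter ℕ), ∃ y, R (fun _ => y, fun i => (w i).1 s) ∧ ¬ R (fun _ => y + 1, fun i => (w i).1 s) := by
    filter_upwards [h0', hx, Md.zero_ev (K := K)] with s a b c
    rw [c] at a
    by_contra hcon
    push Not at hcon
    have : ∀ y, R (fun _ => y, fun i => (w i).1 s) := by
      intro y; induction y with
      | zero => exact a
      | succ y ih => exact hcon y ih
    exact b (this _)
  have hR : CSg (n + 1) (fun q : (Fin p → ℕ) × ℕ => R (fun _ => q.2, q.1) ∧ ¬ R (fun _ => q.2 + 1, q.1)) := by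
    refine CSg.and ?_ ?_
    · exact (h1.succ).comp (Primrec.pair (primrec_tuple fun i => Primrec.snd) Primrec.fst)
    · exact CSg.neg (A := fun q : (Fin p → ℕ) × ℕ => R (fun _ => q.2 + 1, q.1))
        (h1.comp (Primrec.pair (primrec_tuple fun i => Primrec.succ.comp Primrec.snd) Primrec.fst))
  obtain ⟨g, hg, hg2⟩ := K.sel (f := fun i => (w i).1) (fun i => (w i).2.1) hR h3
  have h4 : Md.mk g hg ∈ A := by
    rw [h2]
    filter_upwards [hg2, Md.mk_ev g hg] with s a b
    rw [b]; exact a.1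
  have h5 := (h2 _).1 (hs _ h4)
  obtain ⟨s, a, b, c, e, e'⟩ := (h5.and (hg2.and ((Md.mk_ev g hg).and ((Md.add_ev (Md.mk g hg) 1).and Md.one_ev)))).exists
  rw [e, c, e'] at a
  exact b.2 a

end Model
end ArithFC


namespace ArithFC
set_option linter.all false
set_option linter.unusedVariables false

section Tower
open Filter

structure PD {n : ℕ} (d : HD n) where
  Pr : ℕ → Ix → ℕ → Prop
  csg : CSg (n + 1) (fun p : (ℕ × Ix) × ℕ => Pr p.1.1 p.1.2 p.2)
  sv : ∀ y j v v', Pr y j v → Pr y j v' → v = v'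
  z : ℕ → ℕ
  lt : ∀ y, z y < Qf y ^ (y + 1)
  g1 : ∀ y e i x v, e ≤ y → i ≤ y → x ≤ y → v ≤ y → d.H e (Nat.pair x (z y % Qf y ^ i)) v → Pr y (e, i, x) v
  g2 : ∀ y e i x, e ≤ y → i ≤ y → x ≤ y → ¬ d.H e (Nat.pair x (z y % Qf y ^ i)) (z y % Qf y ^ (i + 1))

theorem exists_PD {n : ℕ} (d : HD n) : Nonempty (PD d) := by
  obtain ⟨Pr, h1, h2, h3⟩ := comb d.csg d.sv
  choose z a b c using h3
  exact ⟨⟨Pr, h1, h2, z, a, b, c⟩⟩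

variable {n : ℕ} {d : HD n} (P : PD d)

def zr (y : ℕ → ℕ) (i : ℕ) : ℕ → ℕ := fun t => P.z (y t) % Qf (y t) ^ i

def Tf (Y : ℕ → ℕ → ℕ) (κ : ℕ → ℕ) : ℕ → ℕ → ℕ
  | 0 => fun t => t
  | k + 1 => fun t => Nat.pair (Tf Y κ k t) (zr P (Y k) (κ k) t)

variable {P}

theorem peel {x y c : ℕ → ℕ} {i : ℕ} (hy : Cl d x y) (hxy : ∀ t, x t ≤ y t) (ht : ∀ t, t ≤ y t)
    (hc : Cl d (fun t => Nat.pair (x t) (zr P y i t)) c)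
    (hcy : ∀ᶠ t in (UU : Filter ℕ), c t ≤ y t) : Cl d x c := by
  obtain ⟨e, he⟩ := hc
  refine Cl.rel Cl.sel (fun a b => Cl.congr a b) (f := ![x, y]) (R := fun p => P.Pr (p.1 1) (e, i, p.1 0) p.2) ?_ ?_
    (fun u v v' => P.sv _ _ _ _) ?_
  · intro i; fin_cases i
    · exact Cl.refl
    · exact hy
  · exact P.csg.comp ((((primrec_proj 1).comp Primrec.fst).pair ((Primrec.const e).pair
      ((Primrec.const i).pair ((primrec_proj 0).comp Primrec.fst)))).pair Primrec.snd)
  · filter_upwards [he, hcy, ev_ge e, ev_ge i] with t a b e1 e2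
    exact P.g1 _ _ _ _ _ (e1.trans (ht t)) (e2.trans (ht t)) (hxy t) b a

theorem notin {x y : ℕ → ℕ} {i : ℕ} (hxy : ∀ t, x t ≤ y t) (ht : ∀ t, t ≤ y t)
    (hc : Cl d (fun t => Nat.pair (x t) (zr P y i t)) (zr P y (i + 1))) : False := by
  obtain ⟨e, he⟩ := hc
  obtain ⟨t, a, e1, e2⟩ := (he.and ((ev_ge e).and (ev_ge i))).exists
  exact P.g2 _ _ _ _ (e1.trans (ht t)) (e2.trans (ht t)) (hxy t) a

theorem cl_fst {x w : ℕ → ℕ} : Cl d (fun t => Nat.pair (x t) (w t)) x := by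
  have := Cl.map (Cl.refl (d := d) (x := fun t => Nat.pair (x t) (w t))) (F := fun a => a.unpair.1)
    (Primrec.fst.comp Primrec.unpair)
  simpa using this

theorem cl_snd {x w : ℕ → ℕ} : Cl d (fun t => Nat.pair (x t) (w t)) w := by
  have := Cl.map (Cl.refl (d := d) (x := fun t => Nat.pair (x t) (w t))) (F := fun a => a.unpair.2)
    (Primrec.snd.comp Primrec.unpair)
  simpa using this

theorem zr_mono {x y : ℕ → ℕ} {i i' : ℕ} (hi : i ≤ i') (hy : Cl d x y) (hz : Cl d x (zr P y i')) :
    Cl d x (zr P y i) := by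
  have := Cl.map2 hz hy (F := fun a b => a % Qf b ^ i)
    (Primrec.nat_mod.comp Primrec.fst (primrec_pow (prim_Qf.comp Primrec.snd) (Primrec.const i)))
  refine Cl.congr this (Eventually.of_forall fun t => ?_)
  exact Nat.mod_mod_of_dvd _ (pow_dvd_pow _ hi)

theorem zr_lt (y : ℕ → ℕ) (i t : ℕ) : zr P y i t < Qf (y t) ^ (y t + 1) :=
  (Nat.mod_le _ _).trans_lt (P.lt _)

theorem Tf_congr {Y Y' : ℕ → ℕ → ℕ} (κ : ℕ → ℕ) (k : ℕ) (h : ∀ j < k, Y j = Y' j) : Tf P Y κ k = Tf P Y' κ k := by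
  induction k with
  | zero => rfl
  | succ k ih =>
    have e1 := ih fun j hj => h j (hj.trans (Nat.lt_succ_self k))
    have e2 := h k (Nat.lt_succ_self k)
    simp only [Tf]
    rw [e1, e2]

theorem exists_rec {α : Type} (a : α) (step : ℕ → (ℕ → α) → α)
    (h : ∀ k y y', (∀ j ≤ k, y j = y' j) → step k y = step k y') :
    ∃ y : ℕ → α, y 0 = a ∧ ∀ k, y (k + 1) = step k y := by
  classical
  let Y : ℕ → ℕ → α := fun k => Nat.rec (fun _ => a) (fun k Y => Function.update Y (k + 1) (step k Y)) k
  have hY : ∀ k, Y (k + 1) = Function.update (Y k) (k + 1) (step k (Y k)) := fun k => rfl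
  have h1 : ∀ k j, j ≤ k → Y k j = Y j j := by
    intro k
    induction k with
    | zero => intro j hj; obtain rfl : j = 0 := by omega
              rfl
    | succ k ih =>
      intro j hj
      rcases Nat.lt_or_ge k j with h2 | h2
      · obtain rfl : j = k + 1 := by omega
        rfl
      · rw [hY, Function.update_of_ne (by omega), ih j h2]
  refine ⟨fun k => Y k k, rfl, fun k => ?_⟩
  dsimp only
  rw [hY, Function.update_self]
  exact h _ _ _ fun j hj => h1 k j hj

open Classical in
noncomputable def vv (d : HD n) (e : ℕ) (x : ℕ → ℕ) : ℕ → ℕ :=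
  if h : ∃ g : ℕ → ℕ, ∀ᶠ t in (UU : Filter ℕ), d.H e (x t) (g t) then h.choose else fun _ => 0

theorem vv_cl (e : ℕ) (x : ℕ → ℕ) : Cl d x (vv d e x) := by
  unfold vv
  split_ifs with h
  · exact ⟨e, h.choose_spec⟩
  · exact Cl.const 0

theorem vv_eq {e : ℕ} {x g : ℕ → ℕ} (h : ∀ᶠ t in (UU : Filter ℕ), d.H e (x t) (g t)) :
    ∀ᶠ t in (UU : Filter ℕ), g t = vv d e x t := by
  have h' : ∃ g : ℕ → ℕ, ∀ᶠ t in (UU : Filter ℕ), d.H e (x t) (g t) := ⟨g, h⟩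
  unfold vv
  rw [dif_pos h']
  filter_upwards [h, h'.choose_spec] with t a b
  exact d.sv _ _ _ _ a b

theorem Cl.sum {x : ℕ → ℕ} {f : ℕ → ℕ → ℕ} (k : ℕ) (h : ∀ j < k, Cl d x (f j)) :
    Cl d x (fun t => ∑ j ∈ Finset.range k, f j t) := by
  induction k with
  | zero => simpa using Cl.const (d := d) (x := x) 0
  | succ k ih =>
    simp only [Finset.sum_range_succ]
    exact Cl.map2 (ih fun j hj => h j (by omega)) (h k (by omega)) Primrec.nat_add

variable (P)

structure Tw (ι : ℕ → ℕ) where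
  y : ℕ → ℕ → ℕ
  y0 : ∀ t, y 0 t = t + t
  cl : ∀ k, Cl d (Tf P y (fun _ => ι k) k) (y k)
  bd : ∀ κ k t, Tf P y κ k t ≤ y k t
  ge : ∀ k t, t ≤ y k t
  mono1 : ∀ k t, y k t ≤ y (k + 1) t
  zlt : ∀ k i t, zr P (y k) i t < y (k + 1) t
  cof : ∀ k g, Cl d (Tf P y (fun _ => ι k) k) g → ∃ l, ∀ᶠ t in (UU : Filter ℕ), g t ≤ y l t

variable {P}

theorem Tf_mono {ι : ℕ → ℕ} (hι : Monotone ι) {y : ℕ → ℕ → ℕ} (l : ℕ)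
    (hcl : ∀ k < l, Cl d (Tf P y (fun _ => ι k) k) (y k)) {κ κ' : ℕ → ℕ}
    (h : ∀ i < l, κ i ≤ κ' i) (h' : ∀ j < l, ∀ i, ι j ≤ κ' i) : Cl d (Tf P y κ' l) (Tf P y κ l) := by
  induction l generalizing κ with
  | zero => exact Cl.refl
  | succ l ih =>
    have ih' : ∀ {κ : ℕ → ℕ}, (∀ i < l, κ i ≤ κ' i) → Cl d (Tf P y κ' l) (Tf P y κ l) := by
      intro κ h1
      exact ih (fun k hk => hcl k (by omega)) h1 (fun j hj => h' j (by omega))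
    have hy : Cl d (Tf P y κ' l) (y l) :=
      (ih' (κ := fun _ => ι l) (fun i hi => h' l (by omega) i)).trans (hcl l (by omega))
    have e1 : Cl d (Tf P y κ' (l + 1)) (Tf P y κ' l) := cl_fst
    refine Cl.map2 (F := Nat.pair) (e1.trans (ih' fun i hi => h i (by omega))) ?_ Primrec₂.natPair
    exact zr_mono (h l (by omega)) (e1.trans hy) cl_snd

theorem Tf_up {y : ℕ → ℕ → ℕ} {κ : ℕ → ℕ} {k l : ℕ} (h : k ≤ l) : Cl d (Tf P y κ l) (Tf P y κ k) := by
  induction l, h using Nat.le_induction with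
  | base => exact Cl.refl
  | succ l _ ih => exact Cl.trans (cl_fst (x := Tf P y κ l)) ih

theorem exists_Tw {ι : ℕ → ℕ} (hι : Monotone ι) : Nonempty (Tw P ι) := by
  obtain ⟨y, h0, hs⟩ := exists_rec (α := ℕ → ℕ) (fun t => t + t)
    (fun k Y => fun t => (Y k t + Qf (Y k t) ^ (Y k t + 1) + 1) ^ 2 +
      ∑ j ∈ Finset.range (k + 1), ∑ e ∈ Finset.range (k + 1), vv d e (Tf P Y (fun _ => ι j) j) t) (by
    intro k Y Y' h
    funext t
    rw [h k le_rfl]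
    congr 1
    refine Finset.sum_congr rfl fun j hj => Finset.sum_congr rfl fun e he => ?_
    rw [Tf_congr _ j fun i hi => h i (by have := Finset.mem_range.1 hj; omega)])
  have hs' : ∀ k t, y (k + 1) t = (y k t + Qf (y k t) ^ (y k t + 1) + 1) ^ 2 +
      ∑ j ∈ Finset.range (k + 1), ∑ e ∈ Finset.range (k + 1), vv d e (Tf P y (fun _ => ι j) j) t :=
    fun k t => congrFun (hs k) t
  have hge : ∀ k t, (y k t + Qf (y k t) ^ (y k t + 1) + 1) ^ 2 ≤ y (k + 1) t := by
    intro k t; rw [hs' k t]; exact Nat.le_add_right _ _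
  have hge1 : ∀ k t, y k t + Qf (y k t) ^ (y k t + 1) + 1 ≤ y (k + 1) t := by
    intro k t
    refine le_trans ?_ (hge k t)
    exact Nat.le_self_pow (by norm_num) _
  have hm : ∀ k t, y k t ≤ y (k + 1) t := fun k t => by have := hge1 k t; omega
  have hcl : ∀ k, Cl d (Tf P y (fun _ => ι k) k) (y k) := by
    intro k
    induction k using Nat.strong_induction_on with
    | _ k ih =>
    cases k with
    | zero =>
      rw [h0]
      exact Cl.map2 Cl.refl Cl.refl Primrec.nat_add
    | succ k =>
      rw [hs k]
      have key : ∀ j ≤ k, Cl d (Tf P y (fun _ => ι (k + 1)) (k + 1)) (Tf P y (fun _ => ι j) j) := by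
        intro j hj
        refine Cl.trans (Tf_up (k := j) (by omega)) ?_
        exact Tf_mono hι j (fun i hi => ih i (by omega)) (fun i hi => hι (by omega))
          (fun i hi _ => hι (by omega))
      refine Cl.map2 (F := fun a b => a + b) ?_ ?_ Primrec.nat_add
      · refine Cl.map (F := fun a => (a + Qf a ^ (a + 1) + 1) ^ 2) ((key k le_rfl).trans (ih k (by omega))) ?_
        refine primrec_pow (Primrec.succ.comp (Primrec.nat_add.comp Primrec.id
          (primrec_pow prim_Qf Primrec.succ))) (Primrec.const 2)
      · refine Cl.sum (k + 1) fun j hj => Cl.sum (k + 1) fun e he => ?_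
        exact (key j (by omega)).trans (vv_cl _ _)
  refine ⟨⟨y, fun t => congrFun h0 t, hcl, ?_, ?_, hm, ?_, ?_⟩⟩
  · intro κ k t
    induction k with
    | zero => rw [h0]; exact Nat.le_add_right _ _
    | succ k ih =>
      refine le_trans ?_ (hge k t)
      have h1 : Tf P y κ (k + 1) t < (max (Tf P y κ k t) (zr P (y k) (κ k) t) + 1) ^ 2 :=
        Nat.pair_lt_max_add_one_sq _ _
      refine h1.le.trans (Nat.pow_le_pow_left ?_ 2)
      have h2 := zr_lt (P := P) (y k) (κ k) t
      have : max (Tf P y κ k t) (zr P (y k) (κ k) t) ≤ y k t + Qf (y k t) ^ (y k t + 1) := by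
        apply max_le <;> omega
      omega
  · intro k t
    induction k with
    | zero => rw [h0]; exact Nat.le_add_right _ _
    | succ k ih => exact ih.trans (hm k t)
  · intro k i t
    have := zr_lt (P := P) (y k) i t
    have := hge1 k t
    omega
  · rintro k g ⟨e, he⟩
    refine ⟨max k e + 1, ?_⟩
    filter_upwards [vv_eq he] with t ht
    rw [ht, hs']
    refine le_trans ?_ (Nat.le_add_left _ _)
    refine le_trans ?_ (Finset.single_le_sum (f := fun j => ∑ e ∈ Finset.range (max k e + 1), vv d e (Tf P y (fun _ => ι j) j) t)
      (fun _ _ => Nat.zero_le _) (Finset.mem_range.2 (by omega : k < max k e + 1)))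
    exact Finset.single_le_sum (f := fun e => vv d e (Tf P y (fun _ => ι k) k) t)
      (fun _ _ => Nat.zero_le _) (Finset.mem_range.2 (by omega : e < max k e + 1))

variable {ι : ℕ → ℕ} (hι : Monotone ι) (W : Tw P ι)

theorem Tw.mono (W : Tw P ι) {k l : ℕ} (h : k ≤ l) (t : ℕ) : W.y k t ≤ W.y l t := by
  induction l, h using Nat.le_induction with
  | base => exact le_rfl
  | succ l _ ih => exact ih.trans (W.mono1 l t)

/-- comparison of towers -/
theorem Tw.cmp (hι : Monotone ι) (W : Tw P ι) {k l : ℕ} {κ κ' : ℕ → ℕ} (hk : k ≤ l) (h : ∀ i < k, κ i ≤ κ' i) (h' : ∀ i, ι k ≤ κ' i) :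
    Cl d (Tf P W.y κ' l) (Tf P W.y κ k) :=
  Cl.trans (Tf_up hk) (Tf_mono hι k (fun j _ => W.cl j) h (fun j hj i => (hι hj.le).trans (h' i)))

theorem Tw.cly (hι : Monotone ι) (W : Tw P ι) {k l : ℕ} {κ : ℕ → ℕ} (hk : k ≤ l) (h : ∀ i, ι k ≤ κ i) : Cl d (Tf P W.y κ l) (W.y k) :=
  (W.cmp hι hk (κ := fun _ => ι k) (fun i _ => h i) h).trans (W.cl k)

theorem Tw.peel (hι : Monotone ι) (W : Tw P ι) {k l : ℕ} {κ c : ℕ → ℕ} (hk : k ≤ l) (h : ∀ i, ι l ≤ κ i) (hc : Cl d (Tf P W.y κ l) c)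
    (hy : ∀ᶠ t in (UU : Filter ℕ), c t ≤ W.y k t) : Cl d (Tf P W.y κ k) c := by
  induction l, hk using Nat.le_induction with
  | base => exact hc
  | succ l hl ih =>
    have h1 : ∀ i, ι l ≤ κ i := fun i => (hι (Nat.le_succ l)).trans (h i)
    refine ih h1 (ArithFC.peel (P := P) (W.cly hι le_rfl h1) (W.bd κ l) (W.ge l) hc ?_)
    exact hy.mono fun t ht => ht.trans (W.mono hl t)

theorem Tw.notin (hι : Monotone ι) (W : Tw P ι) {k l : ℕ} {κ : ℕ → ℕ} (hk : k < l) (h : ∀ i, ι l ≤ κ i)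
    (hc : Cl d (Tf P W.y κ l) (zr P (W.y k) (κ k + 1))) : False := by
  have := W.peel hι (k := k + 1) hk h hc (Eventually.of_forall fun t => (W.zlt k _ t).le)
  exact ArithFC.notin (P := P) (W.bd κ k) (W.ge k) this

def Tw.X (W : Tw P ι) (k : ℕ) : ℕ → ℕ := Tf P W.y (fun _ => ι k) k

theorem Tw.X_mono (hι : Monotone ι) (W : Tw P ι) {k l : ℕ} (h : k ≤ l) : Cl d (W.X l) (W.X k) :=
  W.cmp hι h (fun _ _ => hι h) (fun _ => hι h)

theorem fin_bd {N : ℕ} (k : Fin N → ℕ) : ∃ m, ∀ i, k i ≤ m :=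
  ⟨∑ i, k i, fun i => Finset.single_le_sum (f := k) (fun _ _ => Nat.zero_le _) (Finset.mem_univ i)⟩

def Tw.K (hι : Monotone ι) (W : Tw P ι) : Cls n where
  C g := ∃ k, Cl d (W.X k) g
  congr := by
    rintro f g ⟨k, hk⟩ h
    exact ⟨k, hk.congr h⟩
  sel := by
    intro N f hf R hR h
    choose k hk using hf
    obtain ⟨m, hm⟩ := fin_bd k
    obtain ⟨g, h1, h2⟩ := Cl.sel (d := d) (x := W.X m) (fun i => (W.X_mono hι (hm i)).trans (hk i)) hR h
    exact ⟨g, ⟨m, h1⟩, h2⟩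

theorem Tw.cofM (hι : Monotone ι) (W : Tw P ι) (x : Md (W.K hι)) : ∃ l, ∀ᶠ t in (UU : Filter ℕ), x.1 t ≤ W.y l t := by
  obtain ⟨k, hk⟩ := x.2.1
  exact W.cof k _ hk

theorem K_trans (hι : Monotone ι) (W : Tw P ι) {x g : ℕ → ℕ} (h : (W.K hι).C x) (h' : Cl d x g) : (W.K hι).C g := by
  obtain ⟨k, hk⟩ := h
  exact ⟨k, hk.trans h'⟩

theorem K_id (hι : Monotone ι) (W : Tw P ι) : (W.K hι).C (fun t => t) := ⟨0, Cl.refl⟩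

/-- the injection into the germ of the identity -/
theorem inj_lemma {K : Cls n} {x : ℕ → ℕ} (hx : K.C x) (hid : K.C (fun t => t)) (y : Md K)
    (h : ∀ u : Md K, u < y → Cl d x u.1) : ExSigmaInj (Md K) (n + 1) y (Md.mk (fun t => t) hid) := by
  have h1 : CSg (n + 1) (fun p : ((ℕ × ℕ) × ℕ) × ℕ => p.2 < p.1.1.2 ∧ d.H p.2 p.1.1.1 p.1.2) := by
    refine CSg.and (CSg.lt Primrec.snd (Primrec.snd.comp (Primrec.fst.comp Primrec.fst))) ?_
    exact d.csg.comp ((Primrec.snd.pair (Primrec.fst.comp (Primrec.fst.comp Primrec.fst))).pair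
      (Primrec.snd.comp Primrec.fst))
  obtain ⟨E, g1, g2, g3, g4⟩ := CSg.unif h1
  have hR : CSg (n + 1) (fun q : (ℕ × ℕ) × (Fin 2 → ℕ) => E (((q.2 0, q.2 1), q.1.1), q.1.2)) :=
    g1.comp (((((primrec_proj 0).comp Primrec.snd).pair ((primrec_proj 1).comp Primrec.snd)).pair
      (Primrec.fst.comp Primrec.fst)).pair (Primrec.snd.comp Primrec.fst))
  have hx1 := Md.mk_ev x hx
  have hx2 := Md.mk_ev _ hid
  refine ⟨_, def_up2 hR ![Md.mk x hx, Md.mk _ hid], ?_, ?_, ?_⟩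
  · intro u hu
    obtain ⟨e, he⟩ := h u hu
    have h2 : ∀ᶠ t in (UU : Filter ℕ), ∃ w, E (((x t, t), u.1 t), w) := by
      filter_upwards [he, ev_ge (e + 1)] with t a b
      exact g4 _ e ⟨b, a⟩
    obtain ⟨g, hg, hg2⟩ := K.sel (f := ![x, fun t => t, u.1])
      (R := fun q => E (((q.1 0, q.1 1), q.1 2), q.2)) (by
        intro i; fin_cases i
        · exact hx
        · exact hid
        · exact u.2.1)
      (g1.comp (((((primrec_proj 0).comp Primrec.fst).pair ((primrec_proj 1).comp Primrec.fst)).pair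
        ((primrec_proj 2).comp Primrec.fst)).pair Primrec.snd)) h2
    refine ⟨Md.mk g hg, ?_, ?_⟩
    · rw [Md.lt_iff]
      filter_upwards [hg2, Md.mk_ev g hg, hx2] with t a b c
      rw [b, c]
      exact (g2 _ _ a).1
    · filter_upwards [hg2, Md.mk_ev g hg, hx1, hx2] with t a b c1 c2
      change E ((((Md.mk x hx).1 t, (Md.mk _ hid).1 t), u.1 t), (Md.mk g hg).1 t)
      rw [b, c1, c2]
      exact a
  · intro u v v' hu h h'
    rw [Md.ext']
    filter_upwards [h, h'] with t a b
    exact g3 _ _ _ a b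
  · intro u u' v hu hu' h h'
    rw [Md.ext']
    filter_upwards [h, h'] with t a b
    exact d.sv _ _ _ _ (g2 _ _ a).2 (g2 _ _ b).2

/-- The first model. -/
theorem model_one (n : ℕ) : ∃ (M : Type) (_ : lang.Structure M), PAm M ∧ ISig n M ∧ CARD M (n + 1) ∧
    ¬GPHP M (n + 1) := by
  obtain ⟨d⟩ := exists_HD n
  obtain ⟨P⟩ := exists_PD d
  have hι : Monotone (fun _ : ℕ => 1) := monotone_const
  obtain ⟨W⟩ := exists_Tw (P := P) hι
  have X_peel : ∀ (u : Md (W.K hι)) k, (∀ᶠ t in (UU : Filter ℕ), u.1 t ≤ W.y k t) → Cl d (W.X k) u.1 := by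
    intro u k hu
    obtain ⟨l, hl⟩ := u.2.1
    have hl' : Cl d (W.X (max k l)) u.1 := (W.X_mono hι (le_max_right k l)).trans hl
    exact W.peel hι (le_max_left k l) (fun _ => le_rfl) hl' hu
  refine ⟨Md (W.K hι), mdStr, md_pam, md_isig, ?_, ?_⟩
  · intro F hF a hFa
    obtain ⟨p, w, R, hR, hFR⟩ := def_down2 hF
    choose kw hkw using fun i => (w i).2.1
    obtain ⟨m, hm⟩ := fin_bd kw
    obtain ⟨l, hl⟩ := W.cofM hι a
    have hw : ∀ i, Cl d (W.X (max m l)) (w i).1 := fun i =>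
      (W.X_mono hι ((hm i).trans (le_max_left m l))).trans (hkw i)
    have ha : ∀ᶠ t in (UU : Filter ℕ), a.1 t ≤ W.y (max m l) t := hl.mono fun t ht => ht.trans (W.mono (le_max_right m l) t)
    generalize max m l = k at hw ha
    have hg : (W.K hι).C (zr P (W.y k) 1) := ⟨k + 1, cl_snd⟩
    have hgn : ¬ Cl d (W.X k) (zr P (W.y k) 1) := by
      intro hc
      exact notin (P := P) (i := 0) (W.bd _ k) (W.ge k) (Cl.trans (cl_fst (x := W.X k)) hc)
    obtain ⟨v, hva, hv⟩ := hFa (Md.mk _ hg)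
    have hvk : Cl d (W.X k) v.1 := by
      refine X_peel v k ?_
      filter_upwards [ha, Md.lt_iff.1 hva] with t b c
      exact c.le.trans b
    have hv' := (hFR _ _).1 hv
    obtain ⟨g', hg', hg2⟩ := Cl.sel (d := d) (x := W.X k) (f := Fin.snoc (fun i => (w i).1) v.1)
      (R := fun q => R ((q.2, q.1 (Fin.last p)), fun i => q.1 i.castSucc)) (by
        intro i
        refine Fin.lastCases ?_ (fun i => ?_) i
        · simpa using hvk
        · simpa using hw i)
      (hR.comp ((Primrec.snd.pair ((primrec_proj _).comp Primrec.fst)).pair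
        (primrec_tuple fun i => (primrec_proj i.castSucc).comp Primrec.fst)))
      (by
        filter_upwards [hv'] with t ht
        refine ⟨(Md.mk _ hg : Md (W.K hι)).1 t, ?_⟩
        simpa using ht)
    have hg'C : (W.K hι).C g' := ⟨k, hg'⟩
    refine ⟨Md.mk _ hg, Md.mk _ hg'C, v, ?_, hva, hv, ?_⟩
    · intro he
      rw [Md.ext'] at he
      refine hgn (hg'.congr ?_)
      filter_upwards [he, Md.mk_ev _ hg, Md.mk_ev _ hg'C] with t b c e
      rw [← c, b, e]
    · rw [hFR]
      filter_upwards [hg2, Md.mk_ev _ hg'C] with t b c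
      rw [c]
      simpa using b
  · intro hG
    obtain ⟨y, hy⟩ := hG (Md.mk _ (K_id hι W))
    obtain ⟨l, hl⟩ := W.cofM hι y
    refine hy (inj_lemma (d := d) (K := W.K hι) (x := W.X l) ⟨l, Cl.refl⟩ _ y fun u hu => X_peel u l ?_)
    filter_upwards [hl, Md.lt_iff.1 hu] with t b c
    exact c.le.trans b

/-- The second model. -/
theorem model_two (n : ℕ) : ∃ (M : Type) (_ : lang.Structure M), PAm M ∧ ISig n M ∧ GPHP M (n + 1) ∧
    ¬WPHP M (n + 1) := by
  obtain ⟨d⟩ := exists_HD n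
  obtain ⟨P⟩ := exists_PD d
  have hι : Monotone (fun k : ℕ => k + 1) := fun a b h => Nat.succ_le_succ h
  obtain ⟨W⟩ := exists_Tw (P := P) hι
  have X_peel : ∀ (u : Md (W.K hι)) k, (∀ᶠ t in (UU : Filter ℕ), u.1 t ≤ W.y k t) → ∀ l₀,
      ∃ l, l₀ ≤ l ∧ k ≤ l ∧ Cl d (Tf P W.y (fun _ => l + 1) k) u.1 := by
    intro u k hu l₀
    obtain ⟨l, hl⟩ := u.2.1
    have hl' : Cl d (W.X (max (max k l₀) l)) u.1 := (W.X_mono hι (le_max_right _ l)).trans hl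
    exact ⟨max (max k l₀) l, by omega, by omega, W.peel hι (by omega) (fun _ => le_rfl) hl' hu⟩
  refine ⟨Md (W.K hι), mdStr, md_pam, md_isig, ?_, ?_⟩
  · intro x
    obtain ⟨k, hk⟩ := W.cofM hι x
    have hyC : (W.K hι).C (W.y (k + 1)) := ⟨k + 1, W.cl _⟩
    refine ⟨Md.mk _ hyC, ?_⟩
    rintro ⟨F, hF, hF1, hF2, hF3⟩
    obtain ⟨p, w, R, hR, hFR⟩ := def_down2 hF
    choose kw hkw using fun i => (w i).2.1
    obtain ⟨m, hm⟩ := fin_bd kw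
    obtain ⟨l, hl, hlm⟩ : ∃ l, k + 1 ≤ l ∧ m ≤ l := ⟨max m (k + 1), by omega, by omega⟩
    have hw : ∀ i, Cl d (W.X l) (w i).1 := fun i => (W.X_mono hι ((hm i).trans hlm)).trans (hkw i)
    have hg : (W.K hι).C (zr P (W.y k) (l + 1 + 1)) := by
      refine ⟨l + 1, Cl.trans (W.cmp hι (k := k + 1) (κ := fun _ => l + 1 + 1) (by omega) (fun _ _ => le_rfl)
        (fun _ => by dsimp only; omega)) cl_snd⟩
    have hgy : Md.mk _ hg < Md.mk _ hyC := by
      rw [Md.lt_iff]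
      filter_upwards [Md.mk_ev _ hg, Md.mk_ev _ hyC] with t a b
      rw [a, b]; exact W.zlt k _ t
    obtain ⟨v, hvx, hv⟩ := hF1 _ hgy
    obtain ⟨l', hl1, hl2, hvk⟩ := X_peel v k (by
      filter_upwards [hk, Md.lt_iff.1 hvx] with t b c
      exact c.le.trans b) l
    obtain ⟨κ, hκ1, hκ2, hκ3⟩ : ∃ κ : ℕ → ℕ, (∀ i < k, κ i = l' + 1) ∧ κ k = l + 1 ∧ ∀ i, l + 1 ≤ κ i ∧ κ i ≤ l' + 1 := by
      refine ⟨fun i => if i < k then l' + 1 else l + 1, fun i hi => if_pos hi, if_neg (lt_irrefl _), fun i => ?_⟩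
      dsimp only
      split_ifs <;> omega
    have hvl : Cl d (Tf P W.y κ l) v.1 :=
      (W.cmp hι (k := k) (by omega) (fun i hi => (hκ1 i hi).ge) (fun i => by have := (hκ3 i).1; omega)).trans hvk
    have hwl : ∀ i, Cl d (Tf P W.y κ l) (w i).1 := fun i =>
      Cl.trans (W.cmp hι (k := l) le_rfl (fun i _ => (hκ3 i).1) (fun i => (hκ3 i).1)) (hw i)
    have hyl : Cl d (Tf P W.y κ l) (W.y (k + 1)) :=
      W.cly hι hl (fun i => by have := (hκ3 i).1; omega)
    have hTC : (W.K hι).C (Tf P W.y κ l) :=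
      ⟨l', W.cmp hι hl1 (fun i _ => (hκ3 i).2) (fun i => by dsimp only; omega)⟩
    have hv' := (hFR _ _).1 hv
    obtain ⟨g', hg', hg2⟩ := Cl.sel (d := d) (x := Tf P W.y κ l)
      (f := Fin.snoc (Fin.snoc (fun i => (w i).1) v.1 : Fin (p + 1) → ℕ → ℕ) (W.y (k + 1)))
      (R := fun q => q.2 < q.1 (Fin.last (p + 1)) ∧
        R ((q.2, q.1 (Fin.last p).castSucc), fun i => q.1 i.castSucc.castSucc)) (by
        intro i
        refine Fin.lastCases ?_ (fun i => ?_) i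
        · simpa using hyl
        · refine Fin.lastCases ?_ (fun i => ?_) i
          · simpa using hvl
          · simpa using hwl i)
      (CSg.and (CSg.lt Primrec.snd ((primrec_proj _).comp Primrec.fst))
        (hR.comp ((Primrec.snd.pair ((primrec_proj _).comp Primrec.fst)).pair
          (primrec_tuple fun i => (primrec_proj i.castSucc.castSucc).comp Primrec.fst))))
      (by
        filter_upwards [hv', Md.mk_ev _ hg] with t ht ht2
        refine ⟨zr P (W.y k) (l + 1 + 1) t, ?_⟩
        rw [ht2] at ht
        refine ⟨?_, ?_⟩
        · simpa using W.zlt k _ t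
        · simpa using ht)
    have hg'C : (W.K hι).C g' := K_trans hι W hTC hg'
    have e : Md.mk _ hg'C = Md.mk _ hg := by
      refine hF3 _ _ v ?_ hgy ?_ hv
      · rw [Md.lt_iff]
        filter_upwards [hg2, Md.mk_ev _ hg'C, Md.mk_ev _ hyC] with t b c e
        rw [c, e]
        simpa using b.1
      · rw [hFR]
        filter_upwards [hg2, Md.mk_ev _ hg'C] with t b c
        rw [c]
        simpa using b.2
    rw [Md.ext'] at e
    refine W.notin hι (k := k) (l := l) (κ := κ) (by omega) (fun i => (hκ3 i).1) ?_
    rw [hκ2]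
    refine hg'.congr ?_
    filter_upwards [e, Md.mk_ev _ hg, Md.mk_ev _ hg'C] with t b c e
    rw [← c, ← b, e]
  · intro hW
    have hid := K_id hι W
    refine hW (Md.mk _ hid) ?_ (inj_lemma (d := d) (x := fun t => t) hid hid _ fun u hu => ?_)
    · rw [Md.lt_iff]
      filter_upwards [Md.mk_ev _ hid, Md.zero_ev (K := W.K hι), ev_ge 1] with t a b c
      rw [a, b]; exact c
    · obtain ⟨l, -, -, h⟩ := X_peel u 0 (by
        filter_upwards [Md.lt_iff.1 hu, Md.add_ev (Md.mk _ hid) (Md.mk _ hid : Md (W.K hι)), Md.mk_ev _ hid] with t a b c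
        rw [b, c] at a
        rw [W.y0]; exact a.le) 0
      exact h

end Tower
end ArithFC


namespace ArithFC

/-- For every `n ≥ 1`, over PA⁻ + IΣn, GPHP(Σ_{n+1}) lies strictly
between CARD(Σ_{n+1}) and WPHP(Σ_{n+1}). -/
theorem statement_16 (n : ℕ) (hn : 1 ≤ n) :
    (∀ (M : Type) (_ : lang.Structure M), PAm M → ISig n M →
      (WPHP M (n + 1) → GPHP M (n + 1)) ∧ (GPHP M (n + 1) → CARD M (n + 1))) ∧
      (∃ (M : Type) (_ : lang.Structure M), PAm M ∧ ISig n M ∧ CARD M (n + 1) ∧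
        ¬GPHP M (n + 1)) ∧
      (∃ (M : Type) (_ : lang.Structure M), PAm M ∧ ISig n M ∧ GPHP M (n + 1) ∧
        ¬WPHP M (n + 1)) := by
  refine ⟨?_, model_one n, model_two n⟩
  intro M _ hP hI
  exact ⟨fun h => wphp_gphp hP h, fun h => gphp_card hP hI h⟩

end ArithFC
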